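/- arXiv:1710.00374 — 3 statements merged into one kernel-verified Lean document; each statement's English description precedes it below -/
import Mathlib

section
/- Let ℓ ≥ 2, let a ≥ 0 and b ≥ 2 be given. Then forb(m, 3, (𝒯_ℓ(3) \ 𝒯_ℓ(2)) ∪ {F_{a,b,b,a}}) is Θ(forbmax(m, F_{a,b,b,a})): there exist constants c₁, c₂ > 0 such that for all m ≥ 1, c₁ · forbmax(m, F_{a,b,b,a}) ≤ forb(m, 3, (𝒯_ℓ(3) \ 𝒯_ℓ(2)) ∪ {F_{a,b,b,a}}) ≤ c₂ · forbmax(m, F_{a,b,b,a}). -/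
/-- A matrix with natural number entries, of size `k × p`. -/
abbrev MatN (k p : ℕ) := Matrix (Fin k) (Fin p) ℕ

/-- A matrix bundled with its dimensions. -/
structure CMat where
  rows : ℕ
  cols : ℕ
  mat : MatN rows cols

/-- A matrix is simple if no two of its columns are equal. -/
def SimpleM {m n : ℕ} (A : MatN m n) : Prop :=
  ∀ j₁ j₂ : Fin n, (∀ i, A i j₁ = A i j₂) → j₁ = j₂

/-- An `r`-matrix: all entries lie in `{0, 1, …, r-1}`. -/
def RMat (r : ℕ) {m n : ℕ} (A : MatN m n) : Prop := ∀ i j, A i j < r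

/-- `F` is a configuration of `A` (written `F ≺ A`): some submatrix of `A` is a row
and column permutation of `F`; equivalently there are injections of the rows and
columns of `F` into those of `A` realizing the entries of `F`. -/
def IsConfig {k p m n : ℕ} (F : MatN k p) (A : MatN m n) : Prop :=
  ∃ f : Fin k → Fin m, ∃ g : Fin p → Fin n,
    Function.Injective f ∧ Function.Injective g ∧ ∀ i j, A (f i) (g j) = F i j

/-- `A` avoids every matrix of the family `𝓕` as a configuration. -/
def AvoidsFam {m n : ℕ} (A : MatN m n) (𝓕 : Set CMat) : Prop :=
  ∀ F ∈ 𝓕, ¬ IsConfig F.mat A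

/-- `forb m r 𝓕`: the maximum number of columns of an `m`-rowed simple `r`-matrix
having no member of `𝓕` as a configuration. -/
noncomputable def forb (m r : ℕ) (𝓕 : Set CMat) : ℕ :=
  sSup { n : ℕ | ∃ A : MatN m n, RMat r A ∧ SimpleM A ∧ AvoidsFam A 𝓕 }

/-- `forbmax m r 𝓕`: the maximum of `forb m' r 𝓕` over `m' ≤ m`. -/
noncomputable def forbmax (m r : ℕ) (𝓕 : Set CMat) : ℕ :=
  sSup { x : ℕ | ∃ m' ≤ m, x = forb m' r 𝓕 }

/-- The number of 1's in column `j` of `A` (the column sum). -/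
def colSum {m n : ℕ} (A : MatN m n) (j : Fin n) : ℕ :=
  (Finset.univ.filter (fun i => A i j = 1)).card

/-- `forbK k m r 𝓕`: as `forb`, but restricted to matrices all of whose columns
have exactly `k` entries equal to 1. -/
noncomputable def forbK (k m r : ℕ) (𝓕 : Set CMat) : ℕ :=
  sSup { n : ℕ | ∃ A : MatN m n, RMat r A ∧ SimpleM A ∧ (∀ j, colSum A j = k) ∧
    AvoidsFam A 𝓕 }

/-- `forbmaxK k m r 𝓕`: the maximum of `forbK k m' r 𝓕` over `m' ≤ m`. -/
noncomputable def forbmaxK (k m r : ℕ) (𝓕 : Set CMat) : ℕ :=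
  sSup { x : ℕ | ∃ m' ≤ m, x = forbK k m' r 𝓕 }

/-- `Imat ℓ a b`: the `ℓ × ℓ` matrix with `a` on the diagonal and `b` off the diagonal. -/
def Imat (ℓ a b : ℕ) : MatN ℓ ℓ := fun i j => if i = j then a else b

/-- `Tmat ℓ a b`: the `ℓ × ℓ` matrix with `a` below the diagonal and `b` on or above it. -/
def Tmat (ℓ a b : ℕ) : MatN ℓ ℓ := fun i j => if (j : ℕ) < (i : ℕ) then a else b

/-- `Tmat3 ℓ a b c`: the `ℓ × ℓ` matrix with `a` below, `b` on, and `c` above the diagonal. -/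
def Tmat3 (ℓ a b c : ℕ) : MatN ℓ ℓ :=
  fun i j => if (j : ℕ) < (i : ℕ) then a else if i = j then b else c

/-- The family `𝒯_ℓ(r)` of all `I_ℓ(a,b)` and `T_ℓ(a,b)` with `a,b ∈ {0,…,r-1}`, `a ≠ b`. -/
def TFam (ℓ r : ℕ) : Set CMat :=
  { M | ∃ a b : ℕ, a < r ∧ b < r ∧ a ≠ b ∧
      (M = ⟨ℓ, ℓ, Imat ℓ a b⟩ ∨ M = ⟨ℓ, ℓ, Tmat ℓ a b⟩) }

/-- `t·F`: the concatenation of `t` copies of `F` side by side. -/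
def tcopies {k p : ℕ} (t : ℕ) (F : MatN k p) : MatN k (t * p) :=
  fun i j => F i ⟨(j : ℕ) % p, Nat.mod_lt _ (by
    rcases Nat.eq_zero_or_pos p with h | h
    · exact absurd j.isLt (by simp [h])
    · exact h)⟩

/-- `0×1×F`: `F` with an extra row of 0's and an extra row of 1's appended. -/
def zeroOneTop {k p : ℕ} (F : MatN k p) : MatN (k + 2) p :=
  fun i j => if h : (i : ℕ) < k then F ⟨i, h⟩ j else if (i : ℕ) = k then 0 else 1

/-- `F_{a,b,c,d}`: the `(a+b+c+d) × 2` matrix with `a` rows `[1 1]`, `b` rows `[1 0]`,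
`c` rows `[0 1]` and `d` rows `[0 0]`. -/
def Fabcd (a b c d : ℕ) : MatN (a + b + c + d) 2 :=
  fun i j =>
    if (i : ℕ) < a then 1
    else if (i : ℕ) < a + b then (if (j : ℕ) = 0 then 1 else 0)
    else if (i : ℕ) < a + b + c then (if (j : ℕ) = 0 then 0 else 1)
    else 0


theorem fc_pigeon (κ : Type) [Fintype κ] [DecidableEq κ] (n : ℕ) : ∃ N : ℕ, ∀ X : Finset ℕ, N ≤ X.card →
    ∀ f : ℕ → κ, ∃ H ⊆ X, n ≤ H.card ∧ ∃ c, ∀ i ∈ H, f i = c := by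
  refine ⟨Fintype.card κ * n + 1, fun X hX f => ?_⟩
  obtain ⟨c, -, hc⟩ := Finset.exists_lt_card_fiber_of_mul_lt_card_of_maps_to
    (s := X) (t := (Finset.univ : Finset κ)) (f := f) (n := n) (fun _ _ => Finset.mem_univ _)
    (by rw [Finset.card_univ]; omega)
  exact ⟨X.filter (fun i => f i = c), Finset.filter_subset _ _, hc.le, c, fun i hi => (Finset.mem_filter.1 hi).2⟩

/-- Abstract induction step for Ramsey's theorem. -/
theorem fc_ramsey_step {Φ κ : Type} [Fintype κ] [DecidableEq κ]
    (hom : Φ → Finset ℕ → κ → Prop)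
    (mono : ∀ φ H H' c, H' ⊆ H → hom φ H c → hom φ H' c)
    (low : ∀ n : ℕ, ∃ N : ℕ, ∀ X : Finset ℕ, N ≤ X.card → ∀ φ : Φ, ∃ H ⊆ X, n ≤ H.card ∧ ∃ c, hom φ H c)
    (n : ℕ) : ∃ N : ℕ, ∀ X : Finset ℕ, N ≤ X.card → ∀ f : ℕ → Φ,
      ∃ H ⊆ X, n ≤ H.card ∧ ∃ c, ∀ v ∈ H, hom (f v) (H.filter (fun w => v < w)) c := by
  classical
  have key : ∀ n : ℕ, ∃ N : ℕ, ∀ X : Finset ℕ, N ≤ X.card → ∀ f : ℕ → Φ,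
      ∃ H ⊆ X, n ≤ H.card ∧ ∃ g : ℕ → κ, ∀ v ∈ H, hom (f v) (H.filter (fun w => v < w)) (g v) := by
    intro n
    induction n with
    | zero =>
      refine ⟨1, fun X hX f => ⟨∅, by simp, by simp, ?_⟩⟩
      obtain ⟨N, hN⟩ := low 0
      by_cases hk : Nonempty κ
      · exact ⟨fun _ => hk.some, by simp⟩
      · exfalso
        obtain ⟨H, -, -, c, -⟩ := hN (Finset.range N) (by simp) (f 0)
        exact hk ⟨c⟩
    | succ n ih =>
      obtain ⟨N1, hN1⟩ := ih
      obtain ⟨N2, hN2⟩ := low N1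
      refine ⟨N2 + 1, fun X hX f => ?_⟩
      have hne : X.Nonempty := Finset.card_pos.1 (by omega)
      set v := X.min' hne with hv
      obtain ⟨H1, hH1, hc1, c, hhom⟩ := hN2 (X.erase v) (by
        rw [Finset.card_erase_of_mem (X.min'_mem hne)]; omega) (f v)
      obtain ⟨H2, hH2, hc2, g, hg⟩ := hN1 H1 hc1 f
      have hlt : ∀ w ∈ H2, v < w := fun w hw =>
        Finset.min'_lt_of_mem_erase_min' X hne (hH1 (hH2 hw))
      have hvn : v ∉ H2 := fun h => lt_irrefl _ (hlt v h)
      refine ⟨insert v H2, ?_, ?_, Function.update g v c, ?_⟩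
      · intro w hw
        rcases Finset.mem_insert.1 hw with rfl | hw
        · exact X.min'_mem hne
        · exact Finset.mem_of_mem_erase (hH1 (hH2 hw))
      · rw [Finset.card_insert_of_notMem hvn]; omega
      · intro w hw
        rcases Finset.mem_insert.1 hw with h | hw
        · rw [h, Function.update_self]
          refine mono _ _ _ _ ?_ hhom
          intro u hu
          rcases Finset.mem_filter.1 hu with ⟨hu1, hu2⟩
          rcases Finset.mem_insert.1 hu1 with h' | h'
          · omega
          · exact hH2 h'
        · have hwv := hlt w hw
          rw [Function.update_of_ne (by omega)]
          refine mono _ _ _ _ ?_ (hg w hw)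
          intro u hu
          rcases Finset.mem_filter.1 hu with ⟨hu1, hu2⟩
          rcases Finset.mem_insert.1 hu1 with h' | h'
          · omega
          · exact Finset.mem_filter.2 ⟨h', hu2⟩
  obtain ⟨N1, hN1⟩ := fc_pigeon κ n
  obtain ⟨N2, hN2⟩ := key N1
  refine ⟨N2, fun X hX f => ?_⟩
  obtain ⟨H, hH, hc, g, hg⟩ := hN2 X hX f
  obtain ⟨H', hH', hc', c, hcc⟩ := hN1 H hc g
  refine ⟨H', hH'.trans hH, hc', c, fun v hv => ?_⟩
  rw [← hcc v hv]
  exact mono _ _ _ _ (Finset.filter_subset_filter _ hH') (hg v (hH' hv))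

theorem fc_enum (n : ℕ) (H : Finset ℕ) (hn : n ≤ H.card) :
    ∃ h : ℕ → ℕ, (∀ i, i < n → h i ∈ H) ∧ ∀ i j, i < j → j < n → h i < h j := by
  let e := H.orderEmbOfCardLe hn
  refine ⟨fun i => if hi : i < n then e ⟨i, hi⟩ else 0, ?_, ?_⟩
  · intro i hi
    simp only [hi, dif_pos]
    exact H.orderEmbOfCardLe_mem hn _
  · intro i j hij hj
    have hi : i < n := hij.trans hj
    simp only [hi, hj, dif_pos]
    exact e.strictMono (by simpa using hij)

theorem fc_ramsey2F (κ : Type) [Fintype κ] [DecidableEq κ] (n : ℕ) :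
    ∃ N : ℕ, ∀ X : Finset ℕ, N ≤ X.card → ∀ f : ℕ → ℕ → κ, ∃ H ⊆ X, n ≤ H.card ∧
      ∃ c, ∀ i ∈ H, ∀ j ∈ H, i < j → f i j = c := by
  obtain ⟨N, hN⟩ := fc_ramsey_step (Φ := ℕ → κ) (κ := κ) (fun φ H c => ∀ i ∈ H, φ i = c)
    (fun φ H H' c h h' i hi => h' i (h hi)) (fc_pigeon κ) n
  refine ⟨N, fun X hX f => ?_⟩
  obtain ⟨H, h1, h2, c, hc⟩ := hN X hX f
  exact ⟨H, h1, h2, c, fun i hi j hj hij => hc i hi j (Finset.mem_filter.2 ⟨hj, hij⟩)⟩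

theorem fc_ramsey2 (κ : Type) [Fintype κ] [DecidableEq κ] (n : ℕ) :
    ∃ N : ℕ, ∀ f : ℕ → ℕ → κ, ∃ h : ℕ → ℕ, (∀ i, i < n → h i < N) ∧
      (∀ i j, i < j → j < n → h i < h j) ∧
      ∃ c, ∀ i j, i < j → j < n → f (h i) (h j) = c := by
  obtain ⟨N, hN⟩ := fc_ramsey2F κ n
  refine ⟨N, fun f => ?_⟩
  obtain ⟨H, h1, h2, c, hc⟩ := hN (Finset.range N) (by simp) f
  obtain ⟨h, ha, hb⟩ := fc_enum n H h2
  exact ⟨h, fun i hi => Finset.mem_range.1 (h1 (ha i hi)), hb, c, fun i j hij hj =>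
    hc _ (ha i (hij.trans hj)) _ (ha j hj) (hb i j hij hj)⟩

theorem fc_ramsey3 (κ : Type) [Fintype κ] [DecidableEq κ] (n : ℕ) :
    ∃ N : ℕ, ∀ f : ℕ → ℕ → ℕ → κ, ∃ h : ℕ → ℕ, (∀ i, i < n → h i < N) ∧
      (∀ i j, i < j → j < n → h i < h j) ∧
      ∃ c, ∀ i j k, i < j → j < k → k < n → f (h i) (h j) (h k) = c := by
  obtain ⟨N, hN⟩ := fc_ramsey_step (Φ := ℕ → ℕ → κ) (κ := κ)
    (fun φ H c => ∀ i ∈ H, ∀ j ∈ H, i < j → φ i j = c)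
    (fun φ H H' c h h' i hi j hj => h' i (h hi) j (h hj)) (fc_ramsey2F κ) n
  refine ⟨N, fun f => ?_⟩
  obtain ⟨H, h1, h2, c, hc⟩ := hN (Finset.range N) (by simp) f
  obtain ⟨h, ha, hb⟩ := fc_enum n H h2
  refine ⟨h, fun i hi => Finset.mem_range.1 (h1 (ha i hi)), hb, c, fun i j k hij hjk hk => ?_⟩
  have hj := hjk.trans hk
  have hi := hij.trans hj
  exact hc _ (ha i hi) _ (Finset.mem_filter.2 ⟨ha j hj, hb i j hij hj⟩) _
    (Finset.mem_filter.2 ⟨ha k hk, hb i k (hij.trans hjk) hk⟩) (hb j k hjk hk)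


/-- number of rows where the first column has symbol `u` and the second has symbol `v` -/
def fcCnt {m : ℕ} (x y : Fin m → Fin 3) (u v : Fin 3) : ℕ :=
  (Finset.univ.filter (fun r => x r = u ∧ y r = v)).card

structure FcGood (ℓ a b : ℕ) {m : ℕ} (C : Finset (Fin m → Fin 3)) : Prop where
  hF : ∀ x ∈ C, ∀ y ∈ C, a ≤ fcCnt x y 1 1 → b ≤ fcCnt x y 1 0 → b ≤ fcCnt x y 0 1 →
    a ≤ fcCnt x y 0 0 → False
  hI : ∀ u v : Fin 3, u ≠ v → (u = 2 ∨ v = 2) → ∀ (ρ : ℕ → Fin m) (c : ℕ → Fin m → Fin 3),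
    (∀ j, j < ℓ → c j ∈ C) → (∀ i j, i < ℓ → j < ℓ → c j (ρ i) = if i = j then u else v) → False
  hT : ∀ u v : Fin 3, u ≠ v → (u = 2 ∨ v = 2) → ∀ (ρ : ℕ → Fin m) (c : ℕ → Fin m → Fin 3),
    (∀ j, j < ℓ → c j ∈ C) → (∀ i j, i < ℓ → j < ℓ → c j (ρ i) = if j < i then u else v) → False

/-- exchange of the symbols 0 and 1 -/
def fcSw (u : Fin 3) : Fin 3 := if u = 0 then 1 else if u = 1 then 0 else 2

theorem fcSw_sw (u : Fin 3) : fcSw (fcSw u) = u := by revert u; decide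

theorem fcSw_eq (u v : Fin 3) : fcSw u = v ↔ u = fcSw v := by revert u v; decide

theorem fcCnt_sw {m : ℕ} (x y : Fin m → Fin 3) (u v : Fin 3) :
    fcCnt (fun r => fcSw (x r)) (fun r => fcSw (y r)) u v = fcCnt x y (fcSw u) (fcSw v) := by
  unfold fcCnt
  congr 1
  ext r
  simp [fcSw_eq]

theorem fcCnt_comm {m : ℕ} (x y : Fin m → Fin 3) (u v : Fin 3) : fcCnt x y u v = fcCnt y x v u := by
  unfold fcCnt
  congr 1
  ext r
  simp [and_comm]

def fcSwF {m : ℕ} (C : Finset (Fin m → Fin 3)) : Finset (Fin m → Fin 3) :=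
  C.image (fun x r => fcSw (x r))

theorem fcSw_inj {m : ℕ} : Function.Injective (fun (x : Fin m → Fin 3) r => fcSw (x r)) := by
  intro x y h
  funext r
  have := congrFun h r
  simpa [fcSw_eq, fcSw_sw] using this

theorem mem_fcSwF {m : ℕ} (C : Finset (Fin m → Fin 3)) (x : Fin m → Fin 3) :
    x ∈ fcSwF C ↔ (fun r => fcSw (x r)) ∈ C := by
  unfold fcSwF
  rw [Finset.mem_image]
  constructor
  · rintro ⟨y, hy, rfl⟩
    simpa [fcSw_sw] using hy
  · intro h
    exact ⟨_, h, by funext r; simp [fcSw_sw]⟩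

theorem FcGood.swap {ℓ a b m : ℕ} {C : Finset (Fin m → Fin 3)} (h : FcGood ℓ a b C) :
    FcGood ℓ a b (fcSwF C) := by
  have s0 : fcSw 0 = 1 := rfl
  have s1 : fcSw 1 = 0 := rfl
  have s2 : fcSw 2 = 2 := rfl
  refine ⟨?_, ?_, ?_⟩
  · intro x hx y hy h1 h2 h3 h4
    rw [mem_fcSwF] at hx hy
    refine h.hF _ hx _ hy ?_ ?_ ?_ ?_ <;> rw [fcCnt_sw] <;> simpa only [s0, s1]
  · intro u v huv h2 ρ c hc hp
    refine h.hI (fcSw u) (fcSw v) ?_ ?_ ρ (fun j r => fcSw (c j r)) ?_ ?_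
    · intro hh; apply huv; rw [← fcSw_sw u, hh, fcSw_sw]
    · rcases h2 with rfl | rfl <;> simp [s2]
    · intro j hj; exact (mem_fcSwF _ _).1 (hc j hj)
    · intro i j hi hj
      simp only [hp i j hi hj]
      split_ifs <;> rfl
  · intro u v huv h2 ρ c hc hp
    refine h.hT (fcSw u) (fcSw v) ?_ ?_ ρ (fun j r => fcSw (c j r)) ?_ ?_
    · intro hh; apply huv; rw [← fcSw_sw u, hh, fcSw_sw]
    · rcases h2 with rfl | rfl <;> simp [s2]
    · intro j hj; exact (mem_fcSwF _ _).1 (hc j hj)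
    · intro i j hi hj
      simp only [hp i j hi hj]
      split_ifs <;> rfl

theorem FcGood.mono {ℓ a b m : ℕ} {C D : Finset (Fin m → Fin 3)} (h : FcGood ℓ a b C) (hD : D ⊆ C) :
    FcGood ℓ a b D :=
  ⟨fun x hx y hy => h.hF x (hD hx) y (hD hy),
   fun u v h1 h2 ρ c hc => h.hI u v h1 h2 ρ c (fun j hj => hD (hc j hj)),
   fun u v h1 h2 ρ c hc => h.hT u v h1 h2 ρ c (fun j hj => hD (hc j hj))⟩

/-- lower bound for the count from an injective sequence of rows -/
theorem fcCnt_ge {m : ℕ} (x y : Fin m → Fin 3) (u v : Fin 3) (N s : ℕ) (ρ : ℕ → Fin m)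
    (hinj : ∀ i j, i < j → s ≤ i → j < s + N → ρ i ≠ ρ j)
    (h : ∀ i, s ≤ i → i < s + N → x (ρ i) = u ∧ y (ρ i) = v) : N ≤ fcCnt x y u v := by
  unfold fcCnt
  have : (Finset.Ico s (s + N)).card ≤
      (Finset.univ.filter (fun r => x r = u ∧ y r = v)).card := by
    apply Finset.card_le_card_of_injOn ρ
    · intro i hi
      have := Finset.mem_Ico.1 hi
      simpa using h i this.1 this.2
    · intro i hi j hj hij
      have hi' := Finset.mem_Ico.1 (Finset.mem_coe.1 hi)
      have hj' := Finset.mem_Ico.1 (Finset.mem_coe.1 hj)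
      rcases lt_trichotomy i j with hlt | he | hlt
      · exact absurd hij (hinj i j hlt hi'.1 hj'.2)
      · exact he
      · exact absurd hij.symm (hinj j i hlt hj'.1 hi'.2)
  simpa using this

def FcTower {m : ℕ} (N k : ℕ) (y : ℕ → Fin m → Fin 3) : Prop :=
  ∀ i j, i < j → j < k → N ≤ fcCnt (y i) (y j) 1 0 ∧ N ≤ fcCnt (y i) (y j) 0 0 ∧
    N ≤ fcCnt (y i) (y j) 1 1

/-- homogeneous version of the key lemma -/
theorem fc_hom {ℓ a b m : ℕ} {C : Finset (Fin m → Fin 3)} (hC : FcGood ℓ a b C) (N k K : ℕ)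
    (hNa : a ≤ N) (hNb : b ≤ N) (hK1 : (N + 1) * (k + 3) ≤ K) (hK2 : 2 * ℓ + 4 ≤ K)
    (x : ℕ → Fin m → Fin 3) (hx : ∀ i, i < K → x i ∈ C) (γ : ℕ → ℕ → Fin m)
    (hγ : ∀ i j, i < j → j < K → x i (γ i j) = 1 ∧ x j (γ i j) = 2)
    (e1 e3 e5 : Fin 3)
    (he : ∀ p q r, p < q → q < r → r < K →
      x p (γ q r) = e1 ∧ x q (γ p r) = e3 ∧ x r (γ p q) = e5) :
    FcTower N k (fun i => x ((N + 1) * (i + 1))) := by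
  have hne : e3 ≠ e5 → e3 ≠ 2 ∧ e5 ≠ 2 := by
    intro h
    by_contra hcon
    have h2 : e3 = 2 ∨ e5 = 2 := by tauto
    refine hC.hT e3 e5 h h2 (fun i => γ 0 (2 * i + 1)) (fun j => x (2 * j + 2)) ?_ ?_
    · intro j hj; exact hx _ (by omega)
    · intro i j hi hj
      split_ifs with hij
      · exact (he 0 (2 * j + 2) (2 * i + 1) (by omega) (by omega) (by omega)).2.1
      · exact (he 0 (2 * i + 1) (2 * j + 2) (by omega) (by omega) (by omega)).2.2
  have hne2 : e3 ≠ e5 := by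
    intro h
    by_cases h2 : e3 = 2
    · by_cases h1 : e1 = 2
      · refine hC.hI 1 2 (by decide) (Or.inr rfl) (fun i => γ i (K - 1)) (fun j => x j) ?_ ?_
        · intro j hj; exact hx _ (by omega)
        · intro i j hi hj
          split_ifs with hij
          · subst hij; exact (hγ i (K - 1) (by omega) (by omega)).1
          · rcases Nat.lt_or_gt_of_ne hij with hlt | hlt
            · rw [(he i j (K - 1) hlt (by omega) (by omega)).2.1, h2]
            · rw [(he j i (K - 1) hlt (by omega) (by omega)).1, h1]
      · refine hC.hT e1 2 h1 (Or.inr rfl) (fun i => γ (2 * i + 1) (K - 1)) (fun j => x (2 * j + 2)) ?_ ?_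
        · intro j hj; exact hx _ (by omega)
        · intro i j hi hj
          split_ifs with hij
          · exact (he (2 * j + 2) (2 * i + 1) (K - 1) (by omega) (by omega) (by omega)).1
          · rw [(he (2 * i + 1) (2 * j + 2) (K - 1) (by omega) (by omega) (by omega)).2.1, h2]
    · refine hC.hI 2 e3 (Ne.symm h2) (Or.inl rfl) (fun i => γ 0 (i + 1)) (fun j => x (j + 1)) ?_ ?_
      · intro j hj; exact hx _ (by omega)
      · intro i j hi hj
        split_ifs with hij
        · subst hij; exact (hγ 0 (i + 1) (by omega) (by omega)).2
        · rcases Nat.lt_or_gt_of_ne hij with hlt | hlt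
          · rw [(he 0 (i + 1) (j + 1) (by omega) (by omega) (by omega)).2.2, h]
          · exact (he 0 (j + 1) (i + 1) (by omega) (by omega) (by omega)).2.1
  obtain ⟨h32, h52⟩ := hne hne2
  -- injectivity of rows
  have hinj : ∀ p i j, p < i → i < j → j < K → γ p i ≠ γ p j := by
    intro p i j hp hij hj heq
    have h1 := (hγ p i hp (by omega)).2
    rw [heq, (he p i j hp hij hj).2.1] at h1
    exact h32 h1
  have hcases : (e3 = 1 ∧ e5 = 0) ∨ (e3 = 0 ∧ e5 = 1) := by
    revert hne2 h32 h52; clear he hne; revert e3 e5; decide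
  rcases hcases with ⟨rfl, rfl⟩ | ⟨rfl, rfl⟩
  · intro i j hij hj
    have hb1 : (N + 1) * (i + 1) + (N + 1) ≤ (N + 1) * (j + 1) := by nlinarith
    have hb2 : (N + 1) * (j + 1) + (N + 1) < K := by nlinarith
    have hb3 : (N + 1) ≤ (N + 1) * (i + 1) := by nlinarith
    show N ≤ fcCnt (x ((N + 1) * (i + 1))) (x ((N + 1) * (j + 1))) 1 0 ∧
      N ≤ fcCnt (x ((N + 1) * (i + 1))) (x ((N + 1) * (j + 1))) 0 0 ∧
      N ≤ fcCnt (x ((N + 1) * (i + 1))) (x ((N + 1) * (j + 1))) 1 1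
    generalize (N + 1) * (i + 1) = h at *
    generalize (N + 1) * (j + 1) = h' at *
    refine ⟨?_, ?_, ?_⟩
    · refine fcCnt_ge _ _ _ _ N (h + 1) (γ 0) (fun s t h1 h2 h3 => hinj 0 s t (by omega) h1 (by omega)) ?_
      intro t h1 h2
      exact ⟨(he 0 h t (by omega) (by omega) (by omega)).2.1, (he 0 t h' (by omega) (by omega) (by omega)).2.2⟩
    · refine fcCnt_ge _ _ _ _ N 1 (γ 0) (fun s t h1 h2 h3 => hinj 0 s t (by omega) h1 (by omega)) ?_
      intro t h1 h2
      exact ⟨(he 0 t h (by omega) (by omega) (by omega)).2.2, (he 0 t h' (by omega) (by omega) (by omega)).2.2⟩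
    · refine fcCnt_ge _ _ _ _ N (h' + 1) (γ 0) (fun s t h1 h2 h3 => hinj 0 s t (by omega) h1 (by omega)) ?_
      intro t h1 h2
      exact ⟨(he 0 h t (by omega) (by omega) (by omega)).2.1, (he 0 h' t (by omega) (by omega) (by omega)).2.1⟩
  · exfalso
    have hb2 : 3 * (N + 1) ≤ K := by nlinarith
    obtain ⟨h, hh⟩ : ∃ h, h = N + 1 := ⟨_, rfl⟩
    obtain ⟨h', hh'⟩ : ∃ h', h' = 2 * N + 2 := ⟨_, rfl⟩
    refine hC.hF (x h) (hx _ (by omega)) (x h') (hx _ (by omega)) (hNa.trans ?_) (hNb.trans ?_)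
      (hNb.trans ?_) (hNa.trans ?_)
    · refine fcCnt_ge _ _ _ _ N 1 (γ 0) (fun s t h1 h2 h3 => hinj 0 s t (by omega) h1 (by omega)) ?_
      intro t h1 h2
      exact ⟨(he 0 t h (by omega) (by omega) (by omega)).2.2, (he 0 t h' (by omega) (by omega) (by omega)).2.2⟩
    · refine fcCnt_ge _ _ _ _ N (h' + 1) (γ h) (fun s t h1 h2 h3 => hinj h s t (by omega) h1 (by omega)) ?_
      intro t h1 h2
      exact ⟨(hγ h t (by omega) (by omega)).1, (he h h' t (by omega) (by omega) (by omega)).2.1⟩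
    · refine fcCnt_ge _ _ _ _ N (h + 1) (γ 0) (fun s t h1 h2 h3 => hinj 0 s t (by omega) h1 (by omega)) ?_
      intro t h1 h2
      exact ⟨(he 0 h t (by omega) (by omega) (by omega)).2.1, (he 0 t h' (by omega) (by omega) (by omega)).2.2⟩
    · refine fcCnt_ge _ _ _ _ N (h' + 1) (γ 0) (fun s t h1 h2 h3 => hinj 0 s t (by omega) h1 (by omega)) ?_
      intro t h1 h2
      exact ⟨(he 0 h t (by omega) (by omega) (by omega)).2.1, (he 0 h' t (by omega) (by omega) (by omega)).2.1⟩

/-- Key lemma: pairs of type (1,2) lead to a tower. -/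
theorem fc_lemA (ℓ a b N k : ℕ) (hNa : a ≤ N) (hNb : b ≤ N) : ∃ K : ℕ, ∀ (m : ℕ)
    (C : Finset (Fin m → Fin 3)), FcGood ℓ a b C → ∀ x : ℕ → Fin m → Fin 3,
    (∀ i, i < K → x i ∈ C) → (∀ i j, i < j → j < K → ∃ r, x i r = 1 ∧ x j r = 2) →
    ∃ h : ℕ → ℕ, (∀ i, i < k → h i < K) ∧ (∀ i j, i < j → j < k → h i < h j) ∧ FcTower N k (fun i => x (h i)) := by
  obtain ⟨K, hK⟩ := fc_ramsey3 (Fin 3 × Fin 3 × Fin 3) ((N + 1) * (k + 3) + (2 * ℓ + 4))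
  refine ⟨max K 2, fun m C hC x hx hr => ?_⟩
  have hm : Nonempty (Fin m) := by
    obtain ⟨r, -⟩ := hr 0 1 (by omega) (by omega)
    exact ⟨r⟩
  have hr' : ∀ i j, ∃ r, i < j → j < max K 2 → x i r = 1 ∧ x j r = 2 := by
    intro i j
    by_cases h : i < j ∧ j < max K 2
    · obtain ⟨r, hr⟩ := hr i j h.1 h.2
      exact ⟨r, fun _ _ => hr⟩
    · exact ⟨hm.some, fun h1 h2 => absurd ⟨h1, h2⟩ h⟩
  choose γ hγ using hr'
  obtain ⟨h, h1, h2, c, hc⟩ := hK (fun p q r => (x p (γ q r), x q (γ p r), x r (γ p q)))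
  have := fc_hom hC N k _ hNa hNb (Nat.le_add_right _ _) (Nat.le_add_left _ _) (fun i => x (h i))
    (fun i hi => hx _ (lt_of_lt_of_le (h1 i hi) (le_max_left _ _))) (fun i j => γ (h i) (h j))
    (fun i j hij hj => hγ _ _ (h2 i j hij hj) (lt_of_lt_of_le (h1 j hj) (le_max_left _ _)))
    c.1 c.2.1 c.2.2 (fun p q r hpq hqr hr => by
      have := hc p q r hpq hqr hr
      rw [← this]; exact ⟨rfl, rfl, rfl⟩)
  refine ⟨fun i => h ((N + 1) * (i + 1)), fun i hi => ?_, fun i j hij hj => h2 _ _ ?_ ?_, this⟩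
  · refine lt_of_lt_of_le (h1 _ ?_) (le_max_left _ _)
    nlinarith
  · nlinarith
  · nlinarith

/-- Columns with distinct 2-supports contain a tower. -/
theorem fc_lemB (ℓ a b N k : ℕ) (hNa : a ≤ N) (hNb : b ≤ N) : ∃ K : ℕ, ∀ (m : ℕ)
    (C : Finset (Fin m → Fin 3)), FcGood ℓ a b C → ∀ x : ℕ → Fin m → Fin 3,
    (∀ i, i < K → x i ∈ C) → (∀ i j, i < j → j < K → ∃ r, ¬ (x i r = 2 ↔ x j r = 2)) →
    ∃ h : ℕ → ℕ, (∀ i, i < k → h i < K) ∧ FcTower N k (fun i => x (h i)) := by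
  obtain ⟨K1, hK1⟩ := fc_lemA ℓ a b N k hNa hNb
  obtain ⟨K, hK⟩ := fc_ramsey2 (Fin 4) K1
  refine ⟨K, fun m C hC x hx hr => ?_⟩
  have htype : ∀ i j, ∃ t : Fin 4, i < j → j < K → ∃ r,
      (t = 0 ∧ x i r = 1 ∧ x j r = 2) ∨ (t = 1 ∧ x i r = 2 ∧ x j r = 1) ∨
      (t = 2 ∧ x i r = 0 ∧ x j r = 2) ∨ (t = 3 ∧ x i r = 2 ∧ x j r = 0) := by
    intro i j
    by_cases h : i < j ∧ j < K
    · obtain ⟨r, hr⟩ := hr i j h.1 h.2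
      have : ∀ u v : Fin 3, ¬ (u = 2 ↔ v = 2) → ∃ t : Fin 4, (t = 0 ∧ u = 1 ∧ v = 2) ∨ (t = 1 ∧ u = 2 ∧ v = 1) ∨
        (t = 2 ∧ u = 0 ∧ v = 2) ∨ (t = 3 ∧ u = 2 ∧ v = 0) := by decide
      obtain ⟨t, ht⟩ := this _ _ hr
      exact ⟨t, fun _ _ => ⟨r, ht⟩⟩
    · exact ⟨0, fun h1 h2 => absurd ⟨h1, h2⟩ h⟩
  choose t ht using htype
  obtain ⟨h, h1, h2, c, hc⟩ := hK t
  have hty : ∀ i j, i < j → j < K1 → ∃ r,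
      (c = 0 ∧ x (h i) r = 1 ∧ x (h j) r = 2) ∨ (c = 1 ∧ x (h i) r = 2 ∧ x (h j) r = 1) ∨
      (c = 2 ∧ x (h i) r = 0 ∧ x (h j) r = 2) ∨ (c = 3 ∧ x (h i) r = 2 ∧ x (h j) r = 0) := by
    intro i j hij hj
    have := ht (h i) (h j) (h2 i j hij hj) (h1 j hj)
    rwa [hc i j hij hj] at this
  have s0 : fcSw 0 = 1 := rfl
  have s1 : fcSw 1 = 0 := rfl
  have s2 : fcSw 2 = 2 := rfl
  have hsw : ∀ i, i < K1 → (fun r => fcSw (x (h i) r)) ∈ fcSwF C := by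
    intro i hi
    rw [mem_fcSwF]
    simpa [fcSw_sw] using hx _ (h1 i hi)
  fin_cases c
  · obtain ⟨g, hg1, hgm, hg2⟩ := hK1 m C hC (fun i => x (h i)) (fun i hi => hx _ (h1 i hi)) (by
      intro i j hij hj
      obtain ⟨r, hr⟩ := hty i j hij hj
      exact ⟨r, by simpa using hr⟩)
    exact ⟨fun i => h (g i), fun i hi => h1 _ (hg1 i hi), hg2⟩
  · obtain ⟨g, hg1, hgm, hg2⟩ := hK1 m C hC (fun i => x (h (K1 - 1 - i))) (fun i hi => hx _ (h1 _ (by omega))) (by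
      intro i j hij hj
      obtain ⟨r, hr⟩ := hty (K1 - 1 - j) (K1 - 1 - i) (by omega) (by omega)
      exact ⟨r, by simpa [and_comm] using hr⟩)
    exact ⟨fun i => h (K1 - 1 - g i), fun i hi => h1 _ (by have := hg1 i hi; omega), hg2⟩
  · obtain ⟨g, hg1, hgm, hg2⟩ := hK1 m _ hC.swap (fun i r => fcSw (x (h i) r)) hsw (by
      intro i j hij hj
      obtain ⟨r, hr⟩ := hty i j hij hj
      exact ⟨r, by simpa [fcSw_eq, s1, s2] using hr⟩)
    refine ⟨fun i => h (g (k - 1 - i)), fun i hi => h1 _ (hg1 _ (by omega)), ?_⟩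
    intro i j hij hj
    have := hg2 (k - 1 - j) (k - 1 - i) (by omega) (by omega)
    simp only [fcCnt_sw, s0, s1] at this
    rw [fcCnt_comm _ _ 1 0, fcCnt_comm _ _ 0 0, fcCnt_comm _ _ 1 1]
    exact ⟨this.1, this.2.2, this.2.1⟩
  · obtain ⟨g, hg1, hgm, hg2⟩ := hK1 m _ hC.swap (fun i r => fcSw (x (h (K1 - 1 - i)) r)) (fun i hi => hsw _ (by omega)) (by
      intro i j hij hj
      obtain ⟨r, hr⟩ := hty (K1 - 1 - j) (K1 - 1 - i) (by omega) (by omega)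
      exact ⟨r, by simpa [fcSw_eq, s1, s2, and_comm] using hr⟩)
    refine ⟨fun i => h (K1 - 1 - g (k - 1 - i)), fun i hi => h1 _ (by
      have := hg1 (k - 1 - i) (by omega); omega), ?_⟩
    intro i j hij hj
    have := hg2 (k - 1 - j) (k - 1 - i) (by omega) (by omega)
    simp only [fcCnt_sw, s0, s1] at this
    rw [fcCnt_comm _ _ 1 0, fcCnt_comm _ _ 0 0, fcCnt_comm _ _ 1 1]
    exact ⟨this.1, this.2.2, this.2.1⟩

/-- number of entries equal to `u` -/
def fcNum {m : ℕ} (x : Fin m → Fin 3) (u : Fin 3) : ℕ := (Finset.univ.filter (fun r => x r = u)).card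

theorem fcNum_eq {m : ℕ} (x y : Fin m → Fin 3) (u : Fin 3) :
    fcNum x u = fcCnt x y u 0 + fcCnt x y u 1 + fcCnt x y u 2 := by
  unfold fcNum fcCnt
  rw [← Finset.card_union_of_disjoint, ← Finset.card_union_of_disjoint]
  · congr 1
    ext r
    have : ∀ v : Fin 3, v = 0 ∨ v = 1 ∨ v = 2 := by decide
    have := this (y r)
    simp only [Finset.mem_filter, Finset.mem_univ, true_and, Finset.mem_union]
    tauto
  · rw [Finset.disjoint_left]
    intro r hr
    simp only [Finset.mem_filter, Finset.mem_univ, true_and, Finset.mem_union] at hr ⊢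
    rintro ⟨-, h⟩
    rcases hr with ⟨-, h'⟩ | ⟨-, h'⟩ <;> rw [h] at h' <;> revert h' <;> decide
  · rw [Finset.disjoint_left]
    intro r hr
    simp only [Finset.mem_filter, Finset.mem_univ, true_and] at hr ⊢
    rintro ⟨-, h⟩
    rcases hr with ⟨-, h'⟩
    rw [h] at h'; revert h'; decide

/-- Columns with a fixed number of 1's have boundedly many 2-supports. -/
theorem fc_levelSeq (ℓ a b : ℕ) : ∃ K : ℕ, ∀ (m : ℕ)
    (C : Finset (Fin m → Fin 3)), FcGood ℓ a b C → ∀ (k : ℕ) (x : ℕ → Fin m → Fin 3),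
    (∀ i, i < K → x i ∈ C) → (∀ i, i < K → fcNum (x i) 1 = k) →
    (∀ i j, i < j → j < K → ∃ r, ¬ (x i r = 2 ↔ x j r = 2)) → False := by
  obtain ⟨K1, hK1⟩ := fc_lemA ℓ a b (a + b) 2 (by omega) (by omega)
  obtain ⟨K, hK⟩ := fc_lemB ℓ a b (a + b) K1 (by omega) (by omega)
  refine ⟨K, fun m C hC k x hx hk hr => ?_⟩
  obtain ⟨h, h1, h2⟩ := hK m C hC x hx hr
  have h01 : ∀ i j, i < j → j < K1 → fcCnt (x (h i)) (x (h j)) 0 1 < b := by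
    intro i j hij hj
    by_contra hcon
    push Not at hcon
    have := h2 i j hij hj
    dsimp only at this
    exact hC.hF _ (hx _ (h1 i (by omega))) _ (hx _ (h1 j hj)) (by omega) (by omega) hcon (by omega)
  obtain ⟨g, hg1, hgm, hg2⟩ := hK1 m C hC (fun i => x (h (K1 - 1 - i))) (fun i hi => hx _ (h1 _ (by omega))) (by
    intro i j hij hj
    have hlt : K1 - 1 - j < K1 - 1 - i := by omega
    have hlt' : K1 - 1 - i < K1 := by omega
    generalize K1 - 1 - j = p at *
    generalize K1 - 1 - i = q at *
    have e1 := fcNum_eq (x (h p)) (x (h q)) 1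
    have e2 := fcNum_eq (x (h q)) (x (h p)) 1
    rw [hk _ (h1 p (by omega))] at e1
    rw [hk _ (h1 q hlt')] at e2
    rw [fcCnt_comm _ _ 1 0, fcCnt_comm _ _ 1 1, fcCnt_comm _ _ 1 2] at e2
    have e3 := h01 p q hlt hlt'
    have e4 := (h2 p q hlt hlt').1
    have : 0 < fcCnt (x (h p)) (x (h q)) 2 1 := by
      dsimp only at e4; omega
    unfold fcCnt at this
    obtain ⟨r, hr⟩ := Finset.card_pos.1 this
    simp only [Finset.mem_filter, Finset.mem_univ, true_and] at hr
    exact ⟨r, hr.2, hr.1⟩)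
  have hg0 := hg1 0 (by omega)
  have hg1' := hg1 1 (by omega)
  have hT := hg2 0 1 (by omega) (by omega)
  dsimp only at hT
  have hlt := hgm 0 1 (by omega) (by omega)
  have := h01 (K1 - 1 - g 1) (K1 - 1 - g 0) (by omega) (by omega)
  rw [fcCnt_comm] at this
  omega


theorem fc_smallsets {α : Type*} [DecidableEq α] (U : Finset α) (t : ℕ) :
    (U.powerset.filter (fun S => S.card ≤ t)).card ≤ (U.card + 1) ^ t := by
  induction t with
  | zero =>
    have : U.powerset.filter (fun S => S.card ≤ 0) ⊆ {∅} := by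
      intro S hS
      have := (Finset.mem_filter.1 hS).2
      simpa using this
    simpa using Finset.card_le_card this
  | succ t ih =>
    have hsub : U.powerset.filter (fun S => S.card ≤ t + 1) ⊆
        ((U.powerset.filter (fun S => S.card ≤ t)) ×ˢ (Finset.insertNone U)).image
          (fun p => p.2.elim p.1 (fun u => insert u p.1)) := by
      intro S hS
      obtain ⟨h1, h2⟩ := Finset.mem_filter.1 hS
      rw [Finset.mem_powerset] at h1
      rw [Finset.mem_image]
      by_cases h : S.card ≤ t
      · exact ⟨(S, none), by simp [h, h1], rfl⟩
      · have hne : S.Nonempty := by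
          rw [← Finset.card_pos]; omega
        obtain ⟨u, hu⟩ := hne
        refine ⟨(S.erase u, some u), ?_, ?_⟩
        · have := Finset.card_erase_of_mem hu
          simp only [Finset.mem_product, Finset.mem_filter, Finset.mem_powerset, Finset.some_mem_insertNone]
          exact ⟨⟨(Finset.erase_subset _ _).trans h1, by omega⟩, h1 hu⟩
        · simp [Finset.insert_erase hu]
    calc _ ≤ _ := Finset.card_le_card hsub
      _ ≤ _ := Finset.card_image_le
      _ = (U.powerset.filter (fun S => S.card ≤ t)).card * (U.card + 1) := by
        rw [Finset.card_product, Finset.card_insertNone]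
      _ ≤ _ := by rw [pow_succ]; exact Nat.mul_le_mul_right _ ih

theorem fc_card_sd {α : Type*} [DecidableEq α] (A B : Finset α) (h : A.card = B.card) :
    (symmDiff A B).card = 2 * (A \ B).card ∧ (B \ A).card = (A \ B).card := by
  have h1 := Finset.card_sdiff_add_card_inter A B
  have h2 := Finset.card_sdiff_add_card_inter B A
  rw [Finset.inter_comm] at h2
  have h3 : (symmDiff A B).card = (A \ B).card + (B \ A).card := by
    rw [symmDiff_def, Finset.sup_eq_union, Finset.card_union_of_disjoint disjoint_sdiff_sdiff]
  omega

/-- L1 -/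
theorem fc_L1 {α : Type*} [DecidableEq α] (b k : ℕ) (hb : 1 ≤ b) (U : Finset α)
    (𝓐 : Finset (Finset α)) (hk : ∀ A ∈ 𝓐, A.card = k) (hU : ∀ A ∈ 𝓐, A ⊆ U)
    (hP : ∀ A ∈ 𝓐, ∀ B ∈ 𝓐, (A \ B).card < b) :
    𝓐.card ≤ (b * 2 ^ (2 * b)) * (U.card + 1) ^ (b - 1) := by
  rcases 𝓐.eq_empty_or_nonempty with rfl | ⟨A1, hA1⟩
  · simp
  have hfib : ∀ p ∈ Finset.range b, (𝓐.filter (fun A => (A \ A1).card = p)).card ≤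
      2 ^ (2 * b) * (U.card + 1) ^ (b - 1) := by
    intro p hp
    rw [Finset.mem_range] at hp
    rcases (𝓐.filter (fun A => (A \ A1).card = p)).eq_empty_or_nonempty with he | ⟨A2, hA2⟩
    · rw [he]; simp
    obtain ⟨hA2, hA2p⟩ := Finset.mem_filter.1 hA2
    have hY2 := (fc_card_sd A2 A1 (by rw [hk _ hA2, hk _ hA1])).1
    have : (𝓐.filter (fun A => (A \ A1).card = p)).card ≤
        ((symmDiff A2 A1).powerset ×ˢ U.powerset.filter (fun S => S.card ≤ b - 1)).card := by
      apply Finset.card_le_card_of_injOn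
        (fun A => (symmDiff A A1 ∩ symmDiff A2 A1, symmDiff A A1 \ symmDiff A2 A1))
      · intro A hA
        obtain ⟨hA, hAp⟩ := Finset.mem_filter.1 (Finset.mem_coe.1 hA)
        have hY := (fc_card_sd A A1 (by rw [hk _ hA, hk _ hA1])).1
        have hYY := (fc_card_sd (symmDiff A A1) (symmDiff A2 A1) (by omega)).1
        have hd := (fc_card_sd A A2 (by rw [hk _ hA, hk _ hA2])).1
        have hlt := hP A hA A2 hA2
        have : symmDiff (symmDiff A A1) (symmDiff A2 A1) = symmDiff A A2 := by
          rw [symmDiff_comm A2 A1, symmDiff_assoc, symmDiff_symmDiff_cancel_left]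
        rw [this] at hYY
        simp only [Finset.coe_product, Set.mem_prod, Finset.mem_coe, Finset.mem_powerset, Finset.mem_filter]
        refine ⟨Finset.inter_subset_right, ?_, by omega⟩
        refine Finset.sdiff_subset.trans ?_
        rw [symmDiff_def, Finset.sup_eq_union]
        exact Finset.union_subset (Finset.sdiff_subset.trans (hU _ hA)) (Finset.sdiff_subset.trans (hU _ hA1))
      · intro A hA B hB hAB
        simp only [Prod.mk.injEq] at hAB
        have : symmDiff A A1 = symmDiff B A1 := by
          rw [← Finset.sdiff_union_inter (symmDiff A A1) (symmDiff A2 A1), hAB.1, hAB.2,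
            Finset.sdiff_union_inter]
        exact symmDiff_left_injective A1 this
    refine this.trans ?_
    rw [Finset.card_product, Finset.card_powerset]
    exact Nat.mul_le_mul (Nat.pow_le_pow_right (by omega) (by omega)) (fc_smallsets U (b - 1))
  have := Finset.card_eq_sum_card_fiberwise (s := 𝓐) (t := Finset.range b)
    (f := fun A => (A \ A1).card) (by
      intro A hA
      simpa using hP A hA A1 hA1)
  rw [this]
  refine (Finset.sum_le_sum hfib).trans ?_
  simp [mul_assoc]

/-- L2a -/
theorem fc_L2a {m : ℕ} (a b k : ℕ) (hb : 1 ≤ b)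
    (𝓐 : Finset (Finset (Fin m))) (hk : ∀ A ∈ 𝓐, A.card = k)
    (hP : ∀ A ∈ 𝓐, ∀ B ∈ 𝓐, a ≤ (A ∩ B).card → (A \ B).card < b) :
    𝓐.card * k.choose a ≤ m ^ a * ((b * 2 ^ (2 * b)) * (m + 1) ^ (b - 1)) := by
  have h1 : ∑ A ∈ 𝓐, ((Finset.powersetCard a (Finset.univ : Finset (Fin m))).filter (fun T => T ⊆ A)).card
      = ∑ T ∈ Finset.powersetCard a (Finset.univ : Finset (Fin m)), (𝓐.filter (fun A => T ⊆ A)).card := by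
    simp only [Finset.card_filter]
    exact Finset.sum_comm
  have h2 : ∀ A ∈ 𝓐, ((Finset.powersetCard a (Finset.univ : Finset (Fin m))).filter (fun T => T ⊆ A)).card
      = k.choose a := by
    intro A hA
    rw [← hk A hA, ← Finset.card_powersetCard]
    congr 1
    ext T
    simp [Finset.mem_powersetCard, and_comm]
  have h3 : ∀ T ∈ Finset.powersetCard a (Finset.univ : Finset (Fin m)),
      (𝓐.filter (fun A => T ⊆ A)).card ≤ (b * 2 ^ (2 * b)) * (m + 1) ^ (b - 1) := by
    intro T hT
    have hTc := (Finset.mem_powersetCard.1 hT).2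
    have := fc_L1 b k hb (Finset.univ : Finset (Fin m)) (𝓐.filter (fun A => T ⊆ A))
      (fun A hA => hk A (Finset.mem_filter.1 hA).1) (fun A _ => Finset.subset_univ A) (by
        intro A hA B hB
        obtain ⟨hA, hTA⟩ := Finset.mem_filter.1 hA
        obtain ⟨hB, hTB⟩ := Finset.mem_filter.1 hB
        refine hP A hA B hB ?_
        rw [← hTc]
        exact Finset.card_le_card (Finset.subset_inter hTA hTB))
    simpa using this
  rw [Finset.sum_congr rfl h2] at h1
  have h4 := Finset.sum_le_sum h3
  rw [← h1] at h4
  simp only [Finset.sum_const, smul_eq_mul, Finset.card_powersetCard, Finset.card_univ, Fintype.card_fin] at h4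
  exact h4.trans (Nat.mul_le_mul_right _ (Nat.choose_le_pow m a))

/-- L2b -/
theorem fc_L2b {m : ℕ} (b k : ℕ) (hb : 2 ≤ b) (hkb : 2 * b ≤ k)
    (𝓐 : Finset (Finset (Fin m))) (hk : ∀ A ∈ 𝓐, A.card = k)
    (hP : ∀ A ∈ 𝓐, ∀ B ∈ 𝓐, 1 ≤ (A ∩ B).card → (A \ B).card < b) :
    𝓐.card ≤ (2 * (b * 2 ^ (2 * b))) * (m + 1) ^ (b - 1) := by
  -- intersection is an equivalence relation
  have htr : ∀ A ∈ 𝓐, ∀ B ∈ 𝓐, ∀ D ∈ 𝓐, (A ∩ B).Nonempty → (B ∩ D).Nonempty → (A ∩ D).Nonempty := by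
    intro A hA B hB D hD h1 h2
    have e1 := hP B hB A hA (by rw [Finset.inter_comm]; exact Finset.card_pos.2 h1)
    have e2 := hP B hB D hD (Finset.card_pos.2 h2)
    by_contra hcon
    have : B ⊆ (B \ A) ∪ (B \ D) := by
      intro r hr
      by_contra hr'
      simp only [Finset.mem_union, Finset.mem_sdiff, hr, true_and, not_or, not_not] at hr'
      exact hcon ⟨r, Finset.mem_inter.2 hr'⟩
    have := (Finset.card_le_card this).trans (Finset.card_union_le _ _)
    rw [hk B hB] at this
    omega
  have hself : ∀ A ∈ 𝓐, (A ∩ A).Nonempty := by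
    intro A hA
    rw [Finset.inter_self, ← Finset.card_pos, hk A hA]; omega
  let Uf : Finset (Fin m) → Finset (Fin m) := fun A => (𝓐.filter (fun B => (A ∩ B).Nonempty)).biUnion id
  have hUeq : ∀ A ∈ 𝓐, ∀ B ∈ 𝓐, (A ∩ B).Nonempty → Uf A = Uf B := by
    intro A hA B hB h
    have : 𝓐.filter (fun D => (A ∩ D).Nonempty) = 𝓐.filter (fun D => (B ∩ D).Nonempty) := by
      apply Finset.filter_congr
      intro D hD
      exact ⟨fun h' => htr B hB A hA D hD (by rwa [Finset.inter_comm]) h', fun h' => htr A hA B hB D hD h h'⟩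
    simp only [Uf, this]
  have hsubU : ∀ A ∈ 𝓐, A ⊆ Uf A := by
    intro A hA
    exact Finset.subset_biUnion_of_mem id (Finset.mem_filter.2 ⟨hA, hself A hA⟩)
  have hmeet : ∀ A ∈ 𝓐, ∀ B ∈ 𝓐, (Uf A ∩ Uf B).Nonempty → (A ∩ B).Nonempty := by
    intro A hA B hB ⟨r, hr⟩
    simp only [Uf, Finset.mem_inter, Finset.mem_biUnion, Finset.mem_filter, id] at hr
    obtain ⟨⟨D, ⟨hD, hAD⟩, hrD⟩, ⟨E, ⟨hE, hBE⟩, hrE⟩⟩ := hr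
    have hDE : (D ∩ E).Nonempty := ⟨r, Finset.mem_inter.2 ⟨hrD, hrE⟩⟩
    exact htr A hA D hD B hB hAD (htr D hD E hE B hB hDE (by rwa [Finset.inter_comm]))
  have hfib : ∀ V ∈ 𝓐.image Uf, (𝓐.filter (fun A => Uf A = V)).card ≤
      (2 * (b * 2 ^ (2 * b))) * (m + 1) ^ (b - 2) * V.card := by
    intro V hV
    obtain ⟨A0, hA0, rfl⟩ := Finset.mem_image.1 hV
    have hpos : 1 ≤ (Uf A0).card := by
      have := Finset.card_le_card (hsubU A0 hA0)
      rw [hk A0 hA0] at this; omega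
    have hm : (Uf A0).card ≤ m := by simpa using Finset.card_le_univ (Uf A0)
    have := fc_L1 b k (by omega) (Uf A0) (𝓐.filter (fun A => Uf A = Uf A0))
      (fun A hA => hk A (Finset.mem_filter.1 hA).1) (by
        intro A hA
        obtain ⟨hA, h⟩ := Finset.mem_filter.1 hA
        rw [← h]; exact hsubU A hA) (by
        intro A hA B hB
        obtain ⟨hA, h⟩ := Finset.mem_filter.1 hA
        obtain ⟨hB, h'⟩ := Finset.mem_filter.1 hB
        refine hP A hA B hB (Finset.card_pos.2 (hmeet A hA B hB ?_))
        rw [h, h', Finset.inter_self]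
        exact Finset.card_pos.1 hpos)
    refine this.trans ?_
    obtain ⟨d, rfl⟩ : ∃ d, b = d + 2 := ⟨b - 2, by omega⟩
    have e1 : d + 2 - 1 = d + 1 := by omega
    have e2 : d + 2 - 2 = d := by omega
    rw [e1, e2, pow_succ]
    have h1 : ((Uf A0).card + 1) ^ d ≤ (m + 1) ^ d := Nat.pow_le_pow_left (by omega) _
    have h2 : (Uf A0).card + 1 ≤ 2 * (Uf A0).card := by omega
    have := Nat.mul_le_mul h1 h2
    calc _ ≤ (d + 2) * 2 ^ (2 * (d + 2)) * ((m + 1) ^ d * (2 * (Uf A0).card)) := Nat.mul_le_mul_left _ this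
      _ = _ := by ring
  have hsum : ∑ V ∈ 𝓐.image Uf, V.card ≤ m := by
    have := Finset.card_biUnion (s := 𝓐.image Uf) (t := id) (by
      intro V hV W hW hVW
      obtain ⟨A, hA, rfl⟩ := Finset.mem_image.1 hV
      obtain ⟨B, hB, rfl⟩ := Finset.mem_image.1 hW
      by_contra hcon
      rw [Function.onFun, Finset.disjoint_iff_inter_eq_empty, ← Ne.eq_def, ← Finset.nonempty_iff_ne_empty] at hcon
      exact hVW (hUeq A hA B hB (hmeet A hA B hB hcon)))
    simp only [id] at this
    rw [← this]
    simpa using Finset.card_le_univ ((𝓐.image Uf).biUnion id)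
  rw [Finset.card_eq_sum_card_image Uf 𝓐]
  refine (Finset.sum_le_sum hfib).trans ?_
  rw [← Finset.mul_sum]
  obtain ⟨d, rfl⟩ : ∃ d, b = d + 2 := ⟨b - 2, by omega⟩
  have e1 : d + 2 - 1 = d + 1 := by omega
  have e2 : d + 2 - 2 = d := by omega
  rw [e1, e2, pow_succ]
  have h5 : ∑ V ∈ 𝓐.image Uf, V.card ≤ m + 1 := by omega
  calc _ ≤ 2 * ((d + 2) * 2 ^ (2 * (d + 2))) * (m + 1) ^ d * (m + 1) := Nat.mul_le_mul_left _ h5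
    _ = _ := by ring


def fcS (a b : ℕ) : ℕ := if a = 0 then b else a + b - 1

structure FcFam {m : ℕ} (a b k : ℕ) (𝓐 : Finset (Finset (Fin m))) : Prop where
  hk : ∀ A ∈ 𝓐, A.card = k
  hP : ∀ A ∈ 𝓐, ∀ B ∈ 𝓐, a ≤ (A ∩ B).card → (A \ B).card < b

theorem fc_choose_ge (a j : ℕ) (ha : 2 ≤ a) : (j + 1) * (j + 2) ≤ 2 * (j + a).choose a := by
  have h1 : ∀ j, (j + 1) * (j + 2) = 2 * (j + 2).choose 2 := by
    intro j
    induction j with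
    | zero => rfl
    | succ j ih =>
      have e : (j + 1 + 2).choose 2 = (j + 2).choose 1 + (j + 2).choose 2 := Nat.choose_succ_succ _ _
      rw [e, Nat.choose_one_right]
      nlinarith
  rw [h1]
  have e1 : (j + a).choose a = (j + a).choose j := by
    rw [Nat.choose_symm_add]
  have e2 : (j + 2).choose 2 = (j + 2).choose j := by
    rw [Nat.choose_symm_add]
  rw [e1, e2]
  exact Nat.mul_le_mul_left _ (Nat.choose_le_choose _ (by omega))

theorem fc_fam_small {m : ℕ} (a b k : ℕ) (ha : 1 ≤ a) (hb : 2 ≤ b) (𝓐 : Finset (Finset (Fin m)))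
    (h : FcFam a b k 𝓐) : 𝓐.card ≤ (b * 2 ^ (2 * b)) * (m + 1) ^ (a + b - 1) := by
  have hc : 1 ≤ b * 2 ^ (2 * b) := Nat.mul_pos (by omega) (by positivity)
  by_cases hka : k < a
  · have h1 : 𝓐 ⊆ Finset.powersetCard k Finset.univ := by
      intro A hA
      rw [Finset.mem_powersetCard]
      exact ⟨Finset.subset_univ _, h.hk A hA⟩
    have h2 := Finset.card_le_card h1
    rw [Finset.card_powersetCard, Finset.card_univ, Fintype.card_fin] at h2
    calc 𝓐.card ≤ m.choose k := h2
      _ ≤ m ^ k := Nat.choose_le_pow m k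
      _ ≤ (m + 1) ^ k := Nat.pow_le_pow_left (by omega) _
      _ ≤ (m + 1) ^ (a + b - 1) := Nat.pow_le_pow_right (by omega) (by omega)
      _ ≤ _ := Nat.le_mul_of_pos_left _ hc
  · have h1 := fc_L2a a b k (by omega) 𝓐 h.hk h.hP
    have h2 : 1 ≤ k.choose a := Nat.choose_pos (by omega)
    calc 𝓐.card ≤ 𝓐.card * k.choose a := Nat.le_mul_of_pos_right _ h2
      _ ≤ _ := h1
      _ ≤ (m + 1) ^ a * ((b * 2 ^ (2 * b)) * (m + 1) ^ (b - 1)) :=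
        Nat.mul_le_mul_right _ (Nat.pow_le_pow_left (by omega) _)
      _ = _ := by
        have : a + b - 1 = a + (b - 1) := by omega
        rw [this, pow_add]; ring

theorem fc_tele (n : ℕ) : ∑ j ∈ Finset.range n, (2 : ℝ) / (((j : ℝ) + 1) * ((j : ℝ) + 2)) ≤ 2 - 2 / ((n : ℝ) + 1) := by
  induction n with
  | zero => simp
  | succ n ih =>
    rw [Finset.sum_range_succ]
    have : (2 : ℝ) / (((n : ℝ) + 1) * ((n : ℝ) + 2)) = 2 / ((n : ℝ) + 1) - 2 / ((n : ℝ) + 2) := by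
      field_simp
      ring
    rw [this]
    push_cast
    have e : (n : ℝ) + 1 + 1 = n + 2 := by ring
    rw [e]
    linarith

/-- L3 -/
theorem fc_L3 (a b : ℕ) (hb : 2 ≤ b) : ∃ Q : ℝ, 0 ≤ Q ∧ ∀ m : ℕ, ∃ β : ℕ → ℝ,
    (∀ k (𝓐 : Finset (Finset (Fin m))), FcFam a b k 𝓐 → (𝓐.card : ℝ) ≤ β k) ∧
    ∑ k ∈ Finset.range (m + 1), β k ≤ Q * ((m : ℝ) + 1) ^ fcS a b := by
  obtain ⟨c, hc⟩ : ∃ c : ℕ, c = b * 2 ^ (2 * b) := ⟨_, rfl⟩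
  have hbb : ∀ y : ℝ, y ^ b = y * y ^ (b - 1) := by
    intro y
    rw [← pow_succ']
    congr 1; omega
  have hsmall : ∀ (m k : ℕ) (𝓐 : Finset (Finset (Fin m))), 1 ≤ a → FcFam a b k 𝓐 →
      (𝓐.card : ℝ) ≤ c * ((m : ℝ) + 1) ^ (a + b - 1) := by
    intro m k 𝓐 ha h
    have := fc_fam_small a b k ha hb 𝓐 h
    rw [← hc] at this
    exact_mod_cast this
  rcases Nat.lt_or_ge a 2 with ha | ha
  · interval_cases a
    · refine ⟨c, by positivity, fun m => ⟨fun _ => c * ((m : ℝ) + 1) ^ (b - 1), ?_, ?_⟩⟩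
      · intro k 𝓐 h
        have := fc_L2a 0 b k (by omega) 𝓐 h.hk h.hP
        rw [← hc] at this
        simp only [Nat.choose_zero_right, mul_one, pow_zero, one_mul] at this
        show (𝓐.card : ℝ) ≤ c * ((m : ℝ) + 1) ^ (b - 1)
        exact_mod_cast this
      · have : fcS 0 b = b := rfl
        rw [this, hbb]
        simp only [Finset.sum_const, Finset.card_range, nsmul_eq_mul]
        push_cast
        apply le_of_eq; ring
    · refine ⟨2 * b * c + 2 * c, by positivity, fun m => ⟨fun k => (if k < 2 * b then c * ((m : ℝ) + 1) ^ b else 0) +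
        2 * c * ((m : ℝ) + 1) ^ (b - 1), ?_, ?_⟩⟩
      · intro k 𝓐 h
        dsimp only
        split_ifs with hk
        · have := hsmall m k 𝓐 le_rfl h
          have e : 1 + b - 1 = b := by omega
          rw [e] at this
          have : (0:ℝ) ≤ 2 * c * ((m : ℝ) + 1) ^ (b - 1) := by positivity
          linarith
        · have := fc_L2b b k hb (by omega) 𝓐 h.hk h.hP
          rw [← hc] at this
          rw [zero_add]
          exact_mod_cast this
      · have : fcS 1 b = b := by simp [fcS]
        rw [this, Finset.sum_add_distrib]
        have h1 : ∑ k ∈ Finset.range (m + 1), (if k < 2 * b then c * ((m : ℝ) + 1) ^ b else 0) ≤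
            2 * b * (c * ((m : ℝ) + 1) ^ b) := by
          rw [← Finset.sum_filter, Finset.sum_const, nsmul_eq_mul]
          apply mul_le_mul_of_nonneg_right _ (by positivity)
          have : (Finset.range (m + 1)).filter (fun k => k < 2 * b) ⊆ Finset.range (2 * b) := by
            intro k hk
            simpa using (Finset.mem_filter.1 hk).2
          have := Finset.card_le_card this
          rw [Finset.card_range] at this
          exact_mod_cast this
        have h2 : ∑ k ∈ Finset.range (m + 1), 2 * c * ((m : ℝ) + 1) ^ (b - 1) = 2 * c * ((m : ℝ) + 1) ^ b := by
          rw [hbb]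
          simp only [Finset.sum_const, Finset.card_range, nsmul_eq_mul]
          push_cast; ring
        rw [h2]
        linarith
  · have hs : fcS a b = a + b - 1 := by
      unfold fcS; rw [if_neg (by omega)]
    refine ⟨a * c + c * 2, by positivity, fun m => ⟨fun k => if k < a then c * ((m : ℝ) + 1) ^ (a + b - 1) else
      c * ((m : ℝ) + 1) ^ (a + b - 1) * (2 / ((((k - a : ℕ) : ℝ) + 1) * (((k - a : ℕ) : ℝ) + 2))), ?_, ?_⟩⟩
    · intro k 𝓐 h
      dsimp only
      split_ifs with hk
      · exact hsmall m k 𝓐 (by omega) h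
      · obtain ⟨j, rfl⟩ : ∃ j, k = j + a := ⟨k - a, by omega⟩
        have h1 := fc_L2a a b (j + a) (by omega) 𝓐 h.hk h.hP
        rw [← hc] at h1
        have h2 := fc_choose_ge a j ha
        have e : j + a - a = j := by omega
        rw [e, ← mul_div_assoc, le_div_iff₀ (by positivity)]
        have h3 : 𝓐.card * ((j + 1) * (j + 2)) ≤ c * (m + 1) ^ (a + b - 1) * 2 := by
          calc _ ≤ 𝓐.card * (2 * (j + a).choose a) := Nat.mul_le_mul_left _ h2
            _ = 2 * (𝓐.card * (j + a).choose a) := by ring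
            _ ≤ 2 * (m ^ a * (c * (m + 1) ^ (b - 1))) := Nat.mul_le_mul_left _ h1
            _ ≤ 2 * ((m + 1) ^ a * (c * (m + 1) ^ (b - 1))) :=
              Nat.mul_le_mul_left _ (Nat.mul_le_mul_right _ (Nat.pow_le_pow_left (by omega) _))
            _ = _ := by
              have : a + b - 1 = a + (b - 1) := by omega
              rw [this, pow_add]; ring
        exact_mod_cast h3
    · rw [hs]
      have hnn : (0 : ℝ) ≤ c * ((m : ℝ) + 1) ^ (a + b - 1) := by positivity
      generalize hD : (c : ℝ) * ((m : ℝ) + 1) ^ (a + b - 1) = D at *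
      have h1 : ∑ k ∈ Finset.range (m + 1), (if k < a then D else
          D * (2 / ((((k - a : ℕ) : ℝ) + 1) * (((k - a : ℕ) : ℝ) + 2)))) ≤
          ∑ k ∈ Finset.range (a + (m + 1)), (if k < a then D else
          D * (2 / ((((k - a : ℕ) : ℝ) + 1) * (((k - a : ℕ) : ℝ) + 2)))) := by
        apply Finset.sum_le_sum_of_subset_of_nonneg
        · intro k; simp only [Finset.mem_range]; omega
        · intro k _ _
          split_ifs
          · exact hnn
          · positivity
      refine h1.trans ?_
      rw [Finset.sum_range_add]
      have h2 : ∑ k ∈ Finset.range a, (if k < a then D else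
          D * (2 / ((((k - a : ℕ) : ℝ) + 1) * (((k - a : ℕ) : ℝ) + 2)))) = a * D := by
        rw [Finset.sum_congr rfl (g := fun _ => D)]
        · simp
        · intro k hk
          rw [if_pos (Finset.mem_range.1 hk)]
      have h3 : ∑ k ∈ Finset.range (m + 1), (if a + k < a then D else
          D * (2 / ((((a + k - a : ℕ) : ℝ) + 1) * (((a + k - a : ℕ) : ℝ) + 2)))) ≤ D * 2 := by
        rw [Finset.sum_congr rfl (g := fun k : ℕ => D * ((2 : ℝ) / (((k : ℝ) + 1) * ((k : ℝ) + 2))))]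
        · rw [← Finset.mul_sum]
          apply mul_le_mul_of_nonneg_left _ hnn
          refine (fc_tele (m + 1)).trans ?_
          have : (0 : ℝ) ≤ 2 / (((m + 1 : ℕ) : ℝ) + 1) := by positivity
          linarith
        · intro k _
          rw [if_neg (by omega)]
          have : a + k - a = k := by omega
          rw [this]
      rw [h2]
      have : (a * c + c * 2) * ((m : ℝ) + 1) ^ (a + b - 1) = a * D + D * 2 := by
        rw [← hD]; ring
      rw [this]
      linarith


def fcSupp {m : ℕ} (u : Fin 3) (x : Fin m → Fin 3) : Finset (Fin m) := Finset.univ.filter (fun r => x r = u)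

theorem fc_level (ℓ a b : ℕ) : ∃ K : ℕ, ∀ (m : ℕ) (C : Finset (Fin m → Fin 3)), FcGood ℓ a b C →
    ∀ k, ((C.filter (fun x => fcNum x 1 = k)).image (fcSupp 2)).card ≤ K := by
  obtain ⟨K, hK⟩ := fc_levelSeq ℓ a b
  refine ⟨K, fun m C hC k => ?_⟩
  by_contra hcon
  push Not at hcon
  set I := (C.filter (fun x => fcNum x 1 = k)).image (fcSupp 2) with hI
  have hrep : ∀ S : I, ∃ x, x ∈ C ∧ fcNum x 1 = k ∧ fcSupp 2 x = S.1 := by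
    intro S
    obtain ⟨x, hx, hS⟩ := Finset.mem_image.1 S.2
    obtain ⟨h1, h2⟩ := Finset.mem_filter.1 hx
    exact ⟨x, h1, h2, hS⟩
  choose rep hr1 hr2 hr3 using hrep
  let e := I.equivFin
  let y : ℕ → Fin m → Fin 3 := fun i => if h : i < I.card then rep (e.symm ⟨i, h⟩) else fun _ => 0
  have hy : ∀ i (h : i < I.card), y i = rep (e.symm ⟨i, h⟩) := fun i h => dif_pos h
  refine hK m C hC k y ?_ ?_ ?_
  · intro i hi
    rw [hy i (by omega)]; exact hr1 _
  · intro i hi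
    rw [hy i (by omega)]; exact hr2 _
  · intro i j hij hj
    by_contra hall
    push Not at hall
    have h1 : fcSupp 2 (y i) = fcSupp 2 (y j) := by
      unfold fcSupp
      exact Finset.filter_congr (fun r _ => hall r)
    rw [hy i (by omega), hy j (by omega), hr3, hr3] at h1
    have h2 := e.symm.injective (Subtype.ext h1)
    simp only [Fin.mk.injEq] at h2
    omega

theorem fc_low (ℓ a b : ℕ) (hb : 2 ≤ b) : ∃ Q : ℝ, 0 ≤ Q ∧ ∀ (m : ℕ) (C : Finset (Fin m → Fin 3)),
    FcGood ℓ a b C → (∀ x ∈ C, fcNum x 1 ≤ fcNum x 0) → (C.card : ℝ) ≤ Q * ((m : ℝ) + 1) ^ fcS a b := by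
  obtain ⟨K, hK⟩ := fc_level ℓ a b
  obtain ⟨Q, hQ0, hQ⟩ := fc_L3 a b hb
  refine ⟨K * Q, by positivity, fun m C hC hlow => ?_⟩
  obtain ⟨β, hβ, hsum⟩ := hQ m
  have hβ0 : ∀ k, 0 ≤ β k := by
    intro k
    have := hβ k ∅ ⟨by simp, by simp⟩
    simpa using this
  have hfib : ∀ k S, (((C.filter (fun x => fcNum x 1 = k)).filter (fun x => fcSupp 2 x = S)).card : ℝ) ≤ β k := by
    intro k S
    have hmem : ∀ x, x ∈ (C.filter (fun x => fcNum x 1 = k)).filter (fun x => fcSupp 2 x = S) →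
        x ∈ C ∧ fcNum x 1 = k ∧ fcSupp 2 x = S := by
      intro x hx
      simpa [and_assoc] using hx
    generalize (C.filter (fun x => fcNum x 1 = k)).filter (fun x => fcSupp 2 x = S) = D at hmem
    have h2 : ∀ x ∈ D, ∀ y ∈ D, ∀ r, x r = 2 ↔ y r = 2 := by
      intro x hx y hy r
      have := (hmem x hx).2.2.trans (hmem y hy).2.2.symm
      have := Finset.ext_iff.1 this r
      simpa [fcSupp] using this
    have hinj : Set.InjOn (fcSupp 1) (D : Set (Fin m → Fin 3)) := by
      intro x hx y hy hxy
      funext r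
      have e1 := h2 x hx y hy r
      have e2 := Finset.ext_iff.1 hxy r
      simp only [fcSupp, Finset.mem_filter, Finset.mem_univ, true_and] at e2
      have : ∀ u v : Fin 3, (u = 2 ↔ v = 2) → (u = 1 ↔ v = 1) → u = v := by decide
      exact this _ _ e1 e2
    have hzero : ∀ x ∈ D, ∀ y ∈ D, ∀ u, u ≠ 2 → fcCnt x y u 2 = 0 := by
      intro x hx y hy u hu
      unfold fcCnt
      rw [Finset.card_eq_zero, Finset.filter_eq_empty_iff]
      rintro r - ⟨h, h'⟩
      have := (h2 x hx y hy r).2 h'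
      exact hu (h.symm.trans this)
    rw [← Finset.card_image_of_injOn hinj]
    apply hβ
    constructor
    · intro A hA
      obtain ⟨x, hx, rfl⟩ := Finset.mem_image.1 hA
      exact (hmem x hx).2.1
    · intro A hA B hB hAB
      obtain ⟨x, hx, rfl⟩ := Finset.mem_image.1 hA
      obtain ⟨y, hy, rfl⟩ := Finset.mem_image.1 hB
      have e11 : (fcSupp 1 x ∩ fcSupp 1 y).card = fcCnt x y 1 1 := by
        unfold fcSupp fcCnt
        rw [← Finset.filter_and]
      have e1 := Finset.card_sdiff_add_card_inter (fcSupp 1 x) (fcSupp 1 y)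
      have e2 : (fcSupp 1 x).card = k := (hmem x hx).2.1
      have e3 := fcNum_eq x y 1
      have e4 := fcNum_eq y x 1
      have e5 := fcNum_eq x y 0
      rw [hzero x hx y hy _ (by decide)] at e3 e5
      rw [hzero y hy x hx _ (by decide), fcCnt_comm y x 1 0, fcCnt_comm y x 1 1] at e4
      rw [(hmem x hx).2.1] at e3
      rw [(hmem y hy).2.1] at e4
      have e6 := hlow x (hmem x hx).1
      rw [(hmem x hx).2.1] at e6
      by_contra hcon
      exact hC.hF x (hmem x hx).1 y (hmem y hy).1 (by omega) (by omega) (by omega) (by omega)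
  have hlev : ∀ k, ((C.filter (fun x => fcNum x 1 = k)).card : ℝ) ≤ K * β k := by
    intro k
    rw [Finset.card_eq_sum_card_image (fcSupp 2)]
    push_cast
    refine (Finset.sum_le_sum (fun S _ => hfib k S)).trans ?_
    rw [Finset.sum_const, nsmul_eq_mul]
    exact mul_le_mul_of_nonneg_right (by exact_mod_cast hK m C hC k) (hβ0 k)
  have h := Finset.card_eq_sum_card_fiberwise (s := C) (t := Finset.range (m + 1))
    (f := fun x => fcNum x 1) (by
      intro x _
      have : fcNum x 1 ≤ m := by
        unfold fcNum
        simpa using Finset.card_le_univ (Finset.univ.filter (fun r => x r = 1))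
      simp only [Finset.coe_range, Set.mem_Iio]; omega)
  rw [h]
  push_cast
  refine (Finset.sum_le_sum (fun k _ => hlev k)).trans ?_
  rw [← Finset.mul_sum, mul_assoc]
  exact mul_le_mul_of_nonneg_left hsum (by positivity)

theorem fc_upper (ℓ a b : ℕ) (hb : 2 ≤ b) : ∃ Q : ℝ, 0 ≤ Q ∧ ∀ (m : ℕ) (C : Finset (Fin m → Fin 3)),
    FcGood ℓ a b C → (C.card : ℝ) ≤ Q * ((m : ℝ) + 1) ^ fcS a b := by
  obtain ⟨Q, hQ0, hQ⟩ := fc_low ℓ a b hb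
  refine ⟨2 * Q, by positivity, fun m C hC => ?_⟩
  have h1 := hQ m (C.filter (fun x => fcNum x 1 ≤ fcNum x 0)) (hC.mono (Finset.filter_subset _ _))
    (fun x hx => (Finset.mem_filter.1 hx).2)
  have hsw : ∀ (x : Fin m → Fin 3) u, fcNum (fun r => fcSw (x r)) u = fcNum x (fcSw u) := by
    intro x u
    unfold fcNum
    congr 1
    ext r
    simp [fcSw_eq]
  have h2 := hQ m (fcSwF (C.filter (fun x => ¬ fcNum x 1 ≤ fcNum x 0)))
    (hC.mono (Finset.filter_subset _ _)).swap (by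
      intro x hx
      rw [mem_fcSwF] at hx
      have := (Finset.mem_filter.1 hx).2
      rw [hsw, hsw] at this
      have s0 : fcSw 0 = 1 := rfl
      have s1 : fcSw 1 = 0 := rfl
      rw [s0, s1] at this
      omega)
  rw [fcSwF, Finset.card_image_of_injective _ fcSw_inj] at h2
  have h3 := Finset.card_filter_add_card_filter_not (s := C) (fun x => fcNum x 1 ≤ fcNum x 0)
  rw [← h3]
  push_cast
  linarith


theorem fc_TFam_lt (ℓ r : ℕ) (M : CMat) (h : M ∈ TFam ℓ r) : ∀ i j, M.mat i j < r := by
  obtain ⟨u, v, hu, hv, -, rfl | rfl⟩ := h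
  · intro i j
    show Imat ℓ u v i j < r
    unfold Imat; split_ifs <;> assumption
  · intro i j
    show Tmat ℓ u v i j < r
    unfold Tmat; split_ifs <;> assumption

theorem fc_memI (ℓ : ℕ) (hℓ : 2 ≤ ℓ) (u v : Fin 3) (huv : u ≠ v) (h2 : u = 2 ∨ v = 2) :
    (⟨ℓ, ℓ, Imat ℓ u v⟩ : CMat) ∈ TFam ℓ 3 \ TFam ℓ 2 := by
  refine ⟨⟨u, v, u.2, v.2, fun h => huv (Fin.ext h), Or.inl rfl⟩, fun h => ?_⟩
  have h' : ∀ i j, Imat ℓ u v i j < 2 := fc_TFam_lt ℓ 2 _ h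
  rcases h2 with rfl | rfl
  · have := h' ⟨0, by omega⟩ ⟨0, by omega⟩
    simp [Imat] at this
  · have := h' ⟨0, by omega⟩ ⟨1, by omega⟩
    simp [Imat] at this

theorem fc_memT (ℓ : ℕ) (hℓ : 2 ≤ ℓ) (u v : Fin 3) (huv : u ≠ v) (h2 : u = 2 ∨ v = 2) :
    (⟨ℓ, ℓ, Tmat ℓ u v⟩ : CMat) ∈ TFam ℓ 3 \ TFam ℓ 2 := by
  refine ⟨⟨u, v, u.2, v.2, fun h => huv (Fin.ext h), Or.inr rfl⟩, fun h => ?_⟩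
  have h' : ∀ i j, Tmat ℓ u v i j < 2 := fc_TFam_lt ℓ 2 _ h
  rcases h2 with rfl | rfl
  · have := h' ⟨1, by omega⟩ ⟨0, by omega⟩
    simp [Tmat] at this
  · have := h' ⟨0, by omega⟩ ⟨1, by omega⟩
    simp [Tmat] at this

theorem fc_avoidT (ℓ : ℕ) (hℓ : 2 ≤ ℓ) {m n : ℕ} (A : MatN m n) (hA : RMat 2 A) :
    AvoidsFam A (TFam ℓ 3 \ TFam ℓ 2) := by
  rintro M ⟨⟨u, v, hu, hv, huv, hM⟩, hM2⟩ ⟨f, g, -, -, hfg⟩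
  apply hM2
  have hlt : ∀ i j, M.mat i j < 2 := fun i j => by rw [← hfg]; exact hA _ _
  rcases hM with rfl | rfl
  · replace hlt : ∀ i j, Imat ℓ u v i j < 2 := hlt
    have h1 := hlt ⟨0, by omega⟩ ⟨0, by omega⟩
    have h2 := hlt ⟨0, by omega⟩ ⟨1, by omega⟩
    simp only [Imat, if_true] at h1
    simp only [Imat, Fin.mk.injEq, zero_ne_one, if_false] at h2
    exact ⟨u, v, h1, h2, huv, Or.inl rfl⟩
  · replace hlt : ∀ i j, Tmat ℓ u v i j < 2 := hlt
    have h1 := hlt ⟨1, by omega⟩ ⟨0, by omega⟩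
    have h2 := hlt ⟨0, by omega⟩ ⟨1, by omega⟩
    simp [Tmat] at h1 h2
    exact ⟨u, v, by omega, by omega, huv, Or.inr rfl⟩

/-- enumeration of part of a finite set -/
theorem fc_pick {m : ℕ} (S : Finset (Fin m)) (a : ℕ) (h : a ≤ S.card) (d : Fin m) :
    ∃ e : ℕ → Fin m, (∀ i, i < a → e i ∈ S) ∧ ∀ i j, i < a → j < a → e i = e j → i = j := by
  refine ⟨fun i => if hi : i < S.card then (S.equivFin.symm ⟨i, hi⟩ : Fin m) else d, ?_, ?_⟩
  · intro i hi
    dsimp only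
    rw [dif_pos (by omega)]
    exact (S.equivFin.symm ⟨i, by omega⟩).2
  · intro i j hi hj hij
    dsimp only at hij
    rw [dif_pos (by omega), dif_pos (by omega)] at hij
    have := S.equivFin.symm.injective (Subtype.ext hij)
    simpa using this

theorem fc_inj2 {α : Type*} (j j' : α) (h : j ≠ j') : Function.Injective ![j, j'] := by
  intro p q hpq
  fin_cases p <;> fin_cases q
  · rfl
  · exact absurd hpq h
  · exact absurd hpq.symm h
  · rfl

theorem fc_configF {m n : ℕ} (a b : ℕ) (hb : 1 ≤ b) (A : MatN m n) (j j' : Fin n)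
    (h11 : a ≤ (Finset.univ.filter (fun r => A r j = 1 ∧ A r j' = 1)).card)
    (h10 : b ≤ (Finset.univ.filter (fun r => A r j = 1 ∧ A r j' = 0)).card)
    (h01 : b ≤ (Finset.univ.filter (fun r => A r j = 0 ∧ A r j' = 1)).card)
    (h00 : a ≤ (Finset.univ.filter (fun r => A r j = 0 ∧ A r j' = 0)).card) :
    IsConfig (Fabcd a b b a) A := by
  obtain ⟨d, hd⟩ := Finset.card_pos.1 (lt_of_lt_of_le (by omega) h10)
  simp only [Finset.mem_filter, Finset.mem_univ, true_and] at hd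
  have hjj : j ≠ j' := by
    rintro rfl
    omega
  obtain ⟨e1, he1, hi1⟩ := fc_pick _ a h11 d
  obtain ⟨e2, he2, hi2⟩ := fc_pick _ b h10 d
  obtain ⟨e3, he3, hi3⟩ := fc_pick _ b h01 d
  obtain ⟨e4, he4, hi4⟩ := fc_pick _ a h00 d
  simp only [Finset.mem_filter, Finset.mem_univ, true_and] at he1 he2 he3 he4
  let f : Fin (a + b + b + a) → Fin m := fun i =>
    if (i : ℕ) < a then e1 i else if (i : ℕ) < a + b then e2 (i - a)
    else if (i : ℕ) < a + b + b then e3 (i - (a + b)) else e4 (i - (a + b + b))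
  have hcase : ∀ i : Fin (a + b + b + a),
      ((i : ℕ) < a ∧ f i = e1 i ∧ Fabcd a b b a i 0 = 1 ∧ Fabcd a b b a i 1 = 1) ∨
      (a ≤ (i : ℕ) ∧ (i : ℕ) < a + b ∧ f i = e2 (i - a) ∧ Fabcd a b b a i 0 = 1 ∧ Fabcd a b b a i 1 = 0) ∨
      (a + b ≤ (i : ℕ) ∧ (i : ℕ) < a + b + b ∧ f i = e3 (i - (a + b)) ∧
        Fabcd a b b a i 0 = 0 ∧ Fabcd a b b a i 1 = 1) ∨
      (a + b + b ≤ (i : ℕ) ∧ f i = e4 (i - (a + b + b)) ∧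
        Fabcd a b b a i 0 = 0 ∧ Fabcd a b b a i 1 = 0) := by
    intro i
    by_cases c1 : (i : ℕ) < a
    · left
      simp [f, Fabcd, c1]
    by_cases c2 : (i : ℕ) < a + b
    · right; left
      simp only [f, Fabcd, c1, c2, if_true, if_false]
      exact ⟨by omega, trivial, trivial, rfl, rfl⟩
    by_cases c3 : (i : ℕ) < a + b + b
    · right; right; left
      simp only [f, Fabcd, c1, c2, c3, if_true, if_false]
      exact ⟨by omega, trivial, trivial, rfl, rfl⟩
    · right; right; right
      simp only [f, Fabcd, c1, c2, c3, if_false]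
      exact ⟨by omega, trivial, trivial, trivial⟩
  clear_value f
  have hval : ∀ i : Fin (a + b + b + a), A (f i) j = Fabcd a b b a i 0 ∧ A (f i) j' = Fabcd a b b a i 1 := by
    intro i
    have hi := i.2
    rcases hcase i with ⟨h1, h2, h3, h4⟩ | ⟨h0, h1, h2, h3, h4⟩ | ⟨h0, h1, h2, h3, h4⟩ | ⟨h0, h2, h3, h4⟩ <;>
      rw [h2, h3, h4]
    · exact he1 _ h1
    · exact he2 _ (by omega)
    · exact he3 _ (by omega)
    · exact he4 _ (by omega)
  refine ⟨f, ![j, j'], ?_, ?_, ?_⟩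
  · intro i i' hii
    have hi := i.2
    have hi' := i'.2
    have v1 := hval i
    have v2 := hval i'
    rw [hii] at v1
    have w1 : Fabcd a b b a i 0 = Fabcd a b b a i' 0 := v1.1.symm.trans v2.1
    have w2 : Fabcd a b b a i 1 = Fabcd a b b a i' 1 := v1.2.symm.trans v2.2
    clear v1 v2 hval
    apply Fin.ext
    rcases hcase i with ⟨h1, h2, h3, h4⟩ | ⟨h0, h1, h2, h3, h4⟩ | ⟨h0, h1, h2, h3, h4⟩ | ⟨h0, h2, h3, h4⟩ <;>
    rcases hcase i' with ⟨k1, k2, k3, k4⟩ | ⟨k0, k1, k2, k3, k4⟩ | ⟨k0, k1, k2, k3, k4⟩ | ⟨k0, k2, k3, k4⟩ <;>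
    rw [h3, k3] at w1 <;> rw [h4, k4] at w2 <;> rw [h2, k2] at hii
    all_goals first
      | omega
      | exact hi1 _ _ (by omega) (by omega) hii
      | (have := hi2 _ _ (by omega) (by omega) hii; omega)
      | (have := hi3 _ _ (by omega) (by omega) hii; omega)
      | (have := hi4 _ _ (by omega) (by omega) hii; omega)
  · exact fc_inj2 j j' hjj
  · intro i p
    fin_cases p
    · exact (hval i).1
    · exact (hval i).2

theorem fc_good_of_avoid (ℓ a b : ℕ) (hℓ : 2 ≤ ℓ) (hb : 2 ≤ b) {m n : ℕ} (A : MatN m n)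
    (hR : RMat 3 A) (hS : SimpleM A)
    (hA : AvoidsFam A ((TFam ℓ 3 \ TFam ℓ 2) ∪ {⟨a + b + b + a, 2, Fabcd a b b a⟩})) :
    ∃ C : Finset (Fin m → Fin 3), C.card = n ∧ FcGood ℓ a b C := by
  let col : Fin n → Fin m → Fin 3 := fun j r => ⟨A r j, hR r j⟩
  have hcol : Function.Injective col := by
    intro j j' h
    apply hS
    intro r
    have := congrFun h r
    simpa [col] using this
  have hmem : ∀ x, x ∈ Finset.univ.image col ↔ ∃ j, col j = x := by simp
  refine ⟨Finset.univ.image col, by rw [Finset.card_image_of_injective _ hcol]; simp, ?_, ?_, ?_⟩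
  · intro x hx y hy h11 h10 h01 h00
    obtain ⟨j, rfl⟩ := (hmem x).1 hx
    obtain ⟨j', rfl⟩ := (hmem y).1 hy
    have key : ∀ u v : Fin 3, fcCnt (col j) (col j') u v =
        (Finset.univ.filter (fun r => A r j = u ∧ A r j' = v)).card := by
      intro u v
      unfold fcCnt
      congr 1
      ext r
      simp [col, Fin.ext_iff]
    rw [key] at h11 h10 h01 h00
    exact hA _ (Or.inr rfl) (fc_configF a b (by omega) A j j' h11 h10 h01 h00)
  · intro u v huv h2 ρ c hc hp
    have : ∀ j : Fin ℓ, ∃ g, col g = c j := fun j => (hmem _).1 (hc j j.2)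
    choose g hg using this
    refine hA _ (Or.inl (fc_memI ℓ hℓ u v huv h2)) ⟨fun i => ρ i, g, ?_, ?_, ?_⟩
    · intro i i' h
      by_contra hne
      have hne' : (i : ℕ) ≠ i' := fun hh => hne (Fin.ext hh)
      have e1 := hp i i i.2 i.2
      have e2 := hp i' i i'.2 i.2
      dsimp only at h
      rw [if_pos rfl, h] at e1
      rw [if_neg hne'.symm] at e2
      exact huv (e1.symm.trans e2)
    · intro i i' h
      by_contra hne
      have hne' : (i : ℕ) ≠ i' := fun hh => hne (Fin.ext hh)
      have e1 := hp i i i.2 i.2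
      have e2 := hp i i' i.2 i'.2
      have e3 : c i = c i' := by rw [← hg, ← hg, h]
      rw [if_pos rfl, e3] at e1
      rw [if_neg hne'] at e2
      exact huv (e1.symm.trans e2)
    · intro i j
      have e1 := hp i j i.2 j.2
      rw [← hg] at e1
      have e2 := congrArg Fin.val e1
      simp only [col] at e2
      show A (ρ i) (g j) = Imat ℓ u v i j
      rw [e2]
      unfold Imat
      by_cases hij : i = j
      · simp [hij]
      · have : (i : ℕ) ≠ j := fun hh => hij (Fin.ext hh)
        simp [hij, this]
  · intro u v huv h2 ρ c hc hp
    have : ∀ j : Fin ℓ, ∃ g, col g = c j := fun j => (hmem _).1 (hc j j.2)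
    choose g hg using this
    have r1 : ∀ i i' : Fin ℓ, (i : ℕ) < i' → ρ i ≠ ρ i' := by
      intro i i' hlt h
      have e1 := hp i i i.2 i.2
      have e2 := hp i' i i'.2 i.2
      rw [if_neg (by omega), h] at e1
      rw [if_pos hlt] at e2
      exact huv (e2.symm.trans e1)
    have r2 : ∀ i i' : Fin ℓ, (i : ℕ) < i' → g i ≠ g i' := by
      intro i i' hlt h
      have e1 := hp i' i i'.2 i.2
      have e2 := hp i' i' i'.2 i'.2
      have e3 : c i = c i' := by rw [← hg, ← hg, h]
      rw [if_pos hlt, e3] at e1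
      rw [if_neg (by omega)] at e2
      exact huv (e1.symm.trans e2)
    refine hA _ (Or.inl (fc_memT ℓ hℓ u v huv h2)) ⟨fun i => ρ i, g, ?_, ?_, ?_⟩
    · intro i i' h
      rcases lt_trichotomy (i : ℕ) i' with hlt | he | hlt
      · exact absurd h (r1 _ _ hlt)
      · exact Fin.ext he
      · exact absurd h.symm (r1 _ _ hlt)
    · intro i i' h
      rcases lt_trichotomy (i : ℕ) i' with hlt | he | hlt
      · exact absurd h (r2 _ _ hlt)
      · exact Fin.ext he
      · exact absurd h.symm (r2 _ _ hlt)
    · intro i j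
      have e1 := hp i j i.2 j.2
      rw [← hg] at e1
      have e2 := congrArg Fin.val e1
      simp only [col] at e2
      show A (ρ i) (g j) = Tmat ℓ u v i j
      rw [e2]
      unfold Tmat
      split_ifs <;> rfl


theorem fc_bdd (m r : ℕ) (𝓕 : Set CMat) :
    BddAbove { n : ℕ | ∃ A : MatN m n, RMat r A ∧ SimpleM A ∧ AvoidsFam A 𝓕 } := by
  refine ⟨r ^ m, ?_⟩
  rintro n ⟨A, hR, hS, -⟩
  have : Function.Injective (fun (j : Fin n) (i : Fin m) => (⟨A i j, hR i j⟩ : Fin r)) := by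
    intro j j' h
    apply hS
    intro i
    have := congrFun h i
    simpa using this
  simpa using Fintype.card_le_of_injective _ this

theorem fc_nonempty (m r : ℕ) (𝓕 : Set CMat) (h : ∀ F ∈ 𝓕, 1 ≤ F.cols) :
    { n : ℕ | ∃ A : MatN m n, RMat r A ∧ SimpleM A ∧ AvoidsFam A 𝓕 }.Nonempty := by
  refine ⟨0, fun _ j => j.elim0, fun _ j => j.elim0, fun j => j.elim0, ?_⟩
  rintro F hF ⟨f, g, -⟩
  exact (g ⟨0, h F hF⟩).elim0

theorem fc_forb_mono (ℓ a b m : ℕ) (hℓ : 2 ≤ ℓ) :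
    forb m 2 {⟨a + b + b + a, 2, Fabcd a b b a⟩} ≤
      forb m 3 ((TFam ℓ 3 \ TFam ℓ 2) ∪ {⟨a + b + b + a, 2, Fabcd a b b a⟩}) := by
  apply csSup_le_csSup (fc_bdd _ _ _)
  · apply fc_nonempty
    rintro F rfl
    show 1 ≤ 2
    omega
  · rintro n ⟨A, hR, hS, hA⟩
    refine ⟨A, fun i j => lt_trans (hR i j) (by omega), hS, ?_⟩
    rintro F (hF | hF)
    · exact fc_avoidT ℓ hℓ A hR F hF
    · exact hA F hF

theorem fc_forb_upper (ℓ a b : ℕ) (hℓ : 2 ≤ ℓ) (hb : 2 ≤ b) : ∃ Q : ℝ, 0 ≤ Q ∧ ∀ m : ℕ,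
    (forb m 3 ((TFam ℓ 3 \ TFam ℓ 2) ∪ {⟨a + b + b + a, 2, Fabcd a b b a⟩}) : ℝ) ≤
      Q * ((m : ℝ) + 1) ^ fcS a b := by
  obtain ⟨Q, hQ0, hQ⟩ := fc_upper ℓ a b hb
  refine ⟨Q, hQ0, fun m => ?_⟩
  have hmem := Nat.sSup_mem (fc_nonempty m 3 ((TFam ℓ 3 \ TFam ℓ 2) ∪ {⟨a + b + b + a, 2, Fabcd a b b a⟩}) (by
    rintro F (⟨⟨u, v, -, -, -, rfl | rfl⟩, -⟩ | rfl)
    · show 1 ≤ ℓ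
      omega
    · show 1 ≤ ℓ
      omega
    · show 1 ≤ 2
      omega)) (fc_bdd _ _ _)
  obtain ⟨A, hR, hS, hA⟩ := hmem
  obtain ⟨C, hC, hG⟩ := fc_good_of_avoid ℓ a b hℓ hb A hR hS hA
  have := hQ m C hG
  rw [hC] at this
  exact this

theorem fc_lower_fam (a b m : ℕ) (𝓕 : Finset (Finset (Fin m)))
    (h : ∀ X ∈ 𝓕, ∀ Y ∈ 𝓕, a ≤ (X ∩ Y).card → b ≤ (X \ Y).card → b ≤ (Y \ X).card → False) :
    𝓕.card ≤ forb m 2 {⟨a + b + b + a, 2, Fabcd a b b a⟩} := by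
  apply le_csSup (fc_bdd _ _ _)
  let e := 𝓕.equivFin
  let A : MatN m 𝓕.card := fun r j => if r ∈ (e.symm j).1 then 1 else 0
  refine ⟨A, ?_, ?_, ?_⟩
  · intro r j
    simp only [A]
    split_ifs <;> omega
  · intro j j' hjj
    apply e.symm.injective
    apply Subtype.ext
    ext r
    have := hjj r
    simp only [A] at this
    by_cases h1 : r ∈ (e.symm j).1 <;> by_cases h2 : r ∈ (e.symm j').1 <;> simp_all
  · rintro F rfl ⟨f, g, hf, -, hfg⟩
    change Fin (a + b + b + a) → Fin m at f
    change Fin 2 → Fin 𝓕.card at g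
    replace hfg : ∀ i j, A (f i) (g j) = Fabcd a b b a i j := hfg
    have hmem : ∀ i j, f i ∈ (e.symm (g j)).1 ↔ Fabcd a b b a i j = 1 := by
      intro i j
      rw [← hfg]
      simp only [A]
      split_ifs <;> simp_all
    have hge : ∀ (S : Finset (Fin m)) (s t : ℕ) (ht : s + t ≤ a + b + b + a),
        (∀ i : Fin (a + b + b + a), s ≤ (i : ℕ) → (i : ℕ) < s + t → f i ∈ S) → t ≤ S.card := by
      intro S s t ht hS
      have := Finset.card_le_card_of_injOn (s := (Finset.univ : Finset (Fin t))) (t := S)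
        (fun i => f ⟨s + i, by omega⟩) (by
          intro i _
          exact hS _ (by simp) (by simp)) (by
          intro i _ i' _ hii
          have := hf hii
          simp only [Fin.mk.injEq] at this
          exact Fin.ext (by omega))
      simpa using this
    refine h _ (e.symm (g 0)).2 _ (e.symm (g 1)).2 ?_ ?_ ?_
    · refine hge _ 0 a (by omega) ?_
      intro i h1 h2
      have h2 : (i : ℕ) < a := by omega
      rw [Finset.mem_inter, hmem, hmem]
      simp [Fabcd, h2]
    · refine hge _ a b (by omega) ?_
      intro i h1 h2
      have h3 : ¬ (i : ℕ) < a := by omega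
      rw [Finset.mem_sdiff, hmem, hmem]
      simp [Fabcd, h2, h3]
    · refine hge _ (a + b) b (by omega) ?_
      intro i h1 h2
      have h3 : ¬ (i : ℕ) < a := by omega
      have h4 : ¬ (i : ℕ) < a + b := by omega
      rw [Finset.mem_sdiff, hmem, hmem]
      simp [Fabcd, h2, h3, h4]

theorem fc_pow_choose (m n d : ℕ) (hm : 4 * d ≤ m) (hn : m ≤ 2 * n) :
    m ^ d ≤ 4 ^ d * (d.factorial * n.choose d) := by
  have h1 : (n + 1 - d) ^ d ≤ d.factorial * n.choose d := by
    have := Nat.pow_sub_le_descFactorial n d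
    rwa [Nat.descFactorial_eq_factorial_mul_choose] at this
  calc m ^ d ≤ (4 * (n + 1 - d)) ^ d := Nat.pow_le_pow_left (by omega) _
    _ = 4 ^ d * (n + 1 - d) ^ d := mul_pow _ _ _
    _ ≤ _ := Nat.mul_le_mul_left _ h1

theorem fc_lower (a b : ℕ) (hb : 2 ≤ b) : ∃ Q : ℕ, ∀ m : ℕ,
    m ^ fcS a b ≤ Q * forb m 2 {⟨a + b + b + a, 2, Fabcd a b b a⟩} := by
  have hone : ∀ m, 1 ≤ forb m 2 {⟨a + b + b + a, 2, Fabcd a b b a⟩} := by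
    intro m
    have := fc_lower_fam a b m {∅} (by
      intro X hX Y hY _ h _
      rw [Finset.mem_singleton] at hX
      subst hX
      simp at h; omega)
    simpa using this
  have hsmall : ∀ m M, m ≤ M → m ^ fcS a b ≤ M ^ fcS a b * forb m 2 {⟨a + b + b + a, 2, Fabcd a b b a⟩} := by
    intro m M h
    exact (Nat.pow_le_pow_left h _).trans (Nat.le_mul_of_pos_right _ (hone m))
  by_cases ha : a = 0
  · subst ha
    have hs : fcS 0 b = b := rfl
    simp only [hs] at hsmall ⊢
    refine ⟨(4 * b) ^ b + 2 * (4 ^ (b - 1) * (b - 1).factorial), fun m => ?_⟩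
    rw [add_mul]
    by_cases hm : m ≤ 4 * b
    · exact (hsmall m _ hm).trans (Nat.le_add_right _ _)
    · refine le_trans ?_ (Nat.le_add_left _ _)
      let W : Finset (Fin m) := Finset.univ.filter (fun r => m / 2 ≤ (r : ℕ))
      let V : ℕ → Finset (Fin m) := fun t => Finset.univ.filter (fun r => (r : ℕ) < t)
      have hV : ∀ t, t ≤ m → (V t).card = t := by
        intro t ht
        have : (V t).card = (Finset.range t).card := by
          apply Finset.card_bij (fun (r : Fin m) _ => (r : ℕ))
          · intro r hr; simpa [V] using hr
          · intro r _ r' _ h; exact Fin.ext h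
          · intro i hi
            have := Finset.mem_range.1 hi
            exact ⟨⟨i, by omega⟩, by simpa [V] using this, rfl⟩
        simpa using this
      have hW : W.card = m - m / 2 := by
        have h1 := Finset.card_filter_add_card_filter_not (s := (Finset.univ : Finset (Fin m)))
          (fun r => m / 2 ≤ (r : ℕ))
        have h2 : (Finset.univ.filter (fun r : Fin m => ¬ m / 2 ≤ (r : ℕ))) = V (m / 2) := by
          ext r; simp [V]
        rw [h2, hV _ (by omega), Finset.card_univ, Fintype.card_fin] at h1
        show (Finset.univ.filter (fun r : Fin m => m / 2 ≤ (r : ℕ))).card = _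
        omega
      let P := Finset.range (m / 2 + 1) ×ˢ Finset.powersetCard (b - 1) W
      have hinj : Set.InjOn (fun p : ℕ × Finset (Fin m) => V p.1 ∪ p.2) (P : Set (ℕ × Finset (Fin m))) := by
        have key : ∀ p ∈ P, p.1 ≤ m / 2 ∧ (V p.1 ∪ p.2) \ W = V p.1 ∧ (V p.1 ∪ p.2) ∩ W = p.2 := by
          intro p hp
          obtain ⟨h1, h2⟩ := Finset.mem_product.1 hp
          rw [Finset.mem_range] at h1
          have h3 := (Finset.mem_powersetCard.1 h2).1
          have hd : ∀ r, r ∈ V p.1 → r ∉ W := by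
            intro r hr hr'
            simp only [V, W, Finset.mem_filter, Finset.mem_univ, true_and] at hr hr'
            omega
          refine ⟨by omega, ?_, ?_⟩
          · ext r
            have := hd r
            have := @h3 r
            simp only [Finset.mem_sdiff, Finset.mem_union]
            tauto
          · ext r
            have := hd r
            have := @h3 r
            simp only [Finset.mem_inter, Finset.mem_union]
            tauto
        intro p hp q hq hpq
        obtain ⟨p0, p1, p2⟩ := key p hp
        obtain ⟨q0, q1, q2⟩ := key q hq
        dsimp only at hpq
        rw [hpq] at p1 p2
        have e2 : p.2 = q.2 := p2.symm.trans q2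
        have e1 : V p.1 = V q.1 := p1.symm.trans q1
        have e3 := congrArg Finset.card e1
        rw [hV _ (by omega), hV _ (by omega)] at e3
        exact Prod.ext e3 e2
      have hfam := fc_lower_fam 0 b m (P.image (fun p : ℕ × Finset (Fin m) => V p.1 ∪ p.2)) (by
        have key : ∀ p ∈ P, ∀ q ∈ P, p.1 ≤ q.1 → ((V p.1 ∪ p.2) \ (V q.1 ∪ q.2)).card < b := by
          intro p hp q hq hpq
          obtain ⟨h1, h2⟩ := Finset.mem_product.1 hp
          have h3 := (Finset.mem_powersetCard.1 h2).2
          have : (V p.1 ∪ p.2) \ (V q.1 ∪ q.2) ⊆ p.2 := by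
            intro r hr
            simp only [V, Finset.mem_sdiff, Finset.mem_union, Finset.mem_filter, Finset.mem_univ, true_and, not_or] at hr
            rcases hr.1 with h | h
            · omega
            · exact h
          have := Finset.card_le_card this
          omega
        intro X hX Y hY _ hXY hYX
        obtain ⟨p, hp, rfl⟩ := Finset.mem_image.1 hX
        obtain ⟨q, hq, rfl⟩ := Finset.mem_image.1 hY
        rcases le_total p.1 q.1 with h | h
        · have := key p hp q hq h; omega
        · have := key q hq p hp h; omega)
      rw [Finset.card_image_of_injOn hinj, Finset.card_product, Finset.card_range, Finset.card_powersetCard, hW] at hfam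
      have hpc := fc_pow_choose m (m - m / 2) (b - 1) (by omega) (by omega)
      have e : m ^ b = m * m ^ (b - 1) := by
        rw [← pow_succ']
        congr 1; omega
      rw [e]
      calc m * m ^ (b - 1) ≤ (2 * (m / 2 + 1)) * (4 ^ (b - 1) * ((b - 1).factorial * (m - m / 2).choose (b - 1))) :=
            Nat.mul_le_mul (by omega) hpc
        _ = 2 * (4 ^ (b - 1) * (b - 1).factorial) * ((m / 2 + 1) * (m - m / 2).choose (b - 1)) := by ring
        _ ≤ _ := Nat.mul_le_mul_left _ hfam
  · have hs : fcS a b = a + b - 1 := by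
      unfold fcS; rw [if_neg ha]
    simp only [hs] at hsmall ⊢
    refine ⟨(4 * (a + b)) ^ (a + b - 1) + 4 ^ (a + b - 1) * (a + b - 1).factorial, fun m => ?_⟩
    rw [add_mul]
    by_cases hm : m ≤ 4 * (a + b)
    · exact (hsmall m _ hm).trans (Nat.le_add_right _ _)
    · refine le_trans ?_ (Nat.le_add_left _ _)
      have hfam := fc_lower_fam a b m (Finset.powersetCard (a + b - 1) Finset.univ) (by
        intro X hX Y hY h1 h2 _
        have h3 := (Finset.mem_powersetCard.1 hX).2
        have h4 := Finset.card_sdiff_add_card_inter X Y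
        omega)
      rw [Finset.card_powersetCard, Finset.card_univ, Fintype.card_fin] at hfam
      have hpc := fc_pow_choose m m (a + b - 1) (by omega) (by omega)
      rw [← mul_assoc] at hpc
      exact hpc.trans (Nat.mul_le_mul_left _ hfam)

theorem stmt5 (ℓ a b : ℕ) (hℓ : 2 ≤ ℓ) (hb : 2 ≤ b) :
    ∃ c₁ c₂ : ℝ, 0 < c₁ ∧ 0 < c₂ ∧ ∀ m : ℕ, 1 ≤ m →
      c₁ * (forbmax m 2 {⟨a + b + b + a, 2, Fabcd a b b a⟩} : ℝ) ≤
        (forb m 3 ((TFam ℓ 3 \ TFam ℓ 2) ∪ {⟨a + b + b + a, 2, Fabcd a b b a⟩}) : ℝ) ∧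
      (forb m 3 ((TFam ℓ 3 \ TFam ℓ 2) ∪ {⟨a + b + b + a, 2, Fabcd a b b a⟩}) : ℝ) ≤
        c₂ * (forbmax m 2 {⟨a + b + b + a, 2, Fabcd a b b a⟩} : ℝ) := by
  obtain ⟨Q, hQ0, hQ⟩ := fc_forb_upper ℓ a b hℓ hb
  obtain ⟨R, hR⟩ := fc_lower a b hb
  have hmono := fun m => fc_forb_mono ℓ a b m hℓ
  have hmax : ∀ m, BddAbove { x : ℕ | ∃ m' ≤ m, x = forb m' 2 {⟨a + b + b + a, 2, Fabcd a b b a⟩} } ∧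
      ∃ m' ≤ m, forbmax m 2 {⟨a + b + b + a, 2, Fabcd a b b a⟩} =
        forb m' 2 {⟨a + b + b + a, 2, Fabcd a b b a⟩} := by
    intro m
    have hfin : { x : ℕ | ∃ m' ≤ m, x = forb m' 2 {⟨a + b + b + a, 2, Fabcd a b b a⟩} }.Finite := by
      refine ((Set.finite_Iic m).image (fun m' => forb m' 2 {⟨a + b + b + a, 2, Fabcd a b b a⟩})).subset ?_
      rintro x ⟨m', h, rfl⟩
      exact ⟨m', h, rfl⟩
    refine ⟨hfin.bddAbove, ?_⟩
    have hne : { x : ℕ | ∃ m' ≤ m, x = forb m' 2 {⟨a + b + b + a, 2, Fabcd a b b a⟩} }.Nonempty :=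
      ⟨_, m, le_rfl, rfl⟩
    exact Nat.sSup_mem hne hfin.bddAbove
  have hle : ∀ m, forb m 2 {⟨a + b + b + a, 2, Fabcd a b b a⟩} ≤
      forbmax m 2 {⟨a + b + b + a, 2, Fabcd a b b a⟩} := by
    intro m
    exact le_csSup (hmax m).1 ⟨m, le_rfl, rfl⟩
  obtain ⟨c, hc⟩ : ∃ c : ℝ, c = Q * 2 ^ fcS a b * R + 1 := ⟨_, rfl⟩
  have hcpos : 0 < c := by rw [hc]; positivity
  have hmain : ∀ m : ℕ, 1 ≤ m → ∀ m' : ℕ, m' ≤ m →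
      (forb m' 3 ((TFam ℓ 3 \ TFam ℓ 2) ∪ {⟨a + b + b + a, 2, Fabcd a b b a⟩}) : ℝ) ≤
      c * (forb m 2 {⟨a + b + b + a, 2, Fabcd a b b a⟩} : ℝ) := by
    intro m hm m' hm'
    have h1 := hQ m'
    have hm1 : (1 : ℝ) ≤ m := by exact_mod_cast hm
    have hm2 : (m' : ℝ) ≤ m := by exact_mod_cast hm'
    have h2 : ((m' : ℝ) + 1) ^ fcS a b ≤ (2 * (m : ℝ)) ^ fcS a b :=
      pow_le_pow_left₀ (by positivity) (by linarith) _
    have h3 : ((m : ℝ)) ^ fcS a b ≤ R * (forb m 2 {⟨a + b + b + a, 2, Fabcd a b b a⟩} : ℝ) := by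
      exact_mod_cast hR m
    rw [mul_pow] at h2
    calc _ ≤ _ := h1
      _ ≤ Q * (2 ^ fcS a b * (m : ℝ) ^ fcS a b) := mul_le_mul_of_nonneg_left h2 hQ0
      _ = Q * 2 ^ fcS a b * (m : ℝ) ^ fcS a b := by ring
      _ ≤ Q * 2 ^ fcS a b * (R * (forb m 2 {⟨a + b + b + a, 2, Fabcd a b b a⟩} : ℝ)) :=
        mul_le_mul_of_nonneg_left h3 (by positivity)
      _ ≤ _ := by
        rw [hc]
        have : (0 : ℝ) ≤ (forb m 2 {⟨a + b + b + a, 2, Fabcd a b b a⟩} : ℝ) := by positivity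
        nlinarith
  refine ⟨c⁻¹, c, by positivity, hcpos, fun m hm => ⟨?_, ?_⟩⟩
  · obtain ⟨m', hm', he⟩ := (hmax m).2
    rw [he, inv_mul_le_iff₀ hcpos]
    have h1 : (forb m' 2 {⟨a + b + b + a, 2, Fabcd a b b a⟩} : ℝ) ≤
      (forb m' 3 ((TFam ℓ 3 \ TFam ℓ 2) ∪ {⟨a + b + b + a, 2, Fabcd a b b a⟩}) : ℝ) := by
      exact_mod_cast hmono m'
    refine (h1.trans (hmain m hm m' hm')).trans ?_
    exact mul_le_mul_of_nonneg_left (by exact_mod_cast hmono m) hcpos.le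
  · refine (hmain m hm m le_rfl).trans ?_
    exact mul_le_mul_of_nonneg_left (by exact_mod_cast hle m) hcpos.le
end

section
/- Let ℓ ≥ 2 and let H be the 2×3 (0,1)-matrix with rows [0 1 0] and [0 0 1]. Then forb(m, 3, (𝒯_ℓ(3) \ 𝒯_ℓ(2)) ∪ {H}) is Θ(m): there exist constants c₁, c₂ > 0 such that for all m ≥ 1, c₁ · m ≤ forb(m, 3, (𝒯_ℓ(3) \ 𝒯_ℓ(2)) ∪ {H}) ≤ c₂ · m. -/
open Finset in
theorem ramsey_pre (κ : Type) [Fintype κ] [Nonempty κ] (n : ℕ) :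
    ∃ N : ℕ, ∀ {ι : Type} [LinearOrder ι] (s : Finset ι) (f : ι → ι → κ), N ≤ s.card →
      ∃ t ⊆ s, t.card = n ∧ ∃ g : ι → κ, ∀ i ∈ t, ∀ j ∈ t, i < j → f i j = g i := by
  classical
  induction n with
  | zero =>
    refine ⟨0, fun s f _ => ⟨∅, by simp, by simp, fun i => Classical.arbitrary κ, by simp⟩⟩
  | succ n ih =>
    obtain ⟨N, hN⟩ := ih
    refine ⟨Fintype.card κ * N + 1, fun s f hs => ?_⟩
    have hne : s.Nonempty := by
      rw [← Finset.card_pos]; omega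
    set a := s.min' hne with ha
    have hcard : (s.erase a).card = s.card - 1 := Finset.card_erase_of_mem (s.min'_mem hne)
    obtain ⟨k, -, hk⟩ := Finset.exists_le_card_fiber_of_mul_le_card_of_maps_to
      (s := s.erase a) (t := (Finset.univ : Finset κ)) (f := fun j => f a j) (n := N)
      (fun _ _ => Finset.mem_univ _) Finset.univ_nonempty
      (by rw [Finset.card_univ, hcard]; omega)
    obtain ⟨t, hts, htc, g, hg⟩ := hN _ f hk
    have hat : ∀ j ∈ t, a < j ∧ f a j = k ∧ j ∈ s := by
      intro j hj
      have := hts hj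
      simp only [Finset.mem_filter, Finset.mem_erase] at this
      exact ⟨lt_of_le_of_ne (s.min'_le _ this.1.2) (Ne.symm this.1.1), this.2, this.1.2⟩
    have hnot : a ∉ t := fun h => lt_irrefl _ (hat a h).1
    refine ⟨insert a t, ?_, ?_, Function.update g a k, ?_⟩
    · intro x hx
      rcases Finset.mem_insert.1 hx with rfl | hx
      · exact s.min'_mem hne
      · exact (hat x hx).2.2
    · rw [Finset.card_insert_of_notMem hnot, htc]
    · intro i hi j hj hij
      rcases Finset.mem_insert.1 hi with rfl | hi
      · rcases Finset.mem_insert.1 hj with rfl | hj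
        · exact absurd hij (lt_irrefl _)
        · simp [(hat j hj).2.1]
      · rcases Finset.mem_insert.1 hj with rfl | hj
        · exact absurd (hat i hi).1 (not_lt_of_gt hij)
        · have hia : i ≠ a := fun h => hnot (by rw [← h]; exact hi)
          rw [Function.update_of_ne hia]
          exact hg i hi j hj hij

theorem ramsey_pairs (κ : Type) [Fintype κ] [Nonempty κ] (n : ℕ) :
    ∃ N : ℕ, ∀ {ι : Type} [LinearOrder ι] (s : Finset ι) (f : ι → ι → κ), N ≤ s.card →
      ∃ t ⊆ s, t.card = n ∧ ∃ k : κ, ∀ i ∈ t, ∀ j ∈ t, i < j → f i j = k := by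
  classical
  obtain ⟨N, hN⟩ := ramsey_pre κ (Fintype.card κ * n)
  refine ⟨N, fun s f hs => ?_⟩
  obtain ⟨t, hts, htc, g, hg⟩ := hN s f hs
  obtain ⟨k, -, hk⟩ := Finset.exists_le_card_fiber_of_mul_le_card_of_maps_to
      (s := t) (t := (Finset.univ : Finset κ)) (f := g) (n := n)
      (fun _ _ => Finset.mem_univ _) Finset.univ_nonempty
      (by rw [Finset.card_univ, htc])
  obtain ⟨u, hu, huc⟩ := Finset.exists_subset_card_eq hk
  refine ⟨u, fun x hx => hts (Finset.mem_filter.1 (hu hx)).1, huc, k, fun i hi j hj hij => ?_⟩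
  have h1 := Finset.mem_filter.1 (hu hi)
  rw [hg i h1.1 j (Finset.mem_filter.1 (hu hj)).1 hij, h1.2]

/-- Avoidance of the matrices `T_ℓ(a,b)` and `I_ℓ(a,b)` involving the symbol 2. -/
def Av2 (ℓ : ℕ) {R C : Type} (A : R → C → Fin 3) : Prop :=
  ∀ a b : Fin 3, a ≠ b → (a = 2 ∨ b = 2) → ∀ (p : Fin ℓ → R) (c : Fin ℓ → C),
    (¬ ∀ i j, A (p i) (c j) = if j < i then a else b) ∧
    (¬ ∀ i j, A (p i) (c j) = if i = j then a else b)

/-- Avoidance of `H`. -/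
def AvH {R C : Type} (A : R → C → Fin 3) : Prop :=
  ∀ (p q : R) (c₁ c₂ c₃ : C), ¬ (A p c₁ = 0 ∧ A q c₁ = 0 ∧ A p c₂ = 1 ∧ A q c₂ = 0 ∧
    A p c₃ = 0 ∧ A q c₃ = 1)

/-- The main Ramsey lemma. -/
theorem main_ramsey (ℓ n : ℕ) (hn : 2 * ℓ ≤ n) (hn2 : 3 ≤ n) :
    ∃ N : ℕ, ∀ {R C ι : Type} [LinearOrder ι] (A : R → C → Fin 3), Av2 ℓ A →
      ∀ (s : Finset ι) (p : ι → R) (c : ι → C), N ≤ s.card →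
      (∀ j ∈ s, ∀ i ∈ s, j < i → (A (p j) (c i) = 2 ↔ A (p j) (c j) ≠ 2)) →
      ∃ t ⊆ s, t.card = n ∧ ∃ x z : Fin 3, x ≠ z ∧ x ≠ 2 ∧ z ≠ 2 ∧
        (∀ i ∈ t, A (p i) (c i) = 2) ∧
        ∀ i ∈ t, ∀ j ∈ t, i < j → A (p i) (c j) = x ∧ A (p j) (c i) = z := by
  classical
  obtain ⟨N, hN⟩ := ramsey_pairs (Fin 3 × Fin 3 × Fin 3 × Fin 3) n
  refine ⟨N, fun A hA s p c hs hst => ?_⟩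
  obtain ⟨t, hts, htc, ⟨x, z, y, y'⟩, hk⟩ := hN s
    (fun i j => (A (p i) (c j), A (p j) (c i), A (p i) (c i), A (p j) (c j))) hs
  simp only [Prod.mk.injEq] at hk
  let e := t.orderEmbOfFin htc
  have he : ∀ i, e i ∈ t := fun i => t.orderEmbOfFin_mem htc i
  have h01 : e ⟨0, by omega⟩ < e ⟨1, by omega⟩ := by
    simp [e, Fin.lt_def]
  have h12 : e ⟨1, by omega⟩ < e ⟨2, by omega⟩ := by
    simp [e, Fin.lt_def]
  have h0 := hk _ (he ⟨0, by omega⟩) _ (he ⟨1, by omega⟩) h01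
  have h1 := hk _ (he ⟨1, by omega⟩) _ (he ⟨2, by omega⟩) h12
  have hyy : y = y' := h1.2.2.1.symm.trans h0.2.2.2
  subst hyy
  have hdiag : ∀ i ∈ t, A (p i) (c i) = y := by
    intro i hi
    rcases lt_trichotomy i (e ⟨0, by omega⟩) with h | h | h
    · exact (hk _ hi _ (he _) h).2.2.1
    · rw [h]; exact h0.2.2.1
    · exact (hk _ (he _) _ hi h).2.2.2
  have hxy : x = 2 ↔ y ≠ 2 := by
    have := hst _ (hts (he ⟨0, by omega⟩)) _ (hts (he ⟨1, by omega⟩)) h01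
    rwa [h0.1, h0.2.2.1] at this
  have hT : x ≠ z → ¬ (z = 2 ∨ x = 2) := by
    intro hxz h2
    refine (hA z x (Ne.symm hxz) h2 (fun i => p (e ⟨2 * i.1, by omega⟩))
      (fun j => c (e ⟨2 * j.1 + 1, by omega⟩))).1 ?_
    intro i j
    split_ifs with hji
    · refine (hk _ (he _) _ (he _) ?_).2.1
      have : j.1 < i.1 := hji
      simp only [e, OrderEmbedding.lt_iff_lt, Fin.lt_def]; omega
    · refine (hk _ (he _) _ (he _) ?_).1
      have : ¬ j.1 < i.1 := hji
      simp only [e, OrderEmbedding.lt_iff_lt, Fin.lt_def]; omega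
  have hI : x = z → x ≠ y → ¬ (y = 2 ∨ x = 2) := by
    intro hxz hxy h2
    refine (hA y x (Ne.symm hxy) h2 (fun i => p (e ⟨i.1, by omega⟩))
      (fun j => c (e ⟨j.1, by omega⟩))).2 ?_
    intro i j
    split_ifs with hji
    · subst hji; exact hdiag _ (he _)
    · rcases lt_or_gt_of_ne hji with h | h
      · refine (hk _ (he _) _ (he _) ?_).1
        have : i.1 < j.1 := h
        simp only [e, OrderEmbedding.lt_iff_lt, Fin.lt_def]; omega
      · rw [hxz]
        refine (hk _ (he _) _ (he _) ?_).2.1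
        have : j.1 < i.1 := h
        simp only [e, OrderEmbedding.lt_iff_lt, Fin.lt_def]; omega
  have hfin : x ≠ z ∧ x ≠ 2 ∧ z ≠ 2 ∧ y = 2 := by
    clear * - hxy hT hI
    revert x y z
    decide
  exact ⟨t, hts, htc, x, z, hfin.1, hfin.2.1, hfin.2.2.1,
    fun i hi => by rw [hdiag i hi, hfin.2.2.2],
    fun i hi j hj hij => ⟨(hk i hi j hj hij).1, (hk i hi j hj hij).2.1⟩⟩

theorem two_vals {R C ι : Type} [LinearOrder ι] (A : R → C → Fin 3) (t : Finset ι)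
    (p : ι → R) (c : ι → C) (x z : Fin 3) (hxz : x ≠ z) (hx : x ≠ 2) (hz : z ≠ 2)
    (h : ∀ i ∈ t, ∀ j ∈ t, i < j → A (p i) (c j) = x ∧ A (p j) (c i) = z)
    (i j k : ι) (hi : i ∈ t) (hj : j ∈ t) (hk : k ∈ t) (hij : i < j) (hjk : j < k) :
    (∃ i ∈ t, A (p j) (c i) = 0) ∧ (∃ i ∈ t, A (p j) (c i) = 1) := by
  have h1 := (h i hi j hj hij).2
  have h2 := (h j hj k hk hjk).1
  have : (x = 0 ∧ z = 1) ∨ (x = 1 ∧ z = 0) := by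
    clear * - hxz hx hz
    revert x z; decide
  rcases this with ⟨rfl, rfl⟩ | ⟨rfl, rfl⟩
  · exact ⟨⟨k, hk, h2⟩, ⟨i, hi, h1⟩⟩
  · exact ⟨⟨i, hi, h1⟩, ⟨k, hk, h2⟩⟩

theorem cor_ramsey (ℓ : ℕ) :
    ∃ N : ℕ, ∀ {R C ι : Type} [LinearOrder ι] (A : R → C → Fin 3), Av2 ℓ A →
      ∀ (s : Finset ι) (p : ι → R) (c c' : ι → C), N ≤ s.card →
      (∀ j ∈ s, ∀ i ∈ s, j < i → (A (p j) (c i) = 2 ↔ A (p j) (c j) ≠ 2)) →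
      (∀ j ∈ s, ∀ i ∈ s, j < i → (A (p j) (c' i) = 2 ↔ A (p j) (c' j) ≠ 2)) →
      ∃ j ∈ s, (∃ i ∈ s, A (p j) (c i) = 0) ∧ (∃ i ∈ s, A (p j) (c i) = 1) ∧
        (∃ i ∈ s, A (p j) (c' i) = 0) ∧ (∃ i ∈ s, A (p j) (c' i) = 1) := by
  obtain ⟨N₁, h₁⟩ := main_ramsey ℓ (2 * ℓ + 3) (by omega) (by omega)
  obtain ⟨N₂, h₂⟩ := main_ramsey ℓ (N₁ + 2 * ℓ + 3) (by omega) (by omega)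
  refine ⟨N₂, fun A hA s p c c' hs hc hc' => ?_⟩
  obtain ⟨t, hts, htc, x, z, hxz, hx, hz, -, ht⟩ := h₂ A hA s p c hs hc
  obtain ⟨u, hut, huc, x', z', hxz', hx', hz', -, hu⟩ := h₁ A hA t p c' (by omega)
    (fun j hj i hi => hc' j (hts hj) i (hts hi))
  let e := u.orderEmbOfFin huc
  have he : ∀ i, e i ∈ u := fun i => u.orderEmbOfFin_mem huc i
  have h01 : e ⟨0, by omega⟩ < e ⟨1, by omega⟩ := by
    simp [e, Fin.lt_def]
  have h12 : e ⟨1, by omega⟩ < e ⟨2, by omega⟩ := by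
    simp [e, Fin.lt_def]
  obtain ⟨⟨a, ha, ha'⟩, ⟨b, hb, hb'⟩⟩ := two_vals A t p c x z hxz hx hz ht _ _ _
    (hut (he _)) (hut (he _)) (hut (he _)) h01 h12
  obtain ⟨⟨a2, ha2, ha2'⟩, ⟨b2, hb2, hb2'⟩⟩ := two_vals A u p c' x' z' hxz' hx' hz' hu _ _ _
    (he _) (he _) (he _) h01 h12
  exact ⟨_, hts (hut (he ⟨1, by omega⟩)), ⟨a, hts ha, ha'⟩, ⟨b, hts hb, hb'⟩,
    ⟨a2, hts (hut ha2), ha2'⟩, ⟨b2, hts (hut hb2), hb2'⟩⟩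

open Classical in
/-- The Littlestone-type rank of the pattern of entries equal to two. -/
noncomputable def Rk {R C : Type} (A : R → C → Fin 3) (P : Set R) : ℕ → Finset C → Prop
  | 0, S => S.Nonempty
  | n + 1, S => ∃ p ∈ P, Rk A P n (S.filter (fun c => A p c = 2)) ∧
      Rk A P n (S.filter (fun c => A p c ≠ 2))

theorem Rk.nonempty {R C : Type} {A : R → C → Fin 3} {P : Set R} {n : ℕ} {S : Finset C}
    (h : Rk A P n S) : S.Nonempty := by
  classical
  induction n generalizing S with
  | zero => exact h
  | succ n ih =>
    obtain ⟨p, -, h1, -⟩ := h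
    exact (ih h1).mono (Finset.filter_subset _ _)

theorem Rk.mono {R C : Type} {A : R → C → Fin 3} {P : Set R} {n : ℕ} {S S' : Finset C}
    (h : Rk A P n S) (hS : S ⊆ S') : Rk A P n S' := by
  classical
  induction n generalizing S S' with
  | zero => exact Finset.Nonempty.mono hS h
  | succ n ih =>
    obtain ⟨p, hp, h1, h2⟩ := h
    exact ⟨p, hp, ih h1 (Finset.filter_subset_filter _ hS),
      ih h2 (Finset.filter_subset_filter _ hS)⟩

theorem Rk.split {R C : Type} {A : R → C → Fin 3} (P P₁ P₂ : Set R) (hP : P ⊆ P₁ ∪ P₂)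
    (n : ℕ) : ∀ (a b : ℕ) (S : Finset C), a + b = n → Rk A P n S →
      Rk A P₁ a S ∨ Rk A P₂ b S := by
  classical
  induction n with
  | zero =>
    intro a b S hab h
    obtain rfl : a = 0 := by omega
    exact Or.inl h
  | succ n ih =>
    intro a b S hab h
    rcases a with _ | a
    · exact Or.inl h.nonempty
    rcases b with _ | b
    · exact Or.inr h.nonempty
    obtain ⟨p, hp, h1, h2⟩ := h
    rcases hP hp with hp | hp
    · rcases ih a (b + 1) _ (by omega) h1 with k1 | k1
      · rcases ih a (b + 1) _ (by omega) h2 with k2 | k2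
        · exact Or.inl ⟨p, hp, k1, k2⟩
        · exact Or.inr (k2.mono (Finset.filter_subset _ _))
      · exact Or.inr (k1.mono (Finset.filter_subset _ _))
    · rcases ih (a + 1) b _ (by omega) h1 with k1 | k1
      · exact Or.inl (k1.mono (Finset.filter_subset _ _))
      · rcases ih (a + 1) b _ (by omega) h2 with k2 | k2
        · exact Or.inl (k2.mono (Finset.filter_subset _ _))
        · exact Or.inr ⟨p, hp, k1, k2⟩

theorem Rk.chain (k : ℕ) : ∃ n : ℕ, ∀ {R C : Type} (A : R → C → Fin 3) (P : Set R)
    (S : Finset C), 1 ≤ k → Rk A P n S → ∃ (p : ℕ → R) (c : ℕ → C),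
      (∀ i < k, p i ∈ P ∧ c i ∈ S) ∧
      ∀ i < k, ∀ j < i, (A (p j) (c i) = 2 ↔ A (p j) (c j) ≠ 2) ∧
        (A (p i) (c j) = 2 ↔ A (p j) (c j) = 2) := by
  classical
  induction k with
  | zero => exact ⟨0, fun A P S h _ => by omega⟩
  | succ k ih =>
    obtain ⟨n, hn⟩ := ih
    refine ⟨(n + 1) + (n + 1), fun A P S _ h => ?_⟩
    obtain ⟨c₀, hc₀⟩ := h.nonempty
    have key : ∃ (P' : Set _) (S' : Finset _) (p₀ : _), P' ⊆ P ∧ S' ⊆ S ∧ p₀ ∈ P ∧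
        Rk A P' n S' ∧ (∀ c ∈ S', (A p₀ c = 2 ↔ A p₀ c₀ ≠ 2)) ∧
        (∀ p ∈ P', (A p c₀ = 2 ↔ A p₀ c₀ = 2)) := by
      rcases Rk.split P {p | p ∈ P ∧ A p c₀ = 2} {p | p ∈ P ∧ A p c₀ ≠ 2}
        (fun p hp => by by_cases h : A p c₀ = 2 <;> simp [h, hp]) _ (n + 1) (n + 1) S rfl h
        with h | h
      · obtain ⟨p, hp, -, h2⟩ := h
        refine ⟨_, _, p, fun q hq => hq.1, Finset.filter_subset _ _, hp.1, h2, ?_, ?_⟩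
        · intro c hc
          have := (Finset.mem_filter.1 hc).2
          simp [this, hp.2]
        · intro q hq
          simp [hq.2, hp.2]
      · obtain ⟨p, hp, h1, -⟩ := h
        refine ⟨_, _, p, fun q hq => hq.1, Finset.filter_subset _ _, hp.1, h1, ?_, ?_⟩
        · intro c hc
          have := (Finset.mem_filter.1 hc).2
          simp [this, hp.2]
        · intro q hq
          simp [hq.2, hp.2]
    obtain ⟨P', S', p₀, hP', hS', hp₀, hr, h1, h2⟩ := key
    rcases Nat.eq_zero_or_pos k with rfl | hk
    · refine ⟨fun _ => p₀, fun _ => c₀, fun i _ => ⟨hp₀, hc₀⟩, fun i hi j hj => by omega⟩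
    obtain ⟨p, c, hpc, hh⟩ := hn A P' S' hk hr
    refine ⟨fun i => Nat.casesOn i p₀ p, fun i => Nat.casesOn i c₀ c, ?_, ?_⟩
    · intro i hi
      rcases i with _ | i
      · exact ⟨hp₀, hc₀⟩
      · have := hpc i (by omega)
        exact ⟨hP' this.1, hS' this.2⟩
    · intro i hi j hj
      rcases i with _ | i
      · omega
      rcases j with _ | j
      · exact ⟨h1 _ (hpc i (by omega)).2, h2 _ (hpc i (by omega)).1⟩
      · exact hh i (by omega) j (by omega)

theorem rank_bound (ℓ : ℕ) : ∃ d : ℕ, ∀ {R C : Type} (A : R → C → Fin 3), Av2 ℓ A →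
    ∀ S : Finset C, ¬ Rk A Set.univ d S := by
  obtain ⟨N, hN⟩ := main_ramsey ℓ (2 * ℓ + 3) (by omega) (by omega)
  obtain ⟨n, hn⟩ := Rk.chain (N + 1)
  refine ⟨n, fun A hA S h => ?_⟩
  obtain ⟨p, c, -, hh⟩ := hn A Set.univ S (by omega) h
  obtain ⟨t, hts, htc, x, z, hxz, hx, hz, hd, ht⟩ := hN A hA (Finset.range (N + 1)) p c
    (by simp) (fun j hj i hi hji => (hh i (Finset.mem_range.1 hi) j hji).1)
  obtain ⟨i, hi, j, hj, hij⟩ := Finset.one_lt_card.1 (show 1 < t.card by omega)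
  wlog hlt : i < j generalizing i j
  · exact this j hj i hi (Ne.symm hij) (by omega)
  have h1 := (hh j (Finset.mem_range.1 (hts hj)) i hlt).2
  rw [(ht i hi j hj hlt).2, hd i hi] at h1
  exact hz (h1.2 rfl)

open Classical in
/-- Rows on which both 0 and 1 occur in the columns of `S`. -/
noncomputable def NT {R C : Type} [Fintype R] (A : R → C → Fin 3) (S : Finset C) : Finset R :=
  Finset.univ.filter (fun q => (∃ c ∈ S, A q c = 0) ∧ (∃ c ∈ S, A q c = 1))

theorem fin3_one {x : Fin 3} (h0 : x ≠ 0) (h2 : x ≠ 2) : x = 1 := by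
  revert x; decide

theorem vc_bound {R C : Type} [Fintype R] (A : R → C → Fin 3) (hH : AvH A)
    (hs : ∀ c c', (∀ q, A q c = A q c') → c = c') (S : Finset C)
    (hS : ∀ c ∈ S, ∀ c' ∈ S, ∀ q, A q c = 2 → A q c' = 2) :
    S.card ≤ (NT A S).card + 1 := by
  classical
  let F : C → Finset R := fun c => Finset.univ.filter (fun q => A q c = 0)
  have hF : ∀ q c, q ∈ F c ↔ A q c = 0 := by intro q c; simp [F]
  have hinj : Set.InjOn F S := by
    intro c hc c' hc' h
    apply hs
    intro q
    have h0 : A q c = 0 ↔ A q c' = 0 := by rw [← hF, ← hF, h]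
    by_cases h1 : A q c = 0
    · rw [h1, h0.1 h1]
    by_cases h2 : A q c = 2
    · rw [h2, hS c hc c' hc' q h2]
    · rw [fin3_one h1 h2, fin3_one (fun h => h1 (h0.2 h)) (fun h => h2 (hS c' hc' c hc q h))]
  have h1 : S.card = (S.image F).card := (Finset.card_image_of_injOn hinj).symm
  have get : ∀ s : Finset R, (S.image F).Shatters s → ∀ t ⊆ s, ∃ c ∈ S,
      ∀ q ∈ s, (q ∈ t → A q c = 0) ∧ (q ∉ t → A q c ≠ 0) := by
    intro s hsh t ht
    obtain ⟨u, hu, hut⟩ := hsh ht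
    obtain ⟨c, hc, rfl⟩ := Finset.mem_image.1 hu
    refine ⟨c, hc, fun q hq => ?_⟩
    have : q ∈ t ↔ A q c = 0 := by rw [← hut, Finset.mem_inter, hF]; simp [hq]
    rw [this]; simp
  have h2 : (S.image F).shatterer ⊆ insert ∅ ((NT A S).image (fun q => {q})) := by
    intro s hsh
    rw [Finset.mem_shatterer] at hsh
    rcases s.eq_empty_or_nonempty with rfl | ⟨p, hp⟩
    · simp
    apply Finset.mem_insert_of_mem
    rw [Finset.mem_image]
    obtain ⟨c, hc, hc'⟩ := get s hsh {p} (by simpa using hp)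
    obtain ⟨d, hd, hd'⟩ := get s hsh ∅ (by simp)
    have hpc : A p c = 0 := (hc' p hp).1 (by simp)
    have hpd : A p d ≠ 0 := (hd' p hp).2 (by simp)
    have h02 : (0 : Fin 3) ≠ 2 := by decide
    refine ⟨p, ?_, ?_⟩
    · simp only [NT, Finset.mem_filter, Finset.mem_univ, true_and]
      refine ⟨⟨c, hc, hpc⟩, ⟨d, hd, fin3_one hpd ?_⟩⟩
      intro h
      exact h02 (hpc.symm.trans (hS d hd c hc p h))
    · by_contra hne
      have : ∃ q ∈ s, q ≠ p := by
        by_contra hcon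
        push Not at hcon
        apply hne
        ext q
        simp only [Finset.mem_singleton]
        exact ⟨fun h => h ▸ hp, hcon q⟩
      obtain ⟨q, hq, hqp⟩ := this
      obtain ⟨c₂, hc₂, hc₂'⟩ := get s hsh {q} (by simpa using hq)
      obtain ⟨c₁, hc₁, hc₁'⟩ := get s hsh {p, q} (by
        intro x hx
        simp only [Finset.mem_insert, Finset.mem_singleton] at hx
        rcases hx with rfl | rfl <;> assumption)
      have e1 : A p c₁ = 0 := (hc₁' p hp).1 (by simp)
      have e2 : A q c₁ = 0 := (hc₁' q hq).1 (by simp)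
      have e3 : A p c₂ ≠ 0 := (hc₂' p hp).2 (by simpa using Ne.symm hqp)
      have e4 : A q c₂ = 0 := (hc₂' q hq).1 (by simp)
      have e5 : A q c ≠ 0 := (hc' q hq).2 (by simpa using hqp)
      exact hH p q c₁ c₂ c ⟨e1, e2,
        fin3_one e3 (fun h => h02 (e1.symm.trans (hS _ hc₂ _ hc₁ p h))), e4, hpc,
        fin3_one e5 (fun h => h02 (e2.symm.trans (hS _ hc _ hc₁ q h)))⟩
  calc S.card = (S.image F).card := h1
    _ ≤ (S.image F).shatterer.card := Finset.card_le_card_shatterer _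
    _ ≤ _ := Finset.card_le_card h2
    _ ≤ ((NT A S).image (fun q => ({q} : Finset R))).card + 1 := Finset.card_insert_le _ _
    _ ≤ (NT A S).card + 1 := by gcongr; exact Finset.card_image_le

theorem rank_ind (ℓ d : ℕ) : ∃ K : ℕ, ∀ {m : ℕ} {C : Type} (A : Fin m → C → Fin 3), Av2 ℓ A →
    AvH A → (∀ c c', (∀ q, A q c = A q c') → c = c') → ∀ S : Finset C,
    ¬ Rk A Set.univ d S → S.card ≤ K * ((NT A S).card + 1) := by
  classical
  obtain ⟨N, hN⟩ := cor_ramsey ℓ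
  induction d with
  | zero =>
    refine ⟨0, fun A _ _ _ S h => ?_⟩
    have : S = ∅ := Finset.not_nonempty_iff_eq_empty.1 h
    simp [this]
  | succ d ih =>
    obtain ⟨K, hK⟩ := ih
    refine ⟨1 + K * (2 * N + 1), ?_⟩
    intro m C A hA hH hs S hrk
    let W : Fin m → Prop := fun p => Rk A Set.univ d (S.filter (fun c => A p c = 2))
    -- `ex p c` : column `c` is exceptional at row `p`
    let ex : Fin m → C → Prop := fun p c => (A p c = 2 ↔ ¬ W p)
    have hex : ∀ p, ¬ Rk A Set.univ d (S.filter (fun c => ex p c)) := by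
      intro p hp
      by_cases hW : W p
      · apply hrk
        refine ⟨p, Set.mem_univ _, hW, ?_⟩
        convert hp using 2
        simp [ex, hW]
      · apply hW
        convert hp using 2
        simp [ex, hW]
    let T : Fin m → Finset C := fun p => S.filter (fun c => ex p c ∧ ∀ j < p, ¬ ex j c)
    let S₀ : Finset C := S.filter (fun c => ∀ p, ¬ ex p c)
    have hTS : ∀ p, T p ⊆ S := fun p => Finset.filter_subset _ _
    have hTmem : ∀ p, ∀ c ∈ T p, ex p c ∧ ∀ j < p, ¬ ex j c :=
      fun p c hc => (Finset.mem_filter.1 hc).2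
    have hTcard : ∀ p, (T p).card ≤ K * ((NT A (T p)).card + 1) := by
      intro p
      apply hK A hA hH hs
      intro h
      apply hex p
      refine h.mono ?_
      intro c hc
      have := Finset.mem_filter.1 hc
      exact Finset.mem_filter.2 ⟨this.1, this.2.1⟩
    have hstar : ∀ (s : Finset (Fin m)) (c : Fin m → C), (∀ i ∈ s, c i ∈ T i) →
        ∀ j ∈ s, ∀ i ∈ s, j < i → (A (id j) (c i) = 2 ↔ A (id j) (c j) ≠ 2) := by
      intro s c hc j hj i hi hji
      have h1 := (hTmem i _ (hc i hi)).2 j hji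
      have h2 := (hTmem j _ (hc j hj)).1
      simp only [ex, id] at h1 h2 ⊢
      tauto
    have hNTmono : ∀ p, NT A (T p) ⊆ NT A S := by
      intro p q hq
      simp only [NT, Finset.mem_filter, Finset.mem_univ, true_and] at hq ⊢
      obtain ⟨⟨c, hc, h⟩, ⟨c', hc', h'⟩⟩ := hq
      exact ⟨⟨c, hTS p hc, h⟩, ⟨c', hTS p hc', h'⟩⟩
    -- number of nonempty classes
    let U : Finset (Fin m) := Finset.univ.filter (fun p => (T p).Nonempty)
    have hU : U.card ≤ (NT A S).card + N := by
      have h1 : U ⊆ NT A S ∪ (U \ NT A S) := by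
        intro x hx
        by_cases h : x ∈ NT A S <;> simp [h, hx]
      have h2 : (U \ NT A S).card ≤ N := by
        by_contra hcon
        push Not at hcon
        have hne : ∀ i ∈ U \ NT A S, ∃ c, c ∈ T i := fun i hi =>
          (Finset.mem_filter.1 (Finset.mem_sdiff.1 hi).1).2
        have hC : Nonempty C := by
          obtain ⟨i, hi⟩ := Finset.card_pos.1 (by omega : 0 < (U \ NT A S).card)
          obtain ⟨c, -⟩ := hne i hi
          exact ⟨c⟩
        have hne' : ∀ i, ∃ c, i ∈ U \ NT A S → c ∈ T i := by
          intro i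
          by_cases h : i ∈ U \ NT A S
          · obtain ⟨c, hc⟩ := hne i h
            exact ⟨c, fun _ => hc⟩
          · exact ⟨Classical.arbitrary C, fun h' => absurd h' h⟩
        choose c hc using hne'
        obtain ⟨j, hj, ⟨a, ha, ha'⟩, ⟨b, hb, hb'⟩, -⟩ := hN A hA (U \ NT A S) id c c hcon.le
          (hstar _ c hc) (hstar _ c hc)
        apply (Finset.mem_sdiff.1 hj).2
        simp only [NT, Finset.mem_filter, Finset.mem_univ, true_and]
        exact ⟨⟨c a, hTS a (hc a ha), ha'⟩, ⟨c b, hTS b (hc b hb), hb'⟩⟩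
      calc U.card ≤ _ := Finset.card_le_card h1
        _ ≤ (NT A S).card + (U \ NT A S).card := Finset.card_union_le _ _
        _ ≤ _ := by omega
    -- each row is nontrivial in few classes
    have hq : ∀ q, (U.filter (fun p => q ∈ NT A (T p))).card ≤ N := by
      intro q
      by_contra hcon
      push Not at hcon
      set s := U.filter (fun p => q ∈ NT A (T p)) with hsdef
      have hne : ∀ i ∈ s, (∃ c ∈ T i, A q c = 0) ∧ (∃ c ∈ T i, A q c = 1) := by
        intro i hi
        have := (Finset.mem_filter.1 hi).2
        simpa only [NT, Finset.mem_filter, Finset.mem_univ, true_and] using this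
      have hC : Nonempty C := by
        obtain ⟨i, hi⟩ := Finset.card_pos.1 (by omega : 0 < s.card)
        obtain ⟨⟨c, -⟩, -⟩ := hne i hi
        exact ⟨c⟩
      have hne' : ∀ i, ∃ c c', i ∈ s → (c ∈ T i ∧ A q c = 0) ∧ (c' ∈ T i ∧ A q c' = 1) := by
        intro i
        by_cases h : i ∈ s
        · obtain ⟨⟨c, hc⟩, ⟨c', hc'⟩⟩ := hne i h
          exact ⟨c, c', fun _ => ⟨hc, hc'⟩⟩
        · exact ⟨Classical.arbitrary C, Classical.arbitrary C, fun h' => absurd h' h⟩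
      choose c c' hc using hne'
      obtain ⟨j, hj, ⟨a, ha, ha'⟩, ⟨b, hb, hb'⟩, ⟨a₂, ha₂, ha₂'⟩, -⟩ := hN A hA s id c c' hcon.le
        (hstar _ c (fun i hi => (hc i hi).1.1)) (hstar _ c' (fun i hi => (hc i hi).2.1))
      exact hH q j (c a) (c' a₂) (c b) ⟨(hc a ha).1.2, ha', (hc a₂ ha₂).2.2, ha₂',
        (hc b hb).1.2, hb'⟩
    have hsum : ∑ p ∈ U, (NT A (T p)).card ≤ (NT A S).card * N := by
      calc ∑ p ∈ U, (NT A (T p)).card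
          = ∑ p ∈ U, ((NT A S).filter (fun q => q ∈ NT A (T p))).card := by
            refine Finset.sum_congr rfl fun p _ => ?_
            congr 1
            ext q
            simp only [Finset.mem_filter]
            exact ⟨fun h => ⟨hNTmono p h, h⟩, fun h => h.2⟩
        _ = ∑ q ∈ NT A S, (U.filter (fun p => q ∈ NT A (T p))).card :=
            Finset.sum_card_bipartiteAbove_eq_sum_card_bipartiteBelow
              (fun p q => q ∈ NT A (T p))
        _ ≤ ∑ q ∈ NT A S, N := Finset.sum_le_sum fun q _ => hq q
        _ = _ := by simp
    have hS₀ : S₀.card ≤ (NT A S).card + 1 := by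
      have h := vc_bound A hH hs S₀ (by
        intro c hc c' hc' q h2
        have h1 := (Finset.mem_filter.1 hc).2 q
        have h3 := (Finset.mem_filter.1 hc').2 q
        simp only [ex] at h1 h3
        tauto)
      refine h.trans ?_
      gcongr
      intro q hq
      simp only [NT, Finset.mem_filter, Finset.mem_univ, true_and] at hq ⊢
      obtain ⟨⟨c, hc, h⟩, ⟨c', hc', h'⟩⟩ := hq
      exact ⟨⟨c, Finset.filter_subset _ _ hc, h⟩, ⟨c', Finset.filter_subset _ _ hc', h'⟩⟩
    have hcover : S ⊆ S₀ ∪ U.biUnion T := by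
      intro c hc
      by_cases h : ∃ p, ex p c
      · let E : Finset (Fin m) := Finset.univ.filter (fun p => ex p c)
        have hE : E.Nonempty := by
          obtain ⟨p, hp⟩ := h
          exact ⟨p, by simp [E, hp]⟩
        have hmin := E.min'_mem hE
        have hcT : c ∈ T (E.min' hE) := by
          refine Finset.mem_filter.2 ⟨hc, (Finset.mem_filter.1 hmin).2, fun j hj hjx => ?_⟩
          exact absurd (E.min'_le j (by simp [E, hjx])) (not_le_of_gt hj)
        refine Finset.mem_union_right _ (Finset.mem_biUnion.2 ⟨_, ?_, hcT⟩)
        exact Finset.mem_filter.2 ⟨Finset.mem_univ _, ⟨c, hcT⟩⟩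
      · refine Finset.mem_union_left _ (Finset.mem_filter.2 ⟨hc, fun p hp => h ⟨p, hp⟩⟩)
    have hfin : S.card ≤ S₀.card + ∑ p ∈ U, K * ((NT A (T p)).card + 1) :=
      calc S.card ≤ _ := Finset.card_le_card hcover
        _ ≤ S₀.card + (U.biUnion T).card := Finset.card_union_le _ _
        _ ≤ S₀.card + ∑ p ∈ U, (T p).card := by gcongr; exact Finset.card_biUnion_le
        _ ≤ _ := by gcongr with p hp; exact hTcard p
    rw [← Finset.mul_sum, Finset.sum_add_distrib, Finset.sum_const, smul_eq_mul, mul_one] at hfin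
    set ρ := (NT A S).card
    have h5 : K * (∑ p ∈ U, (NT A (T p)).card + U.card) ≤ K * (ρ * N + (ρ + N)) := by gcongr
    nlinarith [Nat.zero_le (K * N), Nat.zero_le (K * N * ρ), Nat.zero_le K]

theorem abstract_bound (ℓ : ℕ) : ∃ K : ℕ, ∀ {m n : ℕ} (A : Fin m → Fin n → Fin 3), Av2 ℓ A →
    AvH A → (∀ c c', (∀ q, A q c = A q c') → c = c') → n ≤ K * (m + 1) := by
  obtain ⟨d, hd⟩ := rank_bound ℓ
  obtain ⟨K, hK⟩ := rank_ind ℓ d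
  refine ⟨K, fun {m n} A hA hH hs => ?_⟩
  have h := hK A hA hH hs Finset.univ (hd A hA _)
  rw [Finset.card_univ, Fintype.card_fin] at h
  refine h.trans ?_
  gcongr
  exact (Finset.card_le_univ _).trans (by simp)

/-- The family of the theorem. -/
abbrev famH (ℓ : ℕ) : Set CMat := (TFam ℓ 3 \ TFam ℓ 2) ∪ {⟨2, 3, !![0, 1, 0; 0, 0, 1]⟩}

theorem fam_mem (ℓ : ℕ) (hℓ : 2 ≤ ℓ) (a b : ℕ) (ha : a < 3) (hb : b < 3) (hab : a ≠ b)
    (h2 : a = 2 ∨ b = 2) :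
    (⟨ℓ, ℓ, Imat ℓ a b⟩ : CMat) ∈ famH ℓ ∧ (⟨ℓ, ℓ, Tmat ℓ a b⟩ : CMat) ∈ famH ℓ := by
  have small : ∀ M : MatN ℓ ℓ, (⟨ℓ, ℓ, M⟩ : CMat) ∈ TFam ℓ 2 → ∀ i j, M i j < 2 := by
    rintro M ⟨a', b', ha', hb', -, h | h⟩ i j
    · simp only [CMat.mk.injEq, heq_eq_eq, true_and] at h
      rw [h]; simp only [Imat]; split_ifs <;> assumption
    · simp only [CMat.mk.injEq, heq_eq_eq, true_and] at h
      rw [h]; simp only [Tmat]; split_ifs <;> assumption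
  refine ⟨Or.inl ⟨⟨a, b, ha, hb, hab, Or.inl rfl⟩, fun h => ?_⟩,
    Or.inl ⟨⟨a, b, ha, hb, hab, Or.inr rfl⟩, fun h => ?_⟩⟩
  · have h1 := small _ h ⟨0, by omega⟩ ⟨0, by omega⟩
    have h3 := small _ h ⟨0, by omega⟩ ⟨1, by omega⟩
    simp [Imat] at h1 h3
    omega
  · have h1 := small _ h ⟨0, by omega⟩ ⟨0, by omega⟩
    have h3 := small _ h ⟨1, by omega⟩ ⟨0, by omega⟩
    simp [Tmat] at h1 h3
    omega

theorem upper (ℓ : ℕ) (hℓ : 2 ≤ ℓ) : ∃ K : ℕ, ∀ m n : ℕ, ∀ A : MatN m n, RMat 3 A → SimpleM A →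
    AvoidsFam A (famH ℓ) → n ≤ K * (m + 1) := by
  obtain ⟨K, hK⟩ := abstract_bound ℓ
  refine ⟨K, fun m n A hR hS hAv => ?_⟩
  let B : Fin m → Fin n → Fin 3 := fun i j => ⟨A i j, hR i j⟩
  have hB : ∀ i j x, B i j = x → A i j = x.1 := fun i j x h => by rw [← h]
  refine hK B ?_ ?_ ?_
  · intro a b hab h2 p c
    have hab' : a.1 ≠ b.1 := fun h => hab (Fin.ext h)
    have h2' : a.1 = 2 ∨ b.1 = 2 := by
      rcases h2 with rfl | rfl <;> simp
    obtain ⟨hI, hT⟩ := fam_mem ℓ hℓ a b a.2 b.2 hab' h2'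
    constructor
    · intro h
      have h' : ∀ i j, A (p i) (c j) = Tmat ℓ a b i j := by
        intro i j
        rw [hB _ _ _ (h i j)]
        simp only [Tmat, Fin.lt_def]
        split_ifs <;> rfl
      refine hAv _ hT ⟨p, c, ?_, ?_, h'⟩
      · intro i i' hii
        by_contra hne
        wlog hlt : i < i' generalizing i i'
        · exact this hii.symm (Ne.symm hne) (lt_of_le_of_ne (not_lt.1 hlt) (Ne.symm hne))
        have e1 := h' i i
        have e2 := h' i' i
        rw [hii] at e1
        have : i.1 < i'.1 := hlt
        simp [Tmat, this] at e1 e2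
        omega
      · intro i i' hii
        by_contra hne
        wlog hlt : i < i' generalizing i i'
        · exact this hii.symm (Ne.symm hne) (lt_of_le_of_ne (not_lt.1 hlt) (Ne.symm hne))
        have e1 := h' i' i
        have e2 := h' i' i'
        rw [hii] at e1
        have : i.1 < i'.1 := hlt
        simp [Tmat, this] at e1 e2
        omega
    · intro h
      have h' : ∀ i j, A (p i) (c j) = Imat ℓ a b i j := by
        intro i j
        rw [hB _ _ _ (h i j)]
        simp only [Imat]
        split_ifs <;> rfl
      refine hAv _ hI ⟨p, c, ?_, ?_, h'⟩
      · intro i i' hii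
        by_contra hne
        have e1 := h' i i
        have e2 := h' i' i
        rw [hii] at e1
        simp [Imat, Ne.symm hne] at e1 e2
        omega
      · intro i i' hii
        by_contra hne
        have e1 := h' i i
        have e2 := h' i i'
        rw [hii] at e1
        simp [Imat, hne] at e1 e2
        omega
  · rintro p q c₁ c₂ c₃ ⟨h1, h2, h3, h4, h5, h6⟩
    replace h1 := hB _ _ _ h1
    replace h2 := hB _ _ _ h2
    replace h3 := hB _ _ _ h3
    replace h4 := hB _ _ _ h4
    replace h5 := hB _ _ _ h5
    replace h6 := hB _ _ _ h6
    simp at h1 h2 h3 h4 h5 h6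
    refine hAv _ (Or.inr rfl) ⟨![p, q], ![c₁, c₂, c₃], ?_, ?_, ?_⟩
    · have : p ≠ q := by rintro rfl; omega
      intro i j hij
      fin_cases i <;> fin_cases j <;> simp_all
    · have k1 : c₁ ≠ c₂ := by rintro rfl; omega
      have k2 : c₁ ≠ c₃ := by rintro rfl; omega
      have k3 : c₂ ≠ c₃ := by rintro rfl; omega
      intro i j hij
      fin_cases i <;> fin_cases j <;> simp_all
    · intro i j
      fin_cases i <;> fin_cases j <;> simp_all
  · intro c c' h
    exact hS c c' fun i => congrArg Fin.val (h i)

theorem lower (ℓ : ℕ) (hℓ : 2 ≤ ℓ) (m : ℕ) : ∃ A : MatN m m, RMat 3 A ∧ SimpleM A ∧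
    AvoidsFam A (famH ℓ) := by
  have hlt : ∀ i j, Tmat m 0 1 i j < 2 := by
    intro i j; simp only [Tmat]; split_ifs <;> omega
  refine ⟨Tmat m 0 1, fun i j => (hlt i j).trans (by omega), ?_, ?_⟩
  · intro j j' h
    by_contra hne
    wlog hl : j < j' generalizing j j'
    · exact this j' j (fun i => (h i).symm) (Ne.symm hne)
        (lt_of_le_of_ne (not_lt.1 hl) (Ne.symm hne))
    have := h j'
    have h2 : j.1 < j'.1 := hl
    simp [Tmat, h2] at this
  · rintro F (⟨⟨a, b, ha, hb, hab, rfl | rfl⟩, hF⟩ | rfl) ⟨f, g, -, -, h⟩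
    · have h' : ∀ i j : Fin ℓ, Tmat m 0 1 (f i) (g j) = Imat ℓ a b i j := h
      apply hF
      refine ⟨a, b, ?_, ?_, hab, Or.inl rfl⟩
      · have := hlt (f (⟨0, by omega⟩ : Fin ℓ)) (g (⟨0, by omega⟩ : Fin ℓ))
        rw [h'] at this
        simpa [Imat] using this
      · have := hlt (f (⟨0, by omega⟩ : Fin ℓ)) (g (⟨1, by omega⟩ : Fin ℓ))
        rw [h'] at this
        simpa [Imat] using this
    · have h' : ∀ i j : Fin ℓ, Tmat m 0 1 (f i) (g j) = Tmat ℓ a b i j := h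
      apply hF
      refine ⟨a, b, ?_, ?_, hab, Or.inr rfl⟩
      · have := hlt (f (⟨1, by omega⟩ : Fin ℓ)) (g (⟨0, by omega⟩ : Fin ℓ))
        rw [h'] at this
        simpa [Tmat] using this
      · have := hlt (f (⟨0, by omega⟩ : Fin ℓ)) (g (⟨0, by omega⟩ : Fin ℓ))
        rw [h'] at this
        simpa [Tmat] using this
    · have h1 := h (0 : Fin 2) (1 : Fin 3)
      have h2 := h (0 : Fin 2) (2 : Fin 3)
      have h3 := h (1 : Fin 2) (1 : Fin 3)
      have h4 := h (1 : Fin 2) (2 : Fin 3)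
      simp [Tmat] at h1 h2 h3 h4
      omega


/-- For `ℓ ≥ 2` and `H` the `2×3` matrix with rows `[0 1 0]`, `[0 0 1]`,
`forb(m, 3, (𝒯_ℓ(3) \ 𝒯_ℓ(2)) ∪ {H})` is `Θ(m)`. -/
theorem stmt7 (ℓ : ℕ) (hℓ : 2 ≤ ℓ) :
    ∃ c₁ c₂ : ℝ, 0 < c₁ ∧ 0 < c₂ ∧ ∀ m : ℕ, 1 ≤ m →
      c₁ * (m : ℝ) ≤
        (forb m 3 ((TFam ℓ 3 \ TFam ℓ 2) ∪ {⟨2, 3, !![0, 1, 0; 0, 0, 1]⟩}) : ℝ) ∧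
      (forb m 3 ((TFam ℓ 3 \ TFam ℓ 2) ∪ {⟨2, 3, !![0, 1, 0; 0, 0, 1]⟩}) : ℝ) ≤
        c₂ * (m : ℝ) := by
  obtain ⟨K, hK⟩ := upper ℓ hℓ
  refine ⟨1, 2 * K + 1, one_pos, by positivity, fun m hm => ?_⟩
  have hbdd : BddAbove { n : ℕ | ∃ A : MatN m n, RMat 3 A ∧ SimpleM A ∧
      AvoidsFam A (famH ℓ) } := ⟨K * (m + 1), fun n hn => by
    obtain ⟨A, h1, h2, h3⟩ := hn
    exact hK m n A h1 h2 h3⟩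
  have hlow : m ≤ forb m 3 (famH ℓ) := le_csSup hbdd (lower ℓ hℓ m)
  have hup : forb m 3 (famH ℓ) ≤ K * (m + 1) := csSup_le ⟨m, lower ℓ hℓ m⟩ (fun n hn => by
    obtain ⟨A, h1, h2, h3⟩ := hn
    exact hK m n A h1 h2 h3)
  have hup' : forb m 3 (famH ℓ) ≤ (2 * K + 1) * m := hup.trans (by nlinarith)
  refine ⟨?_, ?_⟩
  · rw [one_mul]; exact_mod_cast hlow
  · exact_mod_cast hup'
end

section
/- Let ℓ ≥ 2, let t ≥ 2, and let H be the 2×3 (0,1)-matrix with rows [0 1 0] and [0 0 1]. Then forb(m, 3, (𝒯_ℓ(3) \ 𝒯_ℓ(2)) ∪ {t·H}) is Θ(m²): there exist constants c₁, c₂ > 0 such that for all m ≥ 1, c₁ · m² ≤ forb(m, 3, (𝒯_ℓ(3) \ 𝒯_ℓ(2)) ∪ {t·H}) ≤ c₂ · m². -/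
/-- Uniform Ramsey statement. -/
lemma ramsey (s : ℕ) : ∀ a b : ℕ, a + b ≤ s → ∃ N : ℕ, ∀ r : ℕ → ℕ → Prop, ∀ S : Finset ℕ,
    N ≤ S.card →
    (∃ T ⊆ S, T.card = a ∧ ∀ p ∈ T, ∀ q ∈ T, p < q → r p q) ∨
    (∃ T ⊆ S, T.card = b ∧ ∀ p ∈ T, ∀ q ∈ T, p < q → ¬ r p q) := by
  classical
  induction s with
  | zero =>
    intro a b h
    refine ⟨0, fun r S _ => Or.inl ⟨∅, by simp, ?_, by simp⟩⟩
    simp; omega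
  | succ s ih =>
    intro a b h
    rcases a with _ | a
    · exact ⟨0, fun r S _ => Or.inl ⟨∅, by simp, by simp, by simp⟩⟩
    rcases b with _ | b
    · exact ⟨0, fun r S _ => Or.inr ⟨∅, by simp, by simp, by simp⟩⟩
    obtain ⟨N₁, h₁⟩ := ih a (b + 1) (by omega)
    obtain ⟨N₂, h₂⟩ := ih (a + 1) b (by omega)
    refine ⟨N₁ + N₂ + 1, fun r S hS => ?_⟩
    have hne : S.Nonempty := by
      rw [← Finset.card_pos]; omega
    set x := S.min' hne with hx
    have hxS : x ∈ S := S.min'_mem hne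
    have hmin : ∀ y ∈ S.erase x, x < y := by
      intro y hy
      rw [Finset.mem_erase] at hy
      exact lt_of_le_of_ne (S.min'_le y hy.2) (Ne.symm hy.1)
    have hcard : (S.erase x).card + 1 = S.card := Finset.card_erase_add_one hxS
    have hsplit := Finset.card_filter_add_card_filter_not (s := S.erase x) (fun y => r x y)
    have hsub : S.erase x ⊆ S := Finset.erase_subset _ _
    by_cases hbig : N₁ ≤ ((S.erase x).filter (fun y => r x y)).card
    · rcases h₁ r _ hbig with ⟨T, hT, hc, hr⟩ | ⟨T, hT, hc, hr⟩
      · left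
        have hxT : x ∉ T := fun hh => by
          have := (Finset.mem_filter.1 (hT hh)).1
          simp at this
        refine ⟨insert x T, ?_, ?_, ?_⟩
        · intro y hy
          rcases Finset.mem_insert.1 hy with rfl | hy
          · exact hxS
          · exact hsub (Finset.mem_filter.1 (hT hy)).1
        · rw [Finset.card_insert_of_notMem hxT, hc]
        · intro p hp q hq hpq
          rcases Finset.mem_insert.1 hp with rfl | hp
          · rcases Finset.mem_insert.1 hq with rfl | hq
            · omega
            · exact (Finset.mem_filter.1 (hT hq)).2
          · rcases Finset.mem_insert.1 hq with rfl | hq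
            · have := hmin p (Finset.mem_filter.1 (hT hp)).1
              omega
            · exact hr p hp q hq hpq
      · right
        exact ⟨T, fun y hy => hsub (Finset.mem_filter.1 (hT hy)).1, hc, hr⟩
    · have hbig2 : N₂ ≤ ((S.erase x).filter (fun y => ¬ r x y)).card := by omega
      rcases h₂ r _ hbig2 with ⟨T, hT, hc, hr⟩ | ⟨T, hT, hc, hr⟩
      · left
        exact ⟨T, fun y hy => hsub (Finset.mem_filter.1 (hT hy)).1, hc, hr⟩
      · right
        have hxT : x ∉ T := fun hh => by
          have := (Finset.mem_filter.1 (hT hh)).1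
          simp at this
        refine ⟨insert x T, ?_, ?_, ?_⟩
        · intro y hy
          rcases Finset.mem_insert.1 hy with rfl | hy
          · exact hxS
          · exact hsub (Finset.mem_filter.1 (hT hy)).1
        · rw [Finset.card_insert_of_notMem hxT, hc]
        · intro p hp q hq hpq
          rcases Finset.mem_insert.1 hp with rfl | hp
          · rcases Finset.mem_insert.1 hq with rfl | hq
            · omega
            · exact (Finset.mem_filter.1 (hT hq)).2
          · rcases Finset.mem_insert.1 hq with rfl | hq
            · have := hmin p (Finset.mem_filter.1 (hT hp)).1
              omega
            · exact hr p hp q hq hpq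

/-- Splitting sequence: columns `c p` and rows `x p` such that every later column differs from
`c p` in row `x p`. -/
lemma split_seq {m n : ℕ} (hm : 1 ≤ m) (A : MatN m n) (X : Finset (Fin m)) (k : ℕ) :
    ∀ B : Finset (Fin n), 2 ^ k ≤ B.card →
    (∀ c ∈ B, ∀ d ∈ B, c ≠ d → ∃ j ∈ X, A j c ≠ A j d) →
    ∃ (x : ℕ → Fin m) (c : ℕ → Fin n), (∀ p, c p ∈ B) ∧ (∀ p < k, x p ∈ X) ∧
      ∀ p q, p < q → q < k → A (x p) (c q) ≠ A (x p) (c p) := by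
  classical
  induction k with
  | zero =>
    intro B hB _
    obtain ⟨b, hb⟩ : B.Nonempty := by rw [← Finset.card_pos]; omega
    exact ⟨fun _ => ⟨0, hm⟩, fun _ => b, fun _ => hb, by simp, by simp⟩
  | succ k ih =>
    intro B hB hd
    have hpos : 0 < 2 ^ k := by positivity
    rw [pow_succ] at hB
    obtain ⟨c, hc, d, hdB, hcd⟩ := Finset.one_lt_card.1 (by omega : 1 < B.card)
    obtain ⟨j, hjX, hj⟩ := hd c hc d hdB hcd
    have hsplit := Finset.card_filter_add_card_filter_not (s := B) (fun y => A j y = A j c)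
    have key : ∃ (B' : Finset (Fin n)) (e : Fin n), B' ⊆ B ∧ e ∈ B ∧ 2 ^ k ≤ B'.card ∧
        ∀ y ∈ B', A j y ≠ A j e := by
      by_cases hbig : 2 ^ k ≤ (B.filter (fun y => A j y = A j c)).card
      · refine ⟨_, d, Finset.filter_subset _ _, hdB, hbig, fun y hy => ?_⟩
        rw [(Finset.mem_filter.1 hy).2]; exact hj
      · refine ⟨B.filter (fun y => ¬ A j y = A j c), c, Finset.filter_subset _ _, hc, by omega,
          fun y hy => (Finset.mem_filter.1 hy).2⟩
    obtain ⟨B', e, hB', he, hcard, hne⟩ := key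
    obtain ⟨x, g, hg, hx, hxg⟩ := ih B' hcard (fun c hc d hd' => hd c (hB' hc) d (hB' hd'))
    refine ⟨fun p => Nat.casesOn p j x, fun p => Nat.casesOn p e g, ?_, ?_, ?_⟩
    · rintro (_ | p)
      · exact he
      · exact hB' (hg p)
    · rintro (_ | p) hp
      · exact hjX
      · exact hx p (by omega)
    · rintro (_ | p) (_ | q) hpq hq
      · omega
      · exact hne _ (hg q)
      · omega
      · exact hxg p q (by omega) (by omega)

/-- The condition of avoiding all `I_ℓ(v,w)`, `T_ℓ(v,w)` with `2 ∈ {v,w}`. -/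
def TwoFree (ℓ : ℕ) {m n : ℕ} (A : MatN m n) : Prop :=
  ∀ v w : ℕ, v < 3 → w < 3 → v ≠ w → (v = 2 ∨ w = 2) →
    ¬ IsConfig (Imat ℓ v w) A ∧ ¬ IsConfig (Tmat ℓ v w) A

/-- A family of columns, pairwise distinct on the rows `X`, in which no row of `X` sees both
`0` and `1`, has bounded size. -/
lemma core_bound (ℓ : ℕ) : ∃ K : ℕ, ∀ (m n : ℕ) (A : MatN m n), 1 ≤ m → RMat 3 A →
    TwoFree ℓ A → ∀ (X : Finset (Fin m)) (B : Finset (Fin n)),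
    (∀ c ∈ B, ∀ d ∈ B, c ≠ d → ∃ j ∈ X, A j c ≠ A j d) →
    (∀ j ∈ X, ∀ c ∈ B, ∀ d ∈ B, ¬ (A j c = 0 ∧ A j d = 1)) → B.card ≤ K := by
  classical
  obtain ⟨N, hN⟩ := ramsey (ℓ + 1 + (ℓ + 1)) (ℓ + 1) (ℓ + 1) le_rfl
  refine ⟨2 ^ (9 * N + 1), fun m n A hm hA hfree X B hdist htwo => ?_⟩
  by_contra hlt
  obtain ⟨x, c, hcB, hxX, hxc⟩ := split_seq hm A X (9 * N + 1) B (by omega) hdist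
  -- two symbols per row
  have two : ∀ p q q' r, p < 9 * N + 1 → A (x p) (c q) ≠ A (x p) (c r) →
      A (x p) (c q') ≠ A (x p) (c r) → A (x p) (c q) = A (x p) (c q') := by
    intro p q q' r hp h1 h2
    have t1 := htwo _ (hxX p hp) _ (hcB q) _ (hcB q')
    have t2 := htwo _ (hxX p hp) _ (hcB q') _ (hcB q)
    have t3 := htwo _ (hxX p hp) _ (hcB q) _ (hcB r)
    have t4 := htwo _ (hxX p hp) _ (hcB r) _ (hcB q)
    have t5 := htwo _ (hxX p hp) _ (hcB q') _ (hcB r)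
    have t6 := htwo _ (hxX p hp) _ (hcB r) _ (hcB q')
    have b1 := hA (x p) (c q)
    have b2 := hA (x p) (c q')
    have b3 := hA (x p) (c r)
    omega
  have hpig := Finset.exists_le_card_fiber_of_mul_le_card_of_maps_to
    (s := Finset.range (9 * N)) (t := Finset.range 3 ×ˢ Finset.range 3)
    (f := fun p => (A (x p) (c p), A (x p) (c (9 * N)))) (n := N)
    (by intro p _; simp only [Finset.mem_product, Finset.mem_range]; exact ⟨hA _ _, hA _ _⟩)
    (by simp) (by simp)
  obtain ⟨⟨v, w⟩, hvw, hfib⟩ := hpig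
  simp only [Finset.mem_product, Finset.mem_range] at hvw
  have main : ∀ T : Finset ℕ, T ⊆ (Finset.range (9 * N)).filter
      (fun p => (A (x p) (c p), A (x p) (c (9 * N))) = (v, w)) → ∀ p ∈ T,
      p < 9 * N ∧ A (x p) (c p) = v ∧ (v ≠ w) ∧ (v = 2 ∨ w = 2) ∧
      (∀ q < 9 * N, p < q → A (x p) (c q) = w) ∧
      (∀ q, A (x p) (c q) ≠ v → A (x p) (c q) = w) := by
    intro T hT p hp
    have := Finset.mem_filter.1 (hT hp)
    simp only [Finset.mem_range, Prod.mk.injEq] at this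
    obtain ⟨h1, h2, h3⟩ := this
    have hne := hxc p (9 * N) h1 (by omega)
    have t1 := htwo _ (hxX p (by omega)) _ (hcB p) _ (hcB (9 * N))
    have t2 := htwo _ (hxX p (by omega)) _ (hcB (9 * N)) _ (hcB p)
    refine ⟨h1, h2, by omega, by omega, fun q hq hpq => ?_, fun q hq => ?_⟩
    · rw [← h3]
      exact two p q (9 * N) p (by omega) (hxc p q hpq (by omega)) hne
    · rw [← h3]
      exact two p q (9 * N) p (by omega) (by rw [h2]; exact hq) hne
  rcases hN (fun q p => A (x p) (c q) = v) _ hfib with ⟨T, hT, hc, hr⟩ | ⟨T, hT, hc, hr⟩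
  · have M := main T hT
    set e := T.orderEmbOfFin hc with he
    have heT : ∀ i, e i ∈ T := fun i => Finset.orderEmbOfFin_mem T hc i
    have hmono : ∀ i j, i < j → e i < e j := fun i j h => e.strictMono h
    obtain ⟨_, _, hne, h2, _, _⟩ := M _ (heT 0)
    have ent : ∀ i j : Fin ℓ, A (x (e i.castSucc)) (c (e j.succ)) = Tmat ℓ v w i j := by
      intro i j
      obtain ⟨hi1, hi2, _, _, hi3, hi4⟩ := M _ (heT i.castSucc)
      obtain ⟨hj1, _⟩ := M _ (heT j.succ)
      unfold Tmat
      split_ifs with hij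
      · rcases (show j.succ ≤ i.castSucc by
          rw [Fin.le_def]; simpa using hij).lt_or_eq with h | h
        · exact hr _ (heT _) _ (heT _) (hmono _ _ h)
        · rw [h]; exact hi2
      · refine hi3 _ hj1 (hmono _ _ ?_)
        rw [Fin.lt_def]; simp; omega
    refine (hfree v w hvw.1 hvw.2 hne h2).2
      ⟨fun i => x (e i.castSucc), fun j => c (e j.succ), ?_, ?_, ent⟩
    · intro i i' hii
      simp only at hii
      by_contra hcon
      have e1 := ent i i
      have e2 := ent i' i
      have e3 := ent i i'
      have e4 := ent i' i'
      rw [hii] at e1 e3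
      rw [e2] at e1
      rw [e4] at e3
      unfold Tmat at e1 e3
      have : (i : ℕ) ≠ i' := fun h => hcon (Fin.ext h)
      split_ifs at e1 e3 <;> omega
    · intro j j' hjj
      simp only at hjj
      by_contra hcon
      have e1 := ent j j
      have e2 := ent j j'
      have e3 := ent j' j
      have e4 := ent j' j'
      rw [hjj] at e1 e3
      rw [e2] at e1
      rw [e4] at e3
      unfold Tmat at e1 e3
      have : (j : ℕ) ≠ j' := fun h => hcon (Fin.ext h)
      split_ifs at e1 e3 <;> omega
  · have M := main T hT
    set e := T.orderEmbOfFin hc with he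
    have heT : ∀ i, e i ∈ T := fun i => Finset.orderEmbOfFin_mem T hc i
    have hmono : ∀ i j, i < j → e i < e j := fun i j h => e.strictMono h
    obtain ⟨_, _, hne, h2, _, _⟩ := M _ (heT 0)
    have ent : ∀ i j : Fin ℓ, A (x (e i.castSucc)) (c (e j.castSucc)) = Imat ℓ v w i j := by
      intro i j
      obtain ⟨hi1, hi2, _, _, hi3, hi4⟩ := M _ (heT i.castSucc)
      obtain ⟨hj1, _⟩ := M _ (heT j.castSucc)
      unfold Imat
      split_ifs with hij
      · rw [hij] at hi2 ⊢; exact hi2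
      · rcases lt_or_gt_of_ne hij with h | h
        · exact hi3 _ hj1 (hmono _ _ (by simpa using h))
        · exact hi4 _ (hr _ (heT _) _ (heT _) (hmono _ _ (by simpa using h)))
    refine (hfree v w hvw.1 hvw.2 hne h2).1
      ⟨fun i => x (e i.castSucc), fun j => c (e j.castSucc), ?_, ?_, ent⟩
    · intro i i' hii
      simp only at hii
      by_contra hcon
      have e1 := ent i i
      have e2 := ent i' i
      rw [hii, e2] at e1
      simp [Imat, Ne.symm hcon] at e1
      omega
    · intro j j' hjj
      simp only at hjj
      by_contra hcon
      have e1 := ent j j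
      have e2 := ent j j'
      rw [hjj, e2] at e1
      simp [Imat, hcon] at e1
      omega

/-- The version of the bound for images under restriction to `X`. -/
lemma core_image {ℓ K : ℕ} (hK : ∀ (m n : ℕ) (A : MatN m n), 1 ≤ m → RMat 3 A →
    TwoFree ℓ A → ∀ (X : Finset (Fin m)) (B : Finset (Fin n)),
    (∀ c ∈ B, ∀ d ∈ B, c ≠ d → ∃ j ∈ X, A j c ≠ A j d) →
    (∀ j ∈ X, ∀ c ∈ B, ∀ d ∈ B, ¬ (A j c = 0 ∧ A j d = 1)) → B.card ≤ K)
    {m n : ℕ} (A : MatN m n) (hm : 1 ≤ m) (hA : RMat 3 A) (hfree : TwoFree ℓ A)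
    (X : Finset (Fin m)) (B : Finset (Fin n))
    (htwo : ∀ j ∈ X, ∀ c ∈ B, ∀ d ∈ B, ¬ (A j c = 0 ∧ A j d = 1)) :
    (B.image (fun c => fun j : Fin m => if j ∈ X then A j c else 0)).card ≤ K := by
  classical
  set φ : Fin n → Fin m → ℕ := fun c => fun j : Fin m => if j ∈ X then A j c else 0 with hφ
  obtain ⟨B', hB', hinj, himg⟩ := Finset.exists_subset_injOn_image_eq_of_surjOn (f := φ)
    B (B.image φ) (by rw [Finset.coe_image]; exact Set.surjOn_image φ (B : Set (Fin n)))
  rw [← himg, Finset.card_image_of_injOn hinj]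
  refine hK m n A hm hA hfree X B' (fun c hc d hd hcd => ?_)
    (fun j hj c hc d hd => htwo j hj c (hB' hc) d (hB' hd))
  by_contra hcon
  push Not at hcon
  refine hcd (hinj hc hd ?_)
  funext j
  simp only [hφ]
  split_ifs with hj
  · exact hcon j hj
  · rfl

/-- Linear bound in the absence of `H`. -/
lemma hfree_bound (ℓ : ℕ) : ∃ K : ℕ, ∀ (m n : ℕ) (A : MatN m n), 1 ≤ m → RMat 3 A →
    SimpleM A → TwoFree ℓ A → ∀ S : Finset (Fin n),
    (∀ i j : Fin m, i ≠ j → ¬ ((∃ c ∈ S, A i c = 0 ∧ A j c = 0) ∧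
      (∃ c ∈ S, A i c = 1 ∧ A j c = 0) ∧ (∃ c ∈ S, A i c = 0 ∧ A j c = 1))) →
    S.card ≤ K + m * (K * K) := by
  classical
  obtain ⟨K, hK⟩ := core_bound ℓ
  refine ⟨K, fun m n A hm hA hsimp hfree S hH => ?_⟩
  -- `Dom j i`: some columns with `0` in row `i` have `0`, some have `1` in row `j`
  let Dom : Fin m → Fin m → Prop := fun j i =>
    (∃ c ∈ S, A i c = 0 ∧ A j c = 0) ∧ (∃ c ∈ S, A i c = 0 ∧ A j c = 1)
  have hirr : ∀ i, ¬ Dom i i := by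
    rintro i ⟨_, c, _, h1, h2⟩
    omega
  have hasymm : ∀ i j, Dom j i → ¬ Dom i j := by
    intro i j h1 h2
    have hij : i ≠ j := by
      rintro rfl
      exact hirr _ h1
    obtain ⟨⟨c, hc, hc1, hc2⟩, d, hd, hd1, hd2⟩ := h1
    obtain ⟨_, e, he, he1, he2⟩ := h2
    exact hH i j hij ⟨⟨c, hc, hc1, hc2⟩, ⟨e, he, he2, he1⟩, ⟨d, hd, hd1, hd2⟩⟩
  have hdistinct : ∀ c d : Fin n, c ≠ d → ∃ j ∈ (Finset.univ : Finset (Fin m)), A j c ≠ A j d := by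
    intro c d hcd
    by_contra hcon
    push Not at hcon
    exact hcd (hsimp c d (fun i => hcon i (Finset.mem_univ i)))
  -- choice of the root row
  have hroot : ∀ c : Fin n, (∃ i, A i c = 0) → ∃ i, A i c = 0 ∧
      ∀ j, A j c = 0 → ∃ y, A y c = 0 ∧ ¬ Dom y i ∧ ¬ Dom j y := by
    rintro c ⟨i₀, hi₀⟩
    obtain ⟨i, hi, hmax⟩ := Finset.exists_max_image
      (Finset.univ.filter (fun i => A i c = 0))
      (fun i => (Finset.univ.filter (fun y => A y c = 0 ∧ ¬ Dom y i)).card)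
      ⟨i₀, by simp [hi₀]⟩
    refine ⟨i, (Finset.mem_filter.1 hi).2, fun j hj => ?_⟩
    by_contra hcon
    push Not at hcon
    have hle := hmax j (by simp [hj])
    have hlt : (Finset.univ.filter (fun y => A y c = 0 ∧ ¬ Dom y i)).card <
        (Finset.univ.filter (fun y => A y c = 0 ∧ ¬ Dom y j)).card := by
      apply Finset.card_lt_card
      rw [Finset.ssubset_iff_of_subset]
      · refine ⟨j, by simp [hj, hirr], ?_⟩
        intro hmem
        have := (Finset.mem_filter.1 hmem).2
        exact hirr j (hcon j this.1 this.2)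
      · intro y hy
        have := (Finset.mem_filter.1 hy).2
        simp only [Finset.mem_filter, Finset.mem_univ, true_and]
        exact ⟨this.1, hasymm _ _ (hcon y this.1 this.2)⟩
    omega
  let Root : Fin m → Fin n → Prop := fun i c => A i c = 0 ∧
      ∀ j, A j c = 0 → ∃ y, A y c = 0 ∧ ¬ Dom y i ∧ ¬ Dom j y
  -- columns with a given root
  have hR : ∀ i : Fin m, (S.filter (fun c => Root i c)).card ≤ K * K := by
    intro i
    set X : Finset (Fin m) := Finset.univ.filter (fun j => ¬ Dom j i) with hX
    set φ : Fin n → Fin m → ℕ := fun c => fun j : Fin m => if j ∈ X then A j c else 0 with hφ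
    have himg : ((S.filter (fun c => Root i c)).image φ).card ≤ K := by
      apply core_image hK A hm hA hfree
      rintro j hj c hc d hd ⟨h0, h1⟩
      rw [Finset.mem_filter] at hc hd hj
      exact hj.2 ⟨⟨c, hc.1, hc.2.1, h0⟩, ⟨d, hd.1, hd.2.1, h1⟩⟩
    refine (Finset.card_le_mul_card_image (f := φ) _ K ?_).trans (Nat.mul_le_mul_left K himg)
    intro a _
    apply hK m n A hm hA hfree Finset.univ
    · intro c _ d _ hcd
      exact hdistinct c d hcd
    · rintro j _ c hc d hd ⟨h0, h1⟩
      simp only [Finset.mem_filter] at hc hd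
      obtain ⟨⟨hcS, hc0, hcr⟩, hca⟩ := hc
      obtain ⟨⟨hdS, hd0, hdr⟩, hda⟩ := hd
      obtain ⟨y, hy0, hyi, hjy⟩ := hcr j h0
      have hyX : y ∈ X := by simp [hX, hyi]
      have := congrFun (hca.trans hda.symm) y
      simp only [hφ, hyX, if_true] at this
      exact hjy ⟨⟨c, hcS, hy0, h0⟩, ⟨d, hdS, by omega, h1⟩⟩
  have h0 : (S.filter (fun c => ∀ i, A i c ≠ 0)).card ≤ K := by
    apply hK m n A hm hA hfree Finset.univ
    · intro c _ d _ hcd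
      exact hdistinct c d hcd
    · rintro j _ c hc d hd ⟨h0, h1⟩
      exact (Finset.mem_filter.1 hc).2 j h0
  have hcover : S ⊆ S.filter (fun c => ∀ i, A i c ≠ 0) ∪
      Finset.univ.biUnion (fun i => S.filter (fun c => Root i c)) := by
    intro c hc
    by_cases h : ∃ i, A i c = 0
    · obtain ⟨i, hi⟩ := hroot c h
      apply Finset.mem_union_right
      rw [Finset.mem_biUnion]
      exact ⟨i, Finset.mem_univ i, Finset.mem_filter.2 ⟨hc, hi⟩⟩
    · push Not at h
      exact Finset.mem_union_left _ (Finset.mem_filter.2 ⟨hc, h⟩)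
  refine (Finset.card_le_card hcover).trans ((Finset.card_union_le _ _).trans ?_)
  refine Nat.add_le_add h0 ?_
  refine (Finset.card_biUnion_le_card_mul _ _ (K * K) (fun i _ => hR i)).trans ?_
  simp

/-- If the three classes of columns are large then `t·H` is a configuration. -/
lemma config_of_large {m n t : ℕ} (A : MatN m n) (i j : Fin m) (hij : i ≠ j)
    (h : ∀ s : Fin 3, t ≤ (Finset.univ.filter (fun c => A i c = !![0, 1, 0; 0, 0, 1] 0 s ∧
      A j c = !![0, 1, 0; 0, 0, 1] 1 s)).card) :
    IsConfig (tcopies t !![0, 1, 0; 0, 0, 1]) A := by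
  classical
  have hex : ∀ s : Fin 3, ∃ e : Fin t → Fin n, Function.Injective e ∧
      ∀ k, A i (e k) = !![0, 1, 0; 0, 0, 1] 0 s ∧ A j (e k) = !![0, 1, 0; 0, 0, 1] 1 s := by
    intro s
    obtain ⟨T, hT, hc⟩ := Finset.exists_subset_card_eq (h s)
    refine ⟨T.orderEmbOfFin hc, (T.orderEmbOfFin hc).injective, fun k => ?_⟩
    exact (Finset.mem_filter.1 (hT (Finset.orderEmbOfFin_mem T hc k))).2
  choose e hinj he using hex
  refine ⟨![i, j], fun k => e ⟨(k : ℕ) % 3, Nat.mod_lt _ (by norm_num)⟩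
    ⟨(k : ℕ) / 3, by have := k.isLt; omega⟩, ?_, ?_, ?_⟩
  · intro a b hab
    fin_cases a <;> fin_cases b <;> simp_all
  · intro a b hab
    simp only at hab
    have key : ∀ (s s' : Fin 3) (u u' : Fin t), e s u = e s' u' → s = s' := by
      intro s s' u u' huu
      have h1 := he s u
      have h2 := he s' u'
      rw [huu] at h1
      have q1 := h1.1.symm.trans h2.1
      have q2 := h1.2.symm.trans h2.2
      clear h1 h2 huu
      fin_cases s <;> fin_cases s' <;> simp_all
    have hs := key _ _ _ _ hab
    rw [hs] at hab
    have hu := hinj _ hab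
    simp only [Fin.mk.injEq] at hs hu
    apply Fin.ext
    omega
  · intro a k
    have := he ⟨(k : ℕ) % 3, Nat.mod_lt _ (by norm_num)⟩ ⟨(k : ℕ) / 3, by have := k.isLt; omega⟩
    unfold tcopies
    fin_cases a
    · exact this.1
    · exact this.2

/-- The upper bound. -/
lemma upper_bound (ℓ t : ℕ) : ∃ C : ℕ, ∀ (m n : ℕ) (A : MatN m n), 1 ≤ m → RMat 3 A →
    SimpleM A → TwoFree ℓ A → ¬ IsConfig (tcopies t !![0, 1, 0; 0, 0, 1]) A →
    n ≤ C * m ^ 2 := by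
  classical
  obtain ⟨K, hK⟩ := hfree_bound ℓ
  refine ⟨K + K * K + t, fun m n A hm hA hsimp hfree hH => ?_⟩
  have hsmall : ∀ p : Fin m × Fin m, ∃ D : Finset (Fin n), D.card ≤ t ∧ (p.1 ≠ p.2 →
      ∃ s : Fin 3, ∀ c, A p.1 c = !![0, 1, 0; 0, 0, 1] 0 s →
        A p.2 c = !![0, 1, 0; 0, 0, 1] 1 s → c ∈ D) := by
    rintro ⟨i, j⟩
    by_cases hij : i = j
    · exact ⟨∅, by simp, fun h => absurd hij h⟩
    · by_contra hcon
      push Not at hcon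
      apply hH
      apply config_of_large A i j hij
      intro s
      by_contra hlt
      obtain ⟨_, h2⟩ := hcon (Finset.univ.filter (fun c => A i c = !![0, 1, 0; 0, 0, 1] 0 s ∧
        A j c = !![0, 1, 0; 0, 0, 1] 1 s)) (by omega)
      obtain ⟨c, hc1, hc2, hc3⟩ := h2 s
      exact hc3 (by simp only [Finset.mem_filter, Finset.mem_univ, true_and]; exact ⟨hc1, hc2⟩)
  choose D hDc hD using hsmall
  set U : Finset (Fin n) := Finset.univ.biUnion D with hU
  have hUc : U.card ≤ m * m * t := by
    refine (Finset.card_biUnion_le_card_mul _ _ t (fun p _ => hDc p)).trans ?_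
    simp
  have hS := hK m n A hm hA hsimp hfree Uᶜ (by
    rintro i j hij ⟨⟨c, hc, hc1, hc2⟩, ⟨d, hd, hd1, hd2⟩, ⟨e, he, he1, he2⟩⟩
    obtain ⟨s, hs⟩ := hD (i, j) hij
    have hsub : ∀ z, z ∈ D (i, j) → z ∈ U := fun z hz =>
      Finset.mem_biUnion.2 ⟨(i, j), Finset.mem_univ _, hz⟩
    rw [Finset.mem_compl] at hc hd he
    fin_cases s
    · exact hc (hsub _ (hs c (by simpa using hc1) (by simpa using hc2)))
    · exact hd (hsub _ (hs d (by simpa using hd1) (by simpa using hd2)))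
    · exact he (hsub _ (hs e (by simpa using he1) (by simpa using he2))))
  have htot := Finset.card_add_card_compl U
  rw [Fintype.card_fin] at htot
  have h1 : K ≤ K * m ^ 2 := Nat.le_mul_of_pos_right _ (by positivity)
  have h2 : m * (K * K) ≤ K * K * m ^ 2 := by
    rw [mul_comm]
    exact Nat.mul_le_mul_left _ (by nlinarith)
  nlinarith

/-- Members of `𝒯_ℓ(2)` have no entry `2`. -/
lemma no_two {ℓ : ℕ} {M : CMat} (h : M ∈ TFam ℓ 2) (i : Fin M.rows) (j : Fin M.cols) :
    M.mat i j ≠ 2 := by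
  obtain ⟨a, b, ha, hb, _, rfl | rfl⟩ := h
  · simp only [Imat]; split_ifs <;> omega
  · simp only [Tmat]; split_ifs <;> omega

lemma twoFree_of_avoids {ℓ m n : ℕ} (hℓ : 2 ≤ ℓ) {𝓕 : Set CMat} {A : MatN m n}
    (h : AvoidsFam A ((TFam ℓ 3 \ TFam ℓ 2) ∪ 𝓕)) : TwoFree ℓ A := by
  intro v w hv hw hvw h2
  have z : (⟨0, by omega⟩ : Fin ℓ) ≠ ⟨1, by omega⟩ := by simp
  constructor
  · refine h ⟨ℓ, ℓ, Imat ℓ v w⟩ (Or.inl ⟨⟨v, w, hv, hw, hvw, Or.inl rfl⟩, fun hm => ?_⟩)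
    have n1 := no_two hm ⟨0, by simp; omega⟩ ⟨0, by simp; omega⟩
    have n2 := no_two hm ⟨0, by simp; omega⟩ ⟨1, by simp; omega⟩
    simp [Imat] at n1 n2
    omega
  · refine h ⟨ℓ, ℓ, Tmat ℓ v w⟩ (Or.inl ⟨⟨v, w, hv, hw, hvw, Or.inr rfl⟩, fun hm => ?_⟩)
    have n1 := no_two hm ⟨0, by simp; omega⟩ ⟨0, by simp; omega⟩
    have n2 := no_two hm ⟨1, by simp; omega⟩ ⟨0, by simp; omega⟩
    simp [Tmat] at n1 n2
    omega

/-- Every member of `𝒯_ℓ(3) \ 𝒯_ℓ(2)` has an entry `2`. -/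
lemma has_two {ℓ : ℕ} (hℓ : 2 ≤ ℓ) {M : CMat} (h : M ∈ TFam ℓ 3 \ TFam ℓ 2) :
    ∃ i j, M.mat i j = 2 := by
  obtain ⟨⟨a, b, ha, hb, hab, hM⟩, hn⟩ := h
  have h2 : a = 2 ∨ b = 2 := by
    by_contra hcon
    exact hn ⟨a, b, by omega, by omega, hab, hM⟩
  rcases hM with rfl | rfl
  · rcases h2 with rfl | rfl
    · exact ⟨⟨0, by simp; omega⟩, ⟨0, by simp; omega⟩, by simp [Imat]⟩
    · exact ⟨⟨0, by simp; omega⟩, ⟨1, by simp; omega⟩, by simp [Imat]⟩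
  · rcases h2 with rfl | rfl
    · exact ⟨⟨1, by simp; omega⟩, ⟨0, by simp; omega⟩, by simp [Tmat]⟩
    · exact ⟨⟨0, by simp; omega⟩, ⟨0, by simp; omega⟩, by simp [Tmat]⟩

/-- The lower bound construction: columns with one or two zeros. -/
lemma lower_construction (ℓ t m : ℕ) (hℓ : 2 ≤ ℓ) (ht : 2 ≤ t) :
    ∃ A : MatN m ((m + 1).choose 2), RMat 3 A ∧ SimpleM A ∧
      AvoidsFam A ((TFam ℓ 3 \ TFam ℓ 2) ∪
          {⟨2, t * 3, tcopies t !![0, 1, 0; 0, 0, 1]⟩}) := by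
  classical
  have hcard : Fintype.card (Sym2 (Fin m)) = (m + 1).choose 2 := by
    rw [Sym2.card, Fintype.card_fin]
  let φ : Sym2 (Fin m) ≃ Fin ((m + 1).choose 2) := Fintype.equivFinOfCardEq hcard
  refine ⟨fun i j => if i ∈ φ.symm j then 0 else 1, ?_, ?_, ?_⟩
  · intro i j
    dsimp only
    split_ifs <;> omega
  · intro j₁ j₂ h
    apply φ.symm.injective
    apply Sym2.ext
    intro i
    have := h i
    dsimp only at this
    split_ifs at this <;> simp_all
  · rintro F (hF | hF) ⟨f, g, hf, hg, hfg⟩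
    · obtain ⟨i, j, hij⟩ := has_two hℓ hF
      have := hfg i j
      rw [hij] at this
      dsimp only at this
      split_ifs at this <;> omega
    · obtain rfl := hF
      have hne : f 0 ≠ f 1 := fun h => absurd (hf h) (by simp)
      have mem : ∀ (k : Fin (t * 3)), (k : ℕ) % 3 = 0 → φ.symm (g k) = s(f 0, f 1) := by
        intro k hk
        have a0 := hfg 0 k
        have a1 := hfg 1 k
        simp [tcopies, hk] at a0 a1
        exact (Sym2.mem_and_mem_iff hne).1 ⟨a0, a1⟩
      have h0 := mem ⟨0, by omega⟩ (by simp)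
      have h3 := mem ⟨3, by omega⟩ (by simp)
      have := hg (φ.symm.injective (h0.trans h3.symm))
      simp at this

/-- For `ℓ ≥ 2`, `t ≥ 2` and `H` the `2×3` matrix with rows `[0 1 0]`,
`[0 0 1]`, `forb(m, 3, (𝒯_ℓ(3) \ 𝒯_ℓ(2)) ∪ {t·H})` is `Θ(m²)`. -/
theorem stmt8 (ℓ t : ℕ) (hℓ : 2 ≤ ℓ) (ht : 2 ≤ t) :
    ∃ c₁ c₂ : ℝ, 0 < c₁ ∧ 0 < c₂ ∧ ∀ m : ℕ, 1 ≤ m →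
      c₁ * (m : ℝ) ^ 2 ≤
        (forb m 3 ((TFam ℓ 3 \ TFam ℓ 2) ∪
          {⟨2, t * 3, tcopies t !![0, 1, 0; 0, 0, 1]⟩}) : ℝ) ∧
      (forb m 3 ((TFam ℓ 3 \ TFam ℓ 2) ∪
          {⟨2, t * 3, tcopies t !![0, 1, 0; 0, 0, 1]⟩}) : ℝ) ≤
        c₂ * (m : ℝ) ^ 2 := by
  obtain ⟨C, hC⟩ := upper_bound ℓ t
  have hub : ∀ m : ℕ, 1 ≤ m → ∀ n ∈ { n : ℕ | ∃ A : MatN m n, RMat 3 A ∧ SimpleM A ∧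
      AvoidsFam A ((TFam ℓ 3 \ TFam ℓ 2) ∪
          {⟨2, t * 3, tcopies t !![0, 1, 0; 0, 0, 1]⟩}) }, n ≤ C * m ^ 2 := by
    rintro m hm n ⟨A, hA, hs, hav⟩
    exact hC m n A hm hA hs (twoFree_of_avoids hℓ hav) (hav _ (Or.inr rfl))
  refine ⟨1 / 2, C + 1, by norm_num, by positivity, fun m hm => ⟨?_, ?_⟩⟩
  · have h1 : (m + 1).choose 2 ≤ forb m 3 ((TFam ℓ 3 \ TFam ℓ 2) ∪
          {⟨2, t * 3, tcopies t !![0, 1, 0; 0, 0, 1]⟩}) :=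
      le_csSup ⟨_, fun n hn => hub m hm n hn⟩ (lower_construction ℓ t m hℓ ht)
    have h2 : ((m + 1).choose 2 : ℝ) = (m + 1) * m / 2 := by
      rw [Nat.cast_choose_two]; push_cast; ring
    have h3 : ((m + 1).choose 2 : ℝ) ≤ _ := Nat.cast_le.2 h1
    rw [h2] at h3
    refine le_trans ?_ h3
    have : (0 : ℝ) ≤ m := Nat.cast_nonneg m
    nlinarith
  · have h1 : forb m 3 ((TFam ℓ 3 \ TFam ℓ 2) ∪
          {⟨2, t * 3, tcopies t !![0, 1, 0; 0, 0, 1]⟩}) ≤ C * m ^ 2 :=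
      csSup_le ⟨_, lower_construction ℓ t m hℓ ht⟩ (hub m hm)
    have h3 := (Nat.cast_le (α := ℝ)).2 h1
    push_cast at h3
    refine h3.trans ?_
    have : (0 : ℝ) ≤ (m : ℝ) ^ 2 := by positivity
    nlinarith
end
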